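/- Let B = K[X] with X an order-t skew-symmetric matrix of indeterminates with zero upper-left 3×3 block, and let I be the grade-3 almost complete intersection Pfaffian ideal: for even t = 2r ≥ 6, I = ⟨Pf(X), Pf_{12̄}(X), Pf_{13̄}(X), Pf_{23̄}(X)⟩. Then for every m ≥ 2, reg(B/I^m) = (t/2)(m + 2) − 7. -/

import Mathlib

open Ideal

/-- A sequence `f 0, …, f (n-1)` is a *d-sequence* in `A` if
`(⟨f_0,…,f_{i-1}⟩ : f_i) ∩ ⟨f_0,…,f_{n-1}⟩ = ⟨f_0,…,f_{i-1}⟩` for every `i`. -/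
def IsDSequence {A : Type*} [CommRing A] {n : ℕ} (f : Fin n → A) : Prop :=
  ∀ i : Fin n,
    (Ideal.span (f '' {j | j < i})).colon (Ideal.span {f i}) ⊓ Ideal.span (Set.range f)
      = Ideal.span (f '' {j | j < i})

/-- A (proper) regular sequence: each `f i` is a nonzerodivisor modulo the previous ones,
and the sequence generates a proper ideal. -/
def IsRegSeq {A : Type*} [CommRing A] {n : ℕ} (f : Fin n → A) : Prop :=
  (∀ i : Fin n, ∀ a : A, a * f i ∈ Ideal.span (f '' {j | j < i}) →
      a ∈ Ideal.span (f '' {j | j < i}))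
  ∧ Ideal.span (Set.range f) ≠ ⊤

/-- Extension of an `ℕ`-graded family of submodules to `ℤ` (zero in negative degrees). -/
def zg {K A : Type*} [Semiring K] [AddCommMonoid A] [Module K A]
    (𝒜 : ℕ → Submodule K A) : ℤ → Submodule K A :=
  fun z => if 0 ≤ z then 𝒜 z.toNat else ⊥

/-- The irrelevant (graded maximal) ideal of a graded algebra. -/
def irrel {K A : Type*} [CommRing K] [CommRing A] [Algebra K A]
    (𝒜 : ℕ → Submodule K A) : Ideal A :=
  Ideal.span (⋃ n : ℕ, ((𝒜 (n + 1) : Submodule K A) : Set A))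

/-- `𝒜` is a standard grading: `𝒜 0 = K·1`, the grading is generated in degree one,
and the degree-one part is finitely generated. -/
def IsStdGraded {K A : Type*} [CommSemiring K] [Semiring A] [Algebra K A]
    (𝒜 : ℕ → Submodule K A) : Prop :=
  𝒜 0 = 1 ∧ (∀ n : ℕ, 𝒜 (n + 1) = 𝒜 1 * 𝒜 n) ∧ (𝒜 1).FG

/-- A minimal graded free resolution of the graded module `M` (graded pieces `ℳ`) over the
`γ`-graded ring `A` (graded pieces `𝒜`, graded maximal ideal `𝔪`):
free modules `ι i →₀ A` with generator degrees `σ i`, differentials `d`, augmentation `ε`,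
which is exact, with graded differentials and augmentation, and minimal
(all differentials land in `𝔪 • F`). -/
structure MinGradedFreeRes (K : Type) [Field K] (A : Type) [CommRing A] [Algebra K A]
    {γ : Type} [AddCommGroup γ] (𝒜 : γ → Submodule K A) (𝔪 : Ideal A)
    (M : Type) [AddCommGroup M] [Module A M] [Module K M]
    (ℳ : γ → Submodule K M) where
  ι : ℕ → Type
  fin : ∀ i, Finite (ι i)
  σ : ∀ i, ι i → γ
  d : ∀ i, (ι (i + 1) →₀ A) →ₗ[A] (ι i →₀ A)
  ε : (ι 0 →₀ A) →ₗ[A] M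
  exact_d : ∀ i, Function.Exact (d (i + 1)) (d i)
  exact_ε : Function.Exact (d 0) ε
  surj : Function.Surjective ε
  graded_d : ∀ (i : ℕ) (j : γ) (f : ι (i + 1) →₀ A),
      (∀ k, f k ∈ 𝒜 (j - σ (i + 1) k)) → ∀ k, (d i f) k ∈ 𝒜 (j - σ i k)
  graded_ε : ∀ (j : γ) (f : ι 0 →₀ A),
      (∀ k, f k ∈ 𝒜 (j - σ 0 k)) → ε f ∈ ℳ j
  minimal : ∀ (i : ℕ) (f : ι (i + 1) →₀ A), d i f ∈ 𝔪 • (⊤ : Submodule A (ι i →₀ A))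

/-- Castelnuovo–Mumford regularity read off from a minimal graded free resolution:
`sup { (degree of a generator of F_i) - i }`. -/
noncomputable def MinGradedFreeRes.reg {K : Type} [Field K] {A : Type} [CommRing A]
    [Algebra K A] {𝒜 : ℤ → Submodule K A} {𝔪 : Ideal A} {M : Type} [AddCommGroup M]
    [Module A M] [Module K M] {ℳ : ℤ → Submodule K M}
    (R : MinGradedFreeRes K A 𝒜 𝔪 M ℳ) : ℤ :=
  sSup {x : ℤ | ∃ (i : ℕ) (k : R.ι i), x = R.σ i k - (i : ℤ)}

/-- The graded pieces of a quotient module `A ⧸ J`. -/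
def quotPieces {K A : Type*} [Field K] [CommRing A] [Algebra K A]
    (𝒜 : ℕ → Submodule K A) (J : Ideal A) : ℤ → Submodule K (A ⧸ J) :=
  fun j => (zg 𝒜 j).map ((J.mkQ).restrictScalars K)

/-- The Pfaffian of an `n × n` matrix, defined by the recursive expansion along the
first row: `pf(M) = ∑_j (-1)^j M 0 (j+1) · pf(M with rows/columns 0 and j+1 deleted)`,
with `pf = 1` in size `0` and `pf = 0` in odd sizes. -/
def pfaffian {R : Type*} [CommRing R] : (n : ℕ) → Matrix (Fin n) (Fin n) R → R
  | 0, _ => 1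
  | 1, _ => 0
  | (n + 2), M =>
      ∑ j : Fin (n + 1), (-1 : R) ^ (j : ℕ) * M 0 j.succ *
        pfaffian n (M.submatrix (fun k => (j.succAbove k).succ)
          (fun k => (j.succAbove k).succ))

/-- The variables of the skew-symmetric matrix `X`: pairs `(i,j)` with `i < j` and
`j ≥ 3` (the upper-left `3 × 3` block being zero). -/
def PairVar (t : ℕ) : Type := {p : Fin t × Fin t // (p.1 : ℕ) < (p.2 : ℕ) ∧ 3 ≤ (p.2 : ℕ)}

/-- The generic order-`t` skew-symmetric matrix with zero upper-left `3 × 3` block. -/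
noncomputable def Xmat (K : Type) [Field K] (t : ℕ) :
    Matrix (Fin t) (Fin t) (MvPolynomial (PairVar t) K) := fun i j =>
  if h : (i : ℕ) < (j : ℕ) ∧ 3 ≤ (j : ℕ) then MvPolynomial.X ⟨(i, j), h⟩
  else if h' : (j : ℕ) < (i : ℕ) ∧ 3 ≤ (i : ℕ) then - MvPolynomial.X ⟨(j, i), h'⟩
  else 0

/-- The order embedding `Fin n → Fin (n+1)` skipping the index `a`. -/
def emb1 (a : ℕ) {n : ℕ} (k : Fin n) : Fin (n + 1) :=
  ⟨if (k : ℕ) < a then (k : ℕ) else (k : ℕ) + 1, by have := k.2; split_ifs <;> omega⟩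

/-- The order embedding `Fin n → Fin (n+2)` skipping the indices `a < b`. -/
def emb2 (a b : ℕ) {n : ℕ} (k : Fin n) : Fin (n + 2) :=
  ⟨if (k : ℕ) < a then (k : ℕ) else if (k : ℕ) + 1 < b then (k : ℕ) + 1 else (k : ℕ) + 2,
   by have := k.2; split_ifs <;> omega⟩

/-- The order embedding `Fin n → Fin (n+3)` skipping the indices `0, 1, 2`. -/
def emb3 {n : ℕ} (k : Fin n) : Fin (n + 3) := ⟨(k : ℕ) + 3, by have := k.2; omega⟩



namespace PfP
section Pf
variable {ι : Type*} {R : Type*} [LinearOrder ι] [CommRing R]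

def ep (R : Type*) [CommRing R] (i j : ι) : R := if i < j then 1 else -1

lemma ep_swap {i j : ι} (h : i ≠ j) : ep R j i = - ep R i j := by
  unfold ep
  rcases lt_or_gt_of_ne h with h | h
  · simp [h, h.not_gt]
  · simp [h, h.not_gt]

lemma ep_sq (i j : ι) : ep R i j * ep R i j = 1 := by
  unfold ep; split_ifs <;> simp

def sg (R : Type*) [CommRing R] (i j : ι) (S : Finset ι) : R :=
  ∏ k ∈ (S.erase i).erase j, ep R i k * ep R j k

def pfS (z : ι → ι → R) (S : Finset ι) : R :=
  if h : S.Nonempty then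
    ∑ b ∈ (S.erase (S.min' h)).attach,
      ep R (S.min' h) b.1 * sg R (S.min' h) b.1 S * z (S.min' h) b.1
        * pfS z ((S.erase (S.min' h)).erase b.1)
  else 1
termination_by S.card
decreasing_by
  exact lt_of_le_of_lt (Finset.card_le_card (Finset.erase_subset _ _))
    (Finset.card_erase_lt_of_mem (Finset.min'_mem _ h))

lemma pfS_empty (z : ι → ι → R) : pfS z ∅ = 1 := by
  rw [pfS]; simp

lemma pfS_min (z : ι → ι → R) (S : Finset ι) (a : ι) (ha : a ∈ S) (hm : ∀ x ∈ S, a ≤ x) :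
    pfS z S = ∑ b ∈ S.erase a, ep R a b * sg R a b S * z a b * pfS z ((S.erase a).erase b) := by
  have h : S.Nonempty := ⟨a, ha⟩
  have : S.min' h = a := le_antisymm (Finset.min'_le _ _ ha) (Finset.le_min' _ _ _ hm)
  rw [pfS, dif_pos h, this]
  exact Finset.sum_attach (S.erase a)
    (fun b => ep R a b * sg R a b S * z a b * pfS z ((S.erase a).erase b))

lemma sg_comm (i j : ι) (S : Finset ι) : sg R i j S = sg R j i S := by
  unfold sg
  rw [Finset.erase_right_comm]
  exact Finset.prod_congr rfl (fun k _ => mul_comm _ _)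

lemma sg_split {a b i c : ι} {S : Finset ι} (hi : i ∈ S) (hc : c ∈ S) (hia : i ≠ a) (hib : i ≠ b)
    (hca : c ≠ a) (hcb : c ≠ b) (hic : i ≠ c) :
    sg R a b S = (ep R a i * ep R b i) * (ep R a c * ep R b c)
      * sg R a b ((S.erase i).erase c) := by
  unfold sg
  have h1 : i ∈ (S.erase a).erase b := by simp [*]
  have h2 : c ∈ ((S.erase a).erase b).erase i := by simp [*, Ne.symm hic]
  rw [← Finset.mul_prod_erase _ _ h1, ← Finset.mul_prod_erase _ _ h2, ← mul_assoc]
  congr 2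
  ext x; simp; tauto

theorem pfS_expand (z : ι → ι → R) (hz : ∀ i j, z j i = - z i j) :
    ∀ (N : ℕ) (S : Finset ι), S.card ≤ N → ∀ i ∈ S,
    pfS z S = ∑ j ∈ S.erase i, ep R i j * sg R i j S * z i j * pfS z ((S.erase i).erase j) := by
  intro N
  induction N with
  | zero => intro S hS i hi; simp at hS; simp [hS] at hi
  | succ N ih =>
    intro S hS i hi
    have hne : S.Nonempty := ⟨i, hi⟩
    obtain ⟨a, haS, ham⟩ : ∃ a ∈ S, ∀ x ∈ S, a ≤ x :=
      ⟨S.min' hne, Finset.min'_mem _ _, fun x hx => Finset.min'_le _ _ hx⟩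
    by_cases hia : i = a
    · rw [hia]; exact pfS_min z S a haS ham
    rw [pfS_min z S a haS ham]
    have hi' : i ∈ S.erase a := by simp [*]
    have ha' : a ∈ S.erase i := by simp [*, Ne.symm hia]
    rw [← Finset.add_sum_erase _ _ hi', ← Finset.add_sum_erase _ _ ha']
    congr 1
    · rw [ep_swap hia, sg_comm a i, hz i a, Finset.erase_right_comm]; ring
    have hE : (S.erase i).erase a = (S.erase a).erase i := Finset.erase_right_comm
    rw [hE]
    set E := (S.erase a).erase i with hEd
    have L : ∀ b ∈ E, ep R a b * sg R a b S * z a b * pfS z ((S.erase a).erase b)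
        = ∑ c ∈ E.erase b, ep R a b * sg R a b S * z a b * (ep R i c * sg R i c ((S.erase a).erase b)
            * z i c * pfS z ((E.erase b).erase c)) := by
      intro b hb
      simp only [hEd, Finset.mem_erase] at hb
      rw [ih ((S.erase a).erase b) _ i (by simp [*, Ne.symm hb.1]), Finset.mul_sum]
      · have : ((S.erase a).erase b).erase i = E.erase b := Finset.erase_right_comm
        rw [this]
      · have := Finset.card_erase_lt_of_mem haS
        have h2 := Finset.card_le_card (Finset.erase_subset b (S.erase a))
        omega
    have M : ∀ c ∈ E, ep R i c * sg R i c S * z i c * pfS z ((S.erase i).erase c)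
        = ∑ b ∈ E.erase c, ep R i c * sg R i c S * z i c * (ep R a b * sg R a b ((S.erase i).erase c)
            * z a b * pfS z ((E.erase b).erase c)) := by
      intro c hc
      simp only [hEd, Finset.mem_erase] at hc
      have e1 : ((S.erase i).erase c).erase a = E.erase c := by
        ext x; simp [hEd]; tauto
      rw [pfS_min z ((S.erase i).erase c) a (by simp [*, Ne.symm hia, Ne.symm hc.2.1])
        (fun x hx => ham x (by simp at hx; exact hx.2.2)), e1, Finset.mul_sum]
      refine Finset.sum_congr rfl fun b _ => ?_
      rw [Finset.erase_right_comm (s := E)]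
    rw [Finset.sum_congr rfl L, Finset.sum_congr rfl M]
    rw [Finset.sum_comm' (t' := E) (s' := fun c => E.erase c)
      (by intro x y; simp only [Finset.mem_erase]; tauto)]
    refine Finset.sum_congr rfl fun c hc => Finset.sum_congr rfl fun b hb => ?_
    simp only [hEd, Finset.mem_erase] at hc hb
    obtain ⟨hbc, hbi, hba, hbS⟩ := hb
    obtain ⟨hci, hca, hcS⟩ := hc
    rw [sg_split (a := a) (b := b) (i := i) (c := c) hi hcS hia (Ne.symm hbi) hca (Ne.symm hbc)
      (Ne.symm hci), sg_split (a := i) (b := c) (i := a) (c := b) haS hbS (Ne.symm hia) (Ne.symm hca)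
      hbi hbc (Ne.symm hba)]
    rw [ep_swap (R := R) hia, ep_swap (R := R) hca, ep_swap (R := R) (Ne.symm hbi),
      ep_swap (R := R) (Ne.symm hbc)]
    ring

lemma antisym_sum {E : Finset ι} (T : ι → ι → R)
    (h : ∀ k ∈ E, ∀ j ∈ E, k ≠ j → T k j = - T j k) :
    ∑ k ∈ E, ∑ j ∈ E.erase k, T k j = 0 := by
  rw [Finset.sum_sigma']
  refine Finset.sum_involution (fun x _ => ⟨x.2, x.1⟩) ?_ ?_ ?_ ?_
  · rintro ⟨k, j⟩ hx
    simp only [Finset.mem_sigma, Finset.mem_erase] at hx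
    simp only
    rw [h k hx.1 j hx.2.2 (Ne.symm hx.2.1)]; ring
  · rintro ⟨k, j⟩ hx _ he
    simp only [Finset.mem_sigma, Finset.mem_erase] at hx
    simp only [Sigma.mk.injEq] at he
    exact hx.2.1 he.1
  · rintro ⟨k, j⟩ hx
    simp only [Finset.mem_sigma, Finset.mem_erase] at hx ⊢
    exact ⟨hx.2.2, Ne.symm hx.2.1, hx.1⟩
  · rintro ⟨k, j⟩ hx; rfl

def s1 (R : Type*) [CommRing R] (k : ι) (S : Finset ι) : R := ∏ x ∈ S.erase k, ep R k x

lemma pfS_repeat (z : ι → ι → R) (hz : ∀ i j, z j i = - z i j) (hd : ∀ i, z i i = 0)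
    (S : Finset ι) (l : ι) (hl : l ∈ S) :
    ∑ k ∈ S, s1 R k S * z l k * pfS z (S.erase k) = 0 := by
  rw [← Finset.add_sum_erase _ _ hl, hd l, mul_zero, zero_mul, zero_add]
  have L : ∀ k ∈ S.erase l, s1 R k S * z l k * pfS z (S.erase k) =
      ∑ j ∈ (S.erase l).erase k, s1 R k S * z l k *
        (ep R l j * sg R l j (S.erase k) * z l j * pfS z (((S.erase l).erase k).erase j)) := by
    intro k hk
    simp only [Finset.mem_erase] at hk
    rw [pfS_expand z hz _ (S.erase k) le_rfl l (by simp [*, Ne.symm hk.1]), Finset.mul_sum,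
      Finset.erase_right_comm]
  rw [Finset.sum_congr rfl L]
  apply antisym_sum
  intro k hk j hj hkj
  simp only [Finset.mem_erase] at hk hj
  have key : ∀ k j, k ≠ l → j ≠ l → k ≠ j → k ∈ S → j ∈ S →
      s1 R k S * sg R l j (S.erase k) = ep R k l * ep R k j *
        ∏ x ∈ ((S.erase l).erase k).erase j, ep R k x * ep R l x * ep R j x := by
    intro k j hk hj hkj hkS hjS
    unfold s1 sg
    have h1 : l ∈ S.erase k := by simp [*, Ne.symm hk]
    have h2 : j ∈ (S.erase k).erase l := by simp [*, Ne.symm hkj]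
    rw [← Finset.mul_prod_erase _ _ h1, ← Finset.mul_prod_erase _ _ h2]
    have e : ((S.erase k).erase l).erase j = ((S.erase l).erase k).erase j := by
      rw [Finset.erase_right_comm (s := S)]
    rw [e, mul_assoc, mul_assoc, ← Finset.prod_mul_distrib, ← mul_assoc]
    congr 1
    refine Finset.prod_congr rfl fun x _ => by ring
  have e : (((S.erase l).erase j).erase k) = (((S.erase l).erase k).erase j) :=
    Finset.erase_right_comm
  have k1 := key k j hk.1 hj.1 hkj hk.2 hj.2
  have k2 := key j k hj.1 hk.1 (Ne.symm hkj) hj.2 hk.2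
  rw [e] at k2 ⊢
  have hh : ∏ x ∈ ((S.erase l).erase k).erase j, ep R k x * ep R l x * ep R j x
     = ∏ x ∈ ((S.erase l).erase k).erase j, ep R j x * ep R l x * ep R k x :=
    Finset.prod_congr rfl fun x _ => by ring
  rw [hh] at k1
  calc _ = (s1 R k S * sg R l j (S.erase k)) * (z l k * ep R l j * z l j *
          pfS z (((S.erase l).erase k).erase j)) := by ring
    _ = -((s1 R j S * sg R l k (S.erase j)) * (z l j * ep R l k * z l k *
          pfS z (((S.erase l).erase k).erase j))) := by
        rw [k1, k2, ep_swap (R := R) hkj, ep_swap (R := R) hj.1, ep_swap (R := R) hk.1]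
        ring
    _ = _ := by ring

end Pf
end PfP

namespace PfP
section Pf2
variable {ι : Type*} {R : Type*} [LinearOrder ι] [CommRing R]

lemma ep_map {R' : Type*} [CommRing R'] (φ : R →+* R') (i j : ι) : φ (ep R i j) = ep R' i j := by
  unfold ep; split_ifs <;> simp

lemma sg_map {R' : Type*} [CommRing R'] (φ : R →+* R') (i j : ι) (S : Finset ι) :
    φ (sg R i j S) = sg R' i j S := by
  unfold sg; simp [ep_map]

lemma s1_map {R' : Type*} [CommRing R'] (φ : R →+* R') (i : ι) (S : Finset ι) :
    φ (s1 R i S) = s1 R' i S := by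
  unfold s1; simp [ep_map]

lemma pfS_induct (C : Finset ι → Prop) (h0 : C ∅)
    (hs : ∀ S a, a ∈ S → (∀ x ∈ S, a ≤ x) → (∀ b ∈ S.erase a, C ((S.erase a).erase b)) → C S) :
    ∀ S, C S := by
  intro S
  induction S using Finset.strongInduction with
  | H S ih =>
    by_cases hne : S.Nonempty
    · refine hs S (S.min' hne) (Finset.min'_mem _ _) (fun x hx => Finset.min'_le _ _ hx) ?_
      intro b hb
      refine ih _ (lt_of_le_of_lt (Finset.erase_subset _ _)
        (Finset.erase_ssubset (Finset.min'_mem _ _)))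
    · rw [Finset.not_nonempty_iff_eq_empty.1 hne]; exact h0

lemma pfS_congr (z z' : ι → ι → R) (S : Finset ι) (h : ∀ i ∈ S, ∀ j ∈ S, z i j = z' i j) :
    pfS z S = pfS z' S := by
  induction S using pfS_induct with
  | h0 => rw [pfS_empty, pfS_empty]
  | hs S a ha hm ih =>
    rw [pfS_min z S a ha hm, pfS_min z' S a ha hm]
    refine Finset.sum_congr rfl fun b hb => ?_
    rw [ih b hb (fun i hi j hj => h i (by simp at hi; tauto) j (by simp at hj; tauto)),
      h a ha b (by simp at hb; tauto)]

lemma pfS_map {R' : Type*} [CommRing R'] (φ : R →+* R') (z : ι → ι → R) (S : Finset ι) :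
    φ (pfS z S) = pfS (fun i j => φ (z i j)) S := by
  induction S using pfS_induct with
  | h0 => rw [pfS_empty, pfS_empty, map_one]
  | hs S a ha hm ih =>
    rw [pfS_min z S a ha hm, pfS_min _ S a ha hm, map_sum]
    refine Finset.sum_congr rfl fun b hb => ?_
    rw [← ih b hb]; simp [ep_map, sg_map]

lemma pfS_emb {κ : Type*} [LinearOrder κ] (f : κ ↪o ι) (z : ι → ι → R) (S : Finset κ) :
    pfS z (S.map f.toEmbedding) = pfS (fun i j => z (f i) (f j)) S := by
  have hep : ∀ i j, ep R (f i) (f j) = ep R i j := by intro i j; simp [ep]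
  have her : ∀ (S : Finset κ) a, (S.map f.toEmbedding).erase (f a)
      = (S.erase a).map f.toEmbedding := by
    intro S a; ext x; simp only [Finset.mem_erase, Finset.mem_map]
    constructor
    · rintro ⟨h, b, hb, rfl⟩
      exact ⟨b, ⟨fun hh => h (by rw [hh]; rfl), hb⟩, rfl⟩
    · rintro ⟨b, ⟨h1, h2⟩, rfl⟩
      exact ⟨fun hh => h1 (f.injective hh), b, h2, rfl⟩
  have hsg : ∀ (S : Finset κ) a b, sg R (f a) (f b) (S.map f.toEmbedding) = sg R a b S := by
    intro S a b
    unfold sg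
    rw [her, her, Finset.prod_map]
    simp [hep]
  induction S using pfS_induct with
  | h0 => rw [Finset.map_empty, pfS_empty, pfS_empty]
  | hs S a ha hm ih =>
    rw [pfS_min _ S a ha hm, pfS_min z _ (f a) (Finset.mem_map_of_mem f.toEmbedding ha), her,
      Finset.sum_map]
    · refine Finset.sum_congr rfl fun b hb => ?_
      rw [← ih b hb]
      simp only [RelEmbedding.coe_toEmbedding, her, hep, hsg]
    · intro x hx
      obtain ⟨y, hy, rfl⟩ := Finset.mem_map.1 hx
      simpa using hm y hy

lemma pfS_homog {σ : Type*} {K : Type*} [CommRing K] (z : ι → ι → MvPolynomial σ K)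
    (hz : ∀ i j, (z i j).IsHomogeneous 1) (S : Finset ι) :
    ∀ s, S.card = 2 * s → (pfS z S).IsHomogeneous s := by
  have hep : ∀ i j : ι, (ep (MvPolynomial σ K) i j).IsHomogeneous 0 := by
    intro i j; unfold ep; split_ifs
    · exact MvPolynomial.isHomogeneous_one _ _
    · exact (MvPolynomial.isHomogeneous_one _ _).neg
  induction S using pfS_induct with
  | h0 => intro s hs; obtain rfl : s = 0 := by simpa using hs.symm
          rw [pfS_empty]; exact MvPolynomial.isHomogeneous_one _ _
  | hs S a ha hm ih =>
    intro s hs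
    rw [pfS_min z S a ha hm]
    refine MvPolynomial.IsHomogeneous.sum _ _ _ fun b hb => ?_
    have h1 := Finset.card_erase_of_mem ha
    have h2 := Finset.card_erase_of_mem hb
    have h3 := Finset.card_pos.2 ⟨b, hb⟩
    obtain ⟨s, rfl⟩ : ∃ s', s = s' + 1 := ⟨s - 1, by omega⟩
    have hsg : (sg (MvPolynomial σ K) a b S).IsHomogeneous 0 := by
      have := MvPolynomial.IsHomogeneous.prod ((S.erase a).erase b)
        (fun k => ep (MvPolynomial σ K) a k * ep (MvPolynomial σ K) b k) (fun _ => 0)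
        (fun k _ => (hep a k).mul (hep b k))
      simpa [sg] using this
    have := ((((hep a b).mul hsg).mul (hz a b)).mul (ih b hb s (by omega)))
    convert this using 1
    omega

/-- one vertex having a single neighbour -/
lemma pfS_leaf (z : ι → ι → R) (hz : ∀ i j, z j i = - z i j) (S : Finset ι) (v u : ι)
    (hv : v ∈ S) (hu : u ∈ S) (hvu : u ≠ v) (h : ∀ x ∈ S, x ≠ u → z v x = 0) :
    pfS z S = ep R v u * sg R v u S * z v u * pfS z ((S.erase v).erase u) := by
  rw [pfS_expand z hz _ S le_rfl v hv]
  apply Finset.sum_eq_single_of_mem u (by simp [*])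
  intro b hb hbu
  simp only [Finset.mem_erase] at hb
  rw [h b hb.2 hbu]; ring

end Pf2

section pq
variable {ι : Type*} {R : Type*} [LinearOrder ι] [Fintype ι] [CommRing R]

def pp (z : ι → ι → R) (i : ι) : R := s1 R i Finset.univ * pfS z (Finset.univ.erase i)

def E3 (i j k : ι) : Finset ι := ((Finset.univ.erase i).erase j).erase k

def qq (z : ι → ι → R) (i j k : ι) : R :=
  if i ≠ j ∧ i ≠ k ∧ j ≠ k then
    ep R i j * ep R i k * ep R j k * (∏ x ∈ E3 i j k, ep R i x * ep R j x * ep R k x)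
      * pfS z (E3 i j k)
  else 0

lemma pp_map {R' : Type*} [CommRing R'] (φ : R →+* R') (z : ι → ι → R) (i : ι) :
    φ (pp z i) = pp (fun i j => φ (z i j)) i := by
  unfold pp; rw [map_mul, s1_map, pfS_map]

lemma qq_map {R' : Type*} [CommRing R'] (φ : R →+* R') (z : ι → ι → R) (i j k : ι) :
    φ (qq z i j k) = qq (fun i j => φ (z i j)) i j k := by
  unfold qq
  split_ifs
  · simp [ep_map, pfS_map]
  · simp

lemma qq_self12 (z : ι → ι → R) (i k : ι) : qq z i i k = 0 := by simp [qq]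
lemma qq_self13 (z : ι → ι → R) (i k : ι) : qq z i k i = 0 := by simp [qq]
lemma qq_self23 (z : ι → ι → R) (i k : ι) : qq z k i i = 0 := by simp [qq]

lemma qq_swap12 (z : ι → ι → R) (i j k : ι) : qq z j i k = - qq z i j k := by
  unfold qq
  by_cases h : i ≠ j ∧ i ≠ k ∧ j ≠ k
  · rw [if_pos h, if_pos (by tauto), ep_swap (R := R) h.1]
    have : E3 j i k = E3 i j k := by unfold E3; rw [Finset.erase_right_comm (s := Finset.univ)]
    rw [this, Finset.prod_congr rfl (g := fun x => ep R i x * ep R j x * ep R k x)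
      (fun x _ => by ring)]
    ring
  · rw [if_neg h, if_neg (by tauto), neg_zero]

lemma sum_qq_z (z : ι → ι → R) (hz : ∀ i j, z j i = - z i j) (hd : ∀ i, z i i = 0) (i j l : ι) :
    ∑ k, qq z i j k * z l k = (if l = j then pp z i else 0) - (if l = i then pp z j else 0) := by
  have A : ∀ i j, i ≠ j → ∑ k, qq z i j k * z j k = pp z i := by
    intro i j hij
    unfold pp
    have hj : j ∈ Finset.univ.erase i := by simp [Ne.symm hij]
    rw [pfS_expand z hz _ _ le_rfl j hj, Finset.mul_sum]
    rw [← Finset.sum_subset (Finset.subset_univ ((Finset.univ.erase i).erase j))]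
    · refine Finset.sum_congr rfl fun k hk => ?_
      have hk' := hk
      simp only [Finset.mem_erase, Finset.mem_univ, and_true] at hk
      unfold qq
      rw [if_pos ⟨hij, Ne.symm hk.2, Ne.symm hk.1⟩]
      unfold s1 sg
      rw [← Finset.mul_prod_erase _ _ hj, ← Finset.mul_prod_erase _ _ hk']
      change _ = _ * (_ * ∏ x ∈ E3 i j k, _ ) * (_ * (∏ x ∈ E3 i j k, _) * _ * pfS z (E3 i j k))
      have : (∏ x ∈ E3 i j k, ep R i x * ep R j x * ep R k x) = (∏ x ∈ E3 i j k, ep R i x) *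
         ∏ x ∈ E3 i j k, ep R j x * ep R k x := by
        rw [← Finset.prod_mul_distrib]; exact Finset.prod_congr rfl fun x _ => by ring
      rw [this]; ring
    · intro k _ hk
      have : k = j ∨ k = i := by
        by_contra hh; push Not at hh; exact hk (by simp [hh.1, hh.2])
      rcases this with rfl | rfl
      · rw [qq_self23, zero_mul]
      · rw [qq_self13, zero_mul]
  by_cases hij : i = j
  · subst hij; simp [qq_self12]
  by_cases h1 : l = j
  · subst h1; rw [if_pos rfl, if_neg (Ne.symm hij), sub_zero, A i l hij]
  by_cases h2 : l = i
  · subst h2; rw [if_pos rfl, if_neg h1, zero_sub, ← A j l (Ne.symm hij), ← Finset.sum_neg_distrib]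
    refine Finset.sum_congr rfl fun k _ => ?_
    rw [qq_swap12]; ring
  rw [if_neg h1, if_neg h2, sub_zero]
  set S := (Finset.univ.erase i).erase j with hS
  have hl : l ∈ S := by simp [hS, h1, h2]
  have := pfS_repeat z hz hd S l hl
  rw [← Finset.sum_subset (Finset.subset_univ S)]
  · rw [← mul_zero (ep R i j * ∏ x ∈ S, ep R i x * ep R j x), ← this, Finset.mul_sum]
    refine Finset.sum_congr rfl fun k hk => ?_
    have hk' := hk
    simp only [hS, Finset.mem_erase, Finset.mem_univ, and_true] at hk
    unfold qq
    rw [if_pos ⟨hij, Ne.symm hk.2, Ne.symm hk.1⟩, ← Finset.mul_prod_erase _ _ hk']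
    unfold s1
    change _ * _ * _ * (∏ x ∈ S.erase k, _) * pfS z (S.erase k) * _ = _
    have : (∏ x ∈ S.erase k, ep R i x * ep R j x * ep R k x) = (∏ x ∈ S.erase k, ep R k x) *
         ∏ x ∈ S.erase k, ep R i x * ep R j x := by
        rw [← Finset.prod_mul_distrib]; exact Finset.prod_congr rfl fun x _ => by ring
    rw [this]; ring
  · intro k _ hk
    have : k = j ∨ k = i := by
      by_contra hh; push Not at hh; exact hk (by simp [hS, hh.1, hh.2])
    rcases this with rfl | rfl
    · rw [qq_self23, zero_mul]
    · rw [qq_self13, zero_mul]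

lemma Zp (z : ι → ι → R) (hz : ∀ i j, z j i = - z i j) (hd : ∀ i, z i i = 0) (l : ι) :
    ∑ k, z l k * pp z k = 0 := by
  rw [← pfS_repeat z hz hd Finset.univ l (Finset.mem_univ l)]
  refine Finset.sum_congr rfl fun k _ => ?_
  unfold pp; ring

lemma kerZ_minor (z : ι → ι → R) (hz : ∀ i j, z j i = - z i j) (hd : ∀ i, z i i = 0) (u : ι → R)
    (hu : ∀ l, ∑ k, z l k * u k = 0) (i j : ι) : pp z i * u j = pp z j * u i := by
  have h : ∑ l, u l * ∑ k, qq z i j k * z l k = 0 := by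
    simp_rw [Finset.mul_sum]
    rw [Finset.sum_comm]
    refine Finset.sum_eq_zero fun k _ => ?_
    have := hu k
    calc _ = - (qq z i j k * ∑ l, z k l * u l) := by
          rw [Finset.mul_sum, ← Finset.sum_neg_distrib]
          refine Finset.sum_congr rfl fun l _ => ?_
          rw [hz k l]; ring
      _ = 0 := by rw [this]; ring
  simp_rw [sum_qq_z z hz hd] at h
  simp only [mul_sub, mul_ite, mul_zero, Finset.sum_sub_distrib, Finset.sum_ite_eq',
    Finset.mem_univ, if_true] at h
  linear_combination h

lemma pv_mul (z : ι → ι → R) (hz : ∀ i j, z j i = - z i j) (hd : ∀ i, z i i = 0) (v : ι → R)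
    (hv : ∑ k, pp z k * v k = 0) (i l : ι) :
    pp z i * v l = ∑ k, z l k * ∑ j, v j * qq z i j k := by
  simp_rw [Finset.mul_sum]
  rw [Finset.sum_comm]
  have : ∀ j, ∑ k, z l k * (v j * qq z i j k) = v j * ∑ k, qq z i j k * z l k := by
    intro j; rw [Finset.mul_sum]; exact Finset.sum_congr rfl fun k _ => by ring
  simp_rw [this, sum_qq_z z hz hd]
  simp only [mul_sub, mul_ite, mul_zero, Finset.sum_sub_distrib, Finset.sum_ite_eq,
    Finset.mem_univ, if_true]
  by_cases h : l = i
  · simp only [h, if_true]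
    have h' : ∑ x, v x * pp z x = 0 := by rw [← hv]; exact Finset.sum_congr rfl fun k _ => by ring
    rw [h']; ring
  · simp only [h, if_false, Finset.sum_const_zero]; ring

lemma four_term [IsDomain R] (z : ι → ι → R) (hz : ∀ i j, z j i = - z i j) (hd : ∀ i, z i i = 0)
    (m : ι) (hm : pp z m ≠ 0) (i j k : ι) :
    pp z m * qq z i j k = pp z i * qq z m j k + pp z j * qq z i m k + pp z k * qq z i j m := by
  have := kerZ_minor z hz hd (fun k => pp z m * qq z i j k - pp z i * qq z m j k -
    pp z j * qq z i m k - pp z k * qq z i j m) (by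
      intro l
      have h1 := sum_qq_z z hz hd i j l
      have h2 := sum_qq_z z hz hd m j l
      have h3 := sum_qq_z z hz hd i m l
      have h4 := Zp z hz hd l
      calc _ = pp z m * (∑ k, qq z i j k * z l k) - pp z i * (∑ k, qq z m j k * z l k)
              - pp z j * (∑ k, qq z i m k * z l k) - qq z i j m * ∑ k, z l k * pp z k := by
            simp_rw [Finset.mul_sum, ← Finset.sum_sub_distrib]
            exact Finset.sum_congr rfl fun k _ => by ring
        _ = 0 := by
          rw [h1, h2, h3, h4]
          split_ifs <;> ring) m k
  simp only [qq_self13, qq_self23, mul_zero, sub_zero, sub_self] at this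
  have h := (mul_eq_zero.1 this).resolve_left hm
  linear_combination h

end pq
end PfP

namespace PfP
section link
variable {ι : Type*} {R : Type*} [LinearOrder ι] [CommRing R]

lemma pfS_cons (z : ι → ι → R) (a : ι) (Z : Finset ι) (h : ∀ x ∈ Z, a < x) :
    pfS z (insert a Z) = ∑ b ∈ Z, s1 R b Z * z a b * pfS z (Z.erase b) := by
  have ha : a ∉ Z := fun hh => lt_irrefl _ (h a hh)
  rw [pfS_min z _ a (Finset.mem_insert_self _ _) (by
    intro x hx; rcases Finset.mem_insert.1 hx with rfl | hx
    · exact le_rfl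
    · exact (h x hx).le), Finset.erase_insert ha]
  refine Finset.sum_congr rfl fun b hb => ?_
  congr 2
  unfold sg s1
  rw [Finset.erase_insert ha]
  have : ep R a b = 1 := by simp [ep, h b hb]
  rw [this, one_mul]
  refine Finset.prod_congr rfl fun x hx => ?_
  have : ep R a x = 1 := by simp [ep, h x (Finset.mem_of_mem_erase hx)]
  rw [this, one_mul]

lemma s1_cons (a b : ι) (Z : Finset ι) (h : ∀ x ∈ Z, a < x) (hb : b ∈ Z) :
    s1 R b (insert a Z) = - s1 R b Z := by
  have ha : a ∉ Z := fun hh => lt_irrefl _ (h a hh)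
  unfold s1
  rw [Finset.erase_insert_of_ne (h b hb).ne, Finset.prod_insert (by simp [ha])]
  have : ep R b a = -1 := by simp [ep, (h b hb).not_gt]
  rw [this]; ring

lemma s1_univ {n : ℕ} (j : Fin n) : s1 R j Finset.univ = (-1) ^ (j : ℕ) := by
  unfold s1 ep
  rw [Finset.prod_ite]
  simp only [Finset.prod_const_one, one_mul, Finset.prod_const]
  congr 1
  rw [← Fin.card_Iio j]
  congr 1
  ext x; simp only [Finset.mem_filter, Finset.mem_erase, Finset.mem_univ, and_true, Finset.mem_Iio,
    not_lt]
  exact ⟨fun h => lt_of_le_of_ne h.2 h.1, fun h => ⟨h.ne, h.le⟩⟩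

lemma univ_succ (n : ℕ) : (Finset.univ : Finset (Fin (n+1))) =
    insert 0 (Finset.univ.map (Fin.succOrderEmb n).toEmbedding) := by
  ext x; simp only [Finset.mem_univ, true_iff, Finset.mem_insert, Finset.mem_map, true_and]
  rcases Fin.eq_zero_or_eq_succ x with h | ⟨j, h⟩
  · exact Or.inl h
  · exact Or.inr ⟨j, h.symm⟩

lemma erase_eq_map {n : ℕ} (j : Fin (n+1)) : Finset.univ.erase j =
    Finset.univ.map (Fin.succAboveOrderEmb j).toEmbedding := by
  ext x; simp only [Finset.mem_erase, Finset.mem_univ, and_true, Finset.mem_map, true_and]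
  constructor
  · intro h; obtain ⟨y, hy⟩ := Fin.exists_succAbove_eq h; exact ⟨y, hy⟩
  · rintro ⟨y, rfl⟩; exact Fin.succAbove_ne j y

theorem pfaffian_step {n : ℕ} (M : Fin (n+2) → Fin (n+2) → R) :
    pfS M Finset.univ = ∑ j : Fin (n+1), (-1) ^ (j:ℕ) * M 0 j.succ *
      pfS (fun i j => M i.succ j.succ) (Finset.univ.erase j) := by
  rw [univ_succ, pfS_cons _ _ _ (by intro x hx; obtain ⟨y, _, rfl⟩ := Finset.mem_map.1 hx
                                    exact Fin.succ_pos y), Finset.sum_map]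
  refine Finset.sum_congr rfl fun j _ => ?_
  have h1 : (Finset.map (Fin.succOrderEmb (n+1)).toEmbedding Finset.univ).erase
      ((Fin.succOrderEmb (n+1)).toEmbedding j) =
      Finset.map (Fin.succOrderEmb (n+1)).toEmbedding (Finset.univ.erase j) := by
    rw [Finset.map_erase]
  rw [h1, pfS_emb]
  have h2 : s1 R ((Fin.succOrderEmb (n+1)).toEmbedding j)
      (Finset.map (Fin.succOrderEmb (n+1)).toEmbedding Finset.univ) = (-1) ^ (j:ℕ) := by
    rw [← s1_univ (R := R) j]
    unfold s1
    rw [h1, Finset.prod_map]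
    refine Finset.prod_congr rfl fun x _ => ?_
    simp [ep]
  rw [h2]; rfl

theorem pfaffian_eq : ∀ (n : ℕ) (M : Fin n → Fin n → R),
    pfaffian n (Matrix.of M) = pfS M Finset.univ
  | 0, M => by rw [pfaffian]; simp [pfS_empty]
  | 1, M => by
      rw [pfaffian, univ_succ]; rw [pfS_cons _ _ _ (by intro x hx; simp at hx)]; simp
  | (n+2), M => by
      rw [pfaffian_step, pfaffian]
      refine Finset.sum_congr rfl fun j _ => ?_
      rw [erase_eq_map, pfS_emb, ← pfaffian_eq n]
      rfl

end link

section conc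
variable (K : Type) [Field K] (q : ℕ)

abbrev BB := MvPolynomial (PairVar (2 * q + 6)) K

noncomputable def zz (i j : Fin (2 * q + 3)) : BB K q := Xmat K (2 * q + 6) (emb3 i) (emb3 j)
noncomputable def yy (c : Fin 3) (j : Fin (2 * q + 3)) : BB K q :=
  Xmat K (2 * q + 6) ⟨c, by omega⟩ (emb3 j)

lemma Xmat_skew (t : ℕ) (i j : Fin t) : Xmat K t j i = - Xmat K t i j := by
  unfold Xmat
  split_ifs <;> first | omega | simp

lemma Xmat_diag (t : ℕ) (i : Fin t) : Xmat K t i i = 0 := by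
  unfold Xmat
  split_ifs <;> first | omega | simp

lemma Xmat_homog (t : ℕ) (i j : Fin t) : (Xmat K t j i).IsHomogeneous 1 := by
  unfold Xmat
  split_ifs
  · exact MvPolynomial.isHomogeneous_X _ _
  · exact (MvPolynomial.isHomogeneous_X _ _).neg
  · exact MvPolynomial.isHomogeneous_zero _ _ _

lemma zz_skew (i j) : zz K q j i = - zz K q i j := Xmat_skew K _ _ _
lemma zz_diag (i) : zz K q i i = 0 := Xmat_diag K _ _

noncomputable def aa (c : Fin 3) : BB K q := ∑ j, yy K q c j * pp (zz K q) j
noncomputable def ww : BB K q :=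
  ∑ i, ∑ j, ∑ k, yy K q 0 i * yy K q 1 j * yy K q 2 k * qq (zz K q) i j k

lemma aa_eq (a b : ℕ) (c : Fin 3) (h0 : emb2 a b (0 : Fin (2*q+4)) = ⟨c, by omega⟩)
    (hs : ∀ j : Fin (2*q+3), emb2 a b (j.succ : Fin (2*q+4)) = emb3 j) :
    pfaffian (2 * q + 4) ((Xmat K (2 * q + 6)).submatrix (emb2 a b) (emb2 a b)) = aa K q c := by
  have e : ((Xmat K (2 * q + 6)).submatrix (emb2 a b) (emb2 a b)) =
    Matrix.of (fun i j : Fin (2*q+4) => Xmat K (2*q+6) (emb2 a b i) (emb2 a b j)) := rfl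
  rw [e, pfaffian_eq]
  refine (pfaffian_step (n := 2*q+2) _).trans ?_
  unfold aa pp
  refine Finset.sum_congr rfl fun j _ => ?_
  rw [s1_univ]
  have : (fun i j : Fin (2*q+3) => Xmat K (2*q+6) (emb2 a b (i.succ : Fin (2*q+4)))
      (emb2 a b (j.succ : Fin (2*q+4)))) = zz K q := by
    funext i j; rw [hs, hs]; rfl
  have h2 : Xmat K (2*q+6) (emb2 a b (0 : Fin (2*q+4))) (emb2 a b (j.succ : Fin (2*q+4)))
      = yy K q c j := by
    rw [hs, h0]; rfl
  change _ * Xmat K (2*q+6) (emb2 a b (0 : Fin (2*q+4))) (emb2 a b (j.succ : Fin (2*q+4))) *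
    pfS (fun i j : Fin (2*q+3) => Xmat K (2*q+6) (emb2 a b (i.succ : Fin (2*q+4)))
      (emb2 a b (j.succ : Fin (2*q+4)))) _ = _
  rw [h2, this]; ring

def e3 (n : ℕ) : Fin n ↪o Fin (n+3) :=
  OrderEmbedding.ofStrictMono emb3 (by intro i j h; simp only [emb3, Fin.lt_def] at *; omega)

lemma ww_eq : pfaffian (2 * q + 6) (Xmat K (2 * q + 6)) = - ww K q := by
  have e : Xmat K (2 * q + 6) = Matrix.of (fun i j => Xmat K (2*q+6) i j) := rfl
  rw [e, pfaffian_eq]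
  clear e
  have hu : (Finset.univ : Finset (Fin (2*q+6))) =
      insert (⟨0, by omega⟩ : Fin (2*q+6)) (insert (⟨1, by omega⟩ : Fin (2*q+6))
        (insert (⟨2, by omega⟩ : Fin (2*q+6)) (Finset.univ.map (e3 (2*q+3)).toEmbedding))) := by
    ext x
    simp only [Finset.mem_univ, true_iff, Finset.mem_insert, Finset.mem_map, true_and, Fin.ext_iff]
    by_cases h : (x : ℕ) < 3
    · omega
    · right; right; right
      refine ⟨⟨x - 3, by omega⟩, ?_⟩
      change (x:ℕ) - 3 + 3 = x
      omega
  have he : ∀ i, 2 < ((e3 (2*q+3) i : Fin (2*q+6)) : ℕ) := by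
    intro i; change 2 < (i : ℕ) + 3; omega
  rw [hu, pfS_cons _ _ _ (by
    intro x hx
    simp only [Finset.mem_insert, Finset.mem_map, Finset.mem_univ, true_and] at hx
    rcases hx with rfl | rfl | ⟨i, rfl⟩
    · simp [Fin.lt_def]
    · simp [Fin.lt_def]
    · rw [Fin.lt_def]; exact lt_trans (by norm_num) (he i))]
  set Z := Finset.univ.map (e3 (2*q+3)).toEmbedding with hZ
  have hzl : ∀ c : ℕ, ∀ hc : c < 3, ∀ x ∈ Z, (⟨c, by omega⟩ : Fin (2*q+6)) < x := by
    intro c hc x hx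
    obtain ⟨i, _, rfl⟩ := Finset.mem_map.1 hx
    rw [Fin.lt_def]; have := he i; simp; omega
  have hnot : ∀ c : ℕ, ∀ hc : c < 3, (⟨c, by omega⟩ : Fin (2*q+6)) ∉ Z :=
    fun c hc hh => lt_irrefl _ (hzl c hc _ hh)
  have hX : ∀ a b : ℕ, ∀ ha : a < 3, ∀ hb : b < 3,
      Xmat K (2*q+6) ⟨a, by omega⟩ ⟨b, by omega⟩ = 0 := by
    intro a b ha hb
    unfold Xmat; rw [dif_neg (by simp; omega), dif_neg (by simp; omega)]
  rw [Finset.sum_insert (by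
    intro h
    rcases Finset.mem_insert.1 h with h | h
    · simp [Fin.ext_iff] at h
    · exact hnot 1 (by omega) h), Finset.sum_insert (hnot 2 (by omega)),
    hX 0 1 (by omega) (by omega), hX 0 2 (by omega) (by omega)]
  simp only [mul_zero, zero_mul, zero_add]
  have step : ∀ b ∈ Z, pfS (fun i j => Xmat K (2*q+6) i j) ((insert (⟨1, by omega⟩ : Fin (2*q+6))
        (insert (⟨2, by omega⟩ : Fin (2*q+6)) Z)).erase b) =
      - ∑ c ∈ Z.erase b, ∑ d ∈ (Z.erase b).erase c,
        s1 (BB K q) c (Z.erase b) * Xmat K (2*q+6) ⟨1, by omega⟩ c *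
        (s1 (BB K q) d ((Z.erase b).erase c) * Xmat K (2*q+6) ⟨2, by omega⟩ d *
          pfS (fun i j => Xmat K (2*q+6) i j) (((Z.erase b).erase c).erase d)) := by
    intro b hb
    have hs : ∀ x ∈ Z.erase b, x ∈ Z := fun x hx => Finset.mem_of_mem_erase hx
    rw [Finset.erase_insert_of_ne (hzl 1 (by omega) b hb).ne,
      Finset.erase_insert_of_ne (hzl 2 (by omega) b hb).ne, pfS_cons _ _ _ (by
        intro x hx
        rcases Finset.mem_insert.1 hx with rfl | hx
        · simp [Fin.lt_def]
        · exact hzl 1 (by omega) x (hs x hx)),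
      Finset.sum_insert (fun h => hnot 2 (by omega) (hs _ h)), hX 1 2 (by omega) (by omega),
      ← Finset.sum_neg_distrib]
    simp only [mul_zero, zero_mul, zero_add]
    refine Finset.sum_congr rfl fun c hc => ?_
    rw [Finset.erase_insert_of_ne (hzl 2 (by omega) c (hs _ hc)).ne, pfS_cons _ _ _ (by
        intro x hx
        exact hzl 2 (by omega) x (hs x (Finset.mem_of_mem_erase hx))),
      s1_cons _ _ _ (fun x hx => hzl 2 (by omega) x (hs x hx)) hc, Finset.mul_sum,
      ← Finset.sum_neg_distrib]
    refine Finset.sum_congr rfl fun d hd => ?_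
    ring
  have s11 : ∀ b ∈ Z, s1 (BB K q) b (insert (⟨1, by omega⟩ : Fin (2*q+6))
        (insert (⟨2, by omega⟩ : Fin (2*q+6)) Z)) = s1 (BB K q) b Z := by
    intro b hb
    rw [s1_cons _ _ _ (by
        intro x hx
        rcases Finset.mem_insert.1 hx with rfl | hx
        · simp [Fin.lt_def]
        · exact hzl 1 (by omega) x hx) (Finset.mem_insert_of_mem hb),
        s1_cons _ _ _ (hzl 2 (by omega)) hb, neg_neg]
  rw [Finset.sum_congr rfl (fun b hb => by rw [step b hb, s11 b hb]), ww, ← Finset.sum_neg_distrib,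
    hZ, Finset.sum_map]
  refine Finset.sum_congr rfl fun i _ => ?_
  have her : ∀ (S : Finset (Fin (2*q+3))) a, (S.map (e3 (2*q+3)).toEmbedding).erase
      ((e3 (2*q+3)).toEmbedding a) = (S.erase a).map (e3 (2*q+3)).toEmbedding :=
    fun S a => (Finset.map_erase _ _ _).symm
  have hs1 : ∀ (S : Finset (Fin (2*q+3))) a, s1 (BB K q) ((e3 (2*q+3)).toEmbedding a)
      (S.map (e3 (2*q+3)).toEmbedding) = s1 (BB K q) a S := by
    intro S a
    unfold s1; rw [her, Finset.prod_map]
    refine Finset.prod_congr rfl fun x _ => ?_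
    simp [ep]
  rw [mul_neg, Finset.mul_sum, her, Finset.sum_map,
    ← Finset.sum_subset (Finset.subset_univ (Finset.univ.erase i))]
  · congr 1
    refine Finset.sum_congr rfl fun j hj => ?_
    have hj' := hj
    simp only [Finset.mem_erase, Finset.mem_univ, and_true] at hj
    rw [Finset.mul_sum, her, Finset.sum_map,
      ← Finset.sum_subset (Finset.subset_univ ((Finset.univ.erase i).erase j))]
    · refine Finset.sum_congr rfl fun k hk => ?_
      have hk' := hk
      simp only [Finset.mem_erase, Finset.mem_univ, and_true] at hk
      rw [her, pfS_emb, hs1, hs1, hs1]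
      unfold qq
      rw [if_pos ⟨Ne.symm hj, Ne.symm hk.2, Ne.symm hk.1⟩]
      unfold s1
      rw [← Finset.mul_prod_erase _ _ hj', ← Finset.mul_prod_erase _ _ hk',
        ← Finset.mul_prod_erase _ _ hk']
      change ep (BB K q) i j * (ep (BB K q) i k * ∏ x ∈ E3 i j k, ep (BB K q) i x) * yy K q 0 i *
        ((ep (BB K q) j k * ∏ x ∈ E3 i j k, ep (BB K q) j x) * yy K q 1 j *
          ((∏ x ∈ E3 i j k, ep (BB K q) k x) * yy K q 2 k * pfS (zz K q) (E3 i j k))) = _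
      rw [Finset.prod_mul_distrib, Finset.prod_mul_distrib]
      ring
    · intro k _ hk
      have : k = j ∨ k = i := by
        by_contra hh; push Not at hh; exact hk (by simp [hh.1, hh.2])
      rcases this with rfl | rfl
      · rw [qq_self23, mul_zero]
      · rw [qq_self13, mul_zero]
  · intro j _ hj
    have : j = i := by by_contra hh; exact hj (by simp [hh])
    subst this
    simp [qq_self12]

lemma pp_homog (i) : (pp (zz K q) i).IsHomogeneous (q+1) := by
  unfold pp
  have h1 := pfS_homog (zz K q) (fun i j => Xmat_homog K _ _ _) (Finset.univ.erase i) (q+1)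
    (by rw [Finset.card_erase_of_mem (Finset.mem_univ _), Finset.card_univ, Fintype.card_fin]; omega)
  have h2 : (s1 (BB K q) i Finset.univ).IsHomogeneous 0 := by
    rw [s1_univ, show (-1 : BB K q) = MvPolynomial.C (-1) by simp, ← map_pow]
    exact MvPolynomial.isHomogeneous_C _ _
  simpa using h2.mul h1

lemma aa_homog (c) : (aa K q c).IsHomogeneous (q+2) := by
  unfold aa
  refine MvPolynomial.IsHomogeneous.sum _ _ _ fun j _ => ?_
  have := (Xmat_homog K _ _ _ : (yy K q c j).IsHomogeneous 1).mul (pp_homog K q j)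
  rwa [show 1 + (q + 1) = q + 2 by omega] at this

lemma ww_homog : (ww K q).IsHomogeneous (q+3) := by
  have : ww K q = - pfaffian (2 * q + 6) (Matrix.of (fun i j => Xmat K (2*q+6) i j)) := by
    rw [← neg_neg (ww K q), ← ww_eq]; rfl
  rw [this, pfaffian_eq]
  exact (pfS_homog _ (fun i j => Xmat_homog K _ _ _) _ (q+3) (by rw [Finset.card_univ, Fintype.card_fin]; omega)).neg

lemma I_eq : Ideal.span
      { pfaffian (2 * q + 6) (Xmat K (2 * q + 6)),
        pfaffian (2 * q + 4) ((Xmat K (2 * q + 6)).submatrix (emb2 0 1) (emb2 0 1)),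
        pfaffian (2 * q + 4) ((Xmat K (2 * q + 6)).submatrix (emb2 0 2) (emb2 0 2)),
        pfaffian (2 * q + 4) ((Xmat K (2 * q + 6)).submatrix (emb2 1 2) (emb2 1 2)) } =
    Ideal.span (Set.range (aa K q)) ⊔ Ideal.span {ww K q} := by
  rw [ww_eq, aa_eq K q 0 1 2 (by ext; simp [emb2]) (by intro j; ext; simp [emb2, emb3]),
    aa_eq K q 0 2 1 (by ext; simp [emb2]) (by intro j; ext; simp [emb2, emb3]),
    aa_eq K q 1 2 0 (by ext; simp [emb2]) (by intro j; ext; simp [emb2, emb3])]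
  rw [Ideal.span_insert, Ideal.span_singleton_neg, sup_comm]
  congr 2
  ext x
  simp only [Set.mem_insert_iff, Set.mem_singleton_iff, Set.mem_range]
  constructor
  · rintro (rfl | rfl | rfl)
    · exact ⟨2, rfl⟩
    · exact ⟨1, rfl⟩
    · exact ⟨0, rfl⟩
  · rintro ⟨c, rfl⟩
    fin_cases c
    · exact Or.inr (Or.inr rfl)
    · exact Or.inr (Or.inl rfl)
    · exact Or.inl rfl
end conc
end PfP

namespace PfP
section gen
variable {σ K : Type*} [Field K]
open MvPolynomial

open Classical in
noncomputable def kill (D : Set σ) : MvPolynomial σ K →ₐ[K] MvPolynomial σ K :=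
  aeval (fun v => if v ∈ D then 0 else X v)

lemma kill_X_mem {D : Set σ} {v : σ} (h : v ∈ D) : kill (K := K) D (X v) = 0 := by
  simp [kill, h]
lemma kill_X_nmem {D : Set σ} {v : σ} (h : v ∉ D) : kill (K := K) D (X v) = X v := by
  simp [kill, h]

lemma sub_kill_mem (D : Set σ) (f : MvPolynomial σ K) :
    f - kill D f ∈ Ideal.span ((X : σ → MvPolynomial σ K) '' D) := by
  induction f using MvPolynomial.induction_on with
  | C a => simp [kill]
  | add f g hf hg => rw [map_add]; convert Ideal.add_mem _ hf hg using 1; ring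
  | mul_X f v hf =>
    rw [map_mul]
    by_cases h : v ∈ D
    · rw [kill_X_mem h, mul_zero, sub_zero]
      exact Ideal.mul_mem_left _ _ (Ideal.subset_span ⟨v, h, rfl⟩)
    · rw [kill_X_nmem h, ← sub_mul]
      exact Ideal.mul_mem_right _ _ hf

lemma kill_ne_zero {D : Set σ} {f : MvPolynomial σ K} {m : σ →₀ ℕ} (hm : m ∈ f.support)
    (hD : ∀ v ∈ D, m v = 0) : kill D f ≠ 0 := by
  intro h
  have := sub_kill_mem D f
  rw [h, sub_zero, MvPolynomial.mem_ideal_span_X_image] at this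
  obtain ⟨i, hi, hi'⟩ := this m hm
  exact hi' (hD i hi)

lemma dvd_of_kill {v : σ} {f : MvPolynomial σ K} (h : kill {v} f = 0) : X v ∣ f := by
  have := sub_kill_mem {v} f
  rw [h, sub_zero, Set.image_singleton, Ideal.mem_span_singleton] at this
  exact this

open Classical in
noncomputable def wt (S : Set σ) : MvPolynomial σ K →ₐ[K] Polynomial (MvPolynomial σ K) :=
  aeval (fun v => if v ∈ S then Polynomial.C (X v) * Polynomial.X else Polynomial.C (X v))

lemma wt_X_mem {S : Set σ} {v : σ} (h : v ∈ S) :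
    wt (K := K) S (X v) = Polynomial.C (X v) * Polynomial.X := by
  simp [wt, h]
lemma wt_X_nmem {S : Set σ} {v : σ} (h : v ∉ S) :
    wt (K := K) S (X v) = Polynomial.C (X v) := by
  simp [wt, h]

lemma wt_C (S : Set σ) (a : K) : wt S (C a) = Polynomial.C (C a) := by
  simp [wt]

lemma wt_eval (S : Set σ) (f : MvPolynomial σ K) : (wt S f).eval 1 = f := by
  induction f using MvPolynomial.induction_on with
  | C a => rw [wt_C]; simp
  | add f g hf hg => rw [map_add, Polynomial.eval_add, hf, hg]
  | mul_X f v hf =>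
    rw [map_mul, Polynomial.eval_mul, hf]
    by_cases h : v ∈ S
    · rw [wt_X_mem h]; simp
    · rw [wt_X_nmem h]; simp

lemma wt_inj (S : Set σ) {f : MvPolynomial σ K} (h : wt S f = 0) : f = 0 := by
  rw [← wt_eval S f, h]; simp

lemma wt_coeff (S : Set σ) (f : MvPolynomial σ K) :
    ∀ d, wt S ((wt S f).coeff d) = Polynomial.C ((wt S f).coeff d) * Polynomial.X ^ d := by
  induction f using MvPolynomial.induction_on with
  | C a =>
    intro d
    rw [wt_C, Polynomial.coeff_C]
    split_ifs with h
    · rw [wt_C, h]; simp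
    · simp
  | add f g hf hg =>
    intro d; rw [map_add, Polynomial.coeff_add, map_add, hf, hg, map_add]; ring
  | mul_X f v hf =>
    intro d
    rw [map_mul]
    by_cases h : v ∈ S
    · rw [wt_X_mem h, ← mul_assoc]
      rcases d with _ | d
      · simp
      · rw [Polynomial.coeff_mul_X, Polynomial.coeff_mul_C, map_mul, hf, wt_X_mem h, map_mul]; ring
    · rw [wt_X_nmem h, Polynomial.coeff_mul_C, map_mul, hf, wt_X_nmem h, map_mul]; ring

lemma wt_hom_natDegree {S : Set σ} {f : MvPolynomial σ K} {d : ℕ}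
    (h : wt S f = Polynomial.C f * Polynomial.X ^ d) : (wt S f).natDegree ≤ d := by
  rw [h]; exact Polynomial.natDegree_C_mul_X_pow_le _ _

lemma wt_hom_coeff {S : Set σ} {f : MvPolynomial σ K} {d : ℕ}
    (h : wt S f = Polynomial.C f * Polynomial.X ^ d) : (wt S f).coeff d = f := by
  rw [h]; simp

lemma natDegree_le_pred {R : Type*} [Semiring R] {f : Polynomial R} {N : ℕ}
    (h : f.natDegree ≤ N + 1) (h0 : f.coeff (N+1) = 0) : f.natDegree ≤ N := by
  rw [Polynomial.natDegree_le_iff_coeff_eq_zero] at *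
  intro k hk
  rcases Nat.lt_or_ge (N+1) k with h' | h'
  · exact h k h'
  · have : k = N+1 := by omega
    rw [this, h0]

lemma wt_zero_of {S : Set σ} {f : MvPolynomial σ K}
    (h : (wt S f).natDegree ≤ 0) (h0 : (wt S f).coeff 0 = 0) : f = 0 := by
  apply wt_inj S
  rw [Polynomial.eq_C_of_natDegree_le_zero h, h0, map_zero]

lemma top_sum {R ι : Type*} [CommRing R] (s : Finset ι) (f g : ι → Polynomial R) {a b : ℕ}
    (hf : ∀ i ∈ s, (f i).natDegree ≤ a) (hg : ∀ i ∈ s, (g i).natDegree ≤ b) :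
    (∑ i ∈ s, f i * g i).natDegree ≤ a + b ∧
      (∑ i ∈ s, f i * g i).coeff (a + b) = ∑ i ∈ s, (f i).coeff a * (g i).coeff b := by
  constructor
  · exact Polynomial.natDegree_sum_le_of_forall_le _ _ fun i hi =>
      (Polynomial.natDegree_mul_le.trans (add_le_add (hf i hi) (hg i hi)))
  · rw [Polynomial.finsetSum_coeff]
    exact Finset.sum_congr rfl fun i hi =>
      Polynomial.coeff_mul_add_eq_of_natDegree_le (hf i hi) (hg i hi)

lemma ep_poly {ι R : Type*} [LinearOrder ι] [CommRing R] (i j : ι) :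
    ep (Polynomial R) i j = Polynomial.C (ep R i j) := by
  rw [ep_map Polynomial.C]

lemma pfS_top {ι R : Type*} [LinearOrder ι] [CommRing R] (z : ι → ι → Polynomial R)
    (hz : ∀ i j, (z i j).natDegree ≤ 1) (S : Finset ι) :
    ∀ s, S.card = 2 * s → (pfS z S).natDegree ≤ s ∧
      (pfS z S).coeff s = pfS (fun i j => (z i j).coeff 1) S := by
  induction S using pfS_induct with
  | h0 => intro s hs; obtain rfl : s = 0 := by simpa using hs.symm
          rw [pfS_empty, pfS_empty]; simp
  | hs S a ha hm ih =>
    intro s hs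
    rw [pfS_min _ S a ha hm, pfS_min _ S a ha hm]
    rcases s with _ | s
    · exfalso; have := Finset.card_pos.2 ⟨a, ha⟩; omega
    have hc : ∀ b ∈ S.erase a, ((S.erase a).erase b).card = 2 * s := by
      intro b hb
      have h1 := Finset.card_erase_of_mem ha
      have h2 := Finset.card_erase_of_mem hb
      omega
    have := top_sum (S.erase a)
      (fun b => ep (Polynomial R) a b * sg (Polynomial R) a b S * z a b)
      (fun b => pfS z ((S.erase a).erase b)) (a := 1) (b := s) (by
        intro b hb
        rw [ep_poly, ← sg_map Polynomial.C, ← map_mul]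
        exact (Polynomial.natDegree_C_mul_le _ _).trans (hz a b))
      (fun b hb => (ih b hb s (hc b hb)).1)
    rw [add_comm 1 s] at this
    refine ⟨this.1, this.2.trans ?_⟩
    refine Finset.sum_congr rfl fun b hb => ?_
    rw [(ih b hb s (hc b hb)).2, ep_poly, ← sg_map Polynomial.C, ← map_mul, Polynomial.coeff_C_mul]

lemma pp_top {ι R : Type*} [LinearOrder ι] [Fintype ι] [CommRing R] (z : ι → ι → Polynomial R)
    (hz : ∀ i j, (z i j).natDegree ≤ 1) (s : ℕ) (hs : Fintype.card ι = 2 * s + 1) (i : ι) :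
    (pp z i).natDegree ≤ s ∧ (pp z i).coeff s = pp (fun i j => (z i j).coeff 1) i := by
  have := pfS_top z hz (Finset.univ.erase i) s
    (by rw [Finset.card_erase_of_mem (Finset.mem_univ _), Finset.card_univ, hs]; rfl)
  unfold pp
  rw [← s1_map Polynomial.C, Polynomial.coeff_C_mul, this.2]
  exact ⟨(Polynomial.natDegree_C_mul_le _ _).trans this.1, rfl⟩

lemma qq_top {ι R : Type*} [LinearOrder ι] [Fintype ι] [CommRing R] (z : ι → ι → Polynomial R)
    (hz : ∀ i j, (z i j).natDegree ≤ 1) (s : ℕ) (hs : Fintype.card ι = 2 * s + 3) (i j k : ι) :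
    (qq z i j k).natDegree ≤ s ∧ (qq z i j k).coeff s = qq (fun i j => (z i j).coeff 1) i j k := by
  unfold qq
  split_ifs with h
  · have := pfS_top z hz (E3 i j k) s (by
      unfold E3
      rw [Finset.card_erase_of_mem (by simp [Ne.symm h.2.1, Ne.symm h.2.2]),
        Finset.card_erase_of_mem (by simp [Ne.symm h.1]),
        Finset.card_erase_of_mem (Finset.mem_univ _), Finset.card_univ, hs]; rfl)
    have e : (ep (Polynomial R) i j * ep (Polynomial R) i k * ep (Polynomial R) j k *
      ∏ x ∈ E3 i j k, ep (Polynomial R) i x * ep (Polynomial R) j x * ep (Polynomial R) k x) =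
      Polynomial.C (ep R i j * ep R i k * ep R j k *
        ∏ x ∈ E3 i j k, ep R i x * ep R j x * ep R k x) := by
      simp [ep_poly, map_prod]
    rw [e, Polynomial.coeff_C_mul, this.2]
    exact ⟨(Polynomial.natDegree_C_mul_le _ _).trans this.1, rfl⟩
  · simp

end gen
end PfP

namespace PfP
section cyc
open MvPolynomial
variable (K : Type) [Field K] (q : ℕ)

lemma val_succ (e : Fin (2*q+3)) : ((e+1 : Fin (2*q+3)) : ℕ) =
    if (e:ℕ) + 1 < 2*q+3 then (e:ℕ)+1 else 0 := by
  have := Fin.val_add_one (n := 2*q+2) e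
  rw [this]
  split_ifs with h1 h2 h2
  · rw [Fin.ext_iff, Fin.val_last] at h1; omega
  · rfl
  · rfl
  · rw [Fin.ext_iff, Fin.val_last] at h1; have := e.2; omega

def zv (i j : Fin (2*q+3)) (h : i < j) : PairVar (2*q+6) :=
  ⟨(emb3 i, emb3 j), by simp only [emb3]; omega⟩

def yv (c : Fin 3) (j : Fin (2*q+3)) : PairVar (2*q+6) :=
  ⟨(⟨c, by omega⟩, emb3 j), by simp only [emb3]; omega⟩

def ev (e : Fin (2*q+3)) : PairVar (2*q+6) :=
  if h : (e:ℕ) + 1 < 2*q+3 then zv q e (e+1) (by rw [Fin.lt_def, val_succ, if_pos h]; omega)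
  else zv q (e+1) e (by rw [Fin.lt_def, val_succ, if_neg h]; omega)

lemma zv_inj {i j i' j' : Fin (2*q+3)} {h : i < j} {h' : i' < j'} :
    zv q i j h = zv q i' j' h' ↔ i = i' ∧ j = j' := by
  constructor
  · intro h
    have h1 := congrArg (fun v : PairVar (2*q+6) => ((v.1.1 : ℕ), (v.1.2 : ℕ))) h
    simp only [zv, emb3, Prod.mk.injEq] at h1
    simp only [Fin.ext_iff]; omega
  · rintro ⟨rfl, rfl⟩; rfl

lemma yv_inj {c c' : Fin 3} {j j' : Fin (2*q+3)} :
    yv q c j = yv q c' j' ↔ c = c' ∧ j = j' := by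
  constructor
  · intro h
    have h1 := congrArg (fun v : PairVar (2*q+6) => ((v.1.1 : ℕ), (v.1.2 : ℕ))) h
    simp only [yv, emb3, Prod.mk.injEq] at h1
    simp only [Fin.ext_iff]; omega
  · rintro ⟨rfl, rfl⟩; rfl

lemma zv_ne_yv {i j : Fin (2*q+3)} {h : i < j} (c k) : zv q i j h ≠ yv q c k := by
  intro hh
  have h1 := congrArg (fun v : PairVar (2*q+6) => ((v.1.1 : ℕ), (v.1.2 : ℕ))) hh
  simp only [zv, yv, emb3, Prod.mk.injEq] at h1
  omega

lemma zz_lt {i j : Fin (2*q+3)} (h : i < j) : zz K q i j = X (zv q i j h) := by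
  unfold zz Xmat
  rw [dif_pos (by simp only [emb3]; omega)]; rfl

lemma yy_eq (c : Fin 3) (j : Fin (2*q+3)) : yy K q c j = X (yv q c j) := by
  unfold yy Xmat
  rw [dif_pos (by simp only [emb3]; omega)]; rfl

lemma ev_iff {i j : Fin (2*q+3)} (h : i < j) (e) :
    zv q i j h = ev q e ↔ (i = e ∧ j = e+1) ∨ (j = e ∧ i = e+1) := by
  unfold ev
  have h1 := val_succ q e
  split_ifs with h2
  · rw [if_pos h2] at h1
    rw [zv_inj]
    simp only [Fin.ext_iff]; omega
  · rw [if_neg h2] at h1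
    rw [zv_inj]
    simp only [Fin.ext_iff]; omega

lemma ev_inj {e e' : Fin (2*q+3)} (h : ev q e = ev q e') : e = e' := by
  have h1 := val_succ q e
  have h1' := val_succ q e'
  unfold ev at h
  split_ifs at h with h2 h3 h3 <;> rw [zv_inj] at h <;> simp only [Fin.ext_iff] at * <;>
    simp only [h2, h3, if_true, if_false] at h1 h1' <;> omega

lemma ev_ne_yv (e c k) : ev q e ≠ yv q c k := by
  unfold ev; split_ifs <;> exact zv_ne_yv q _ _

def adj (i j : Fin (2*q+3)) : Prop := j = i + 1 ∨ i = j + 1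

instance (i j) : Decidable (adj q i j) := by unfold adj; infer_instance

lemma adj_comm {i j} : adj q i j ↔ adj q j i := or_comm

lemma mem_range_ev {i j : Fin (2*q+3)} (h : i < j) :
    zv q i j h ∈ Set.range (ev q) ↔ adj q i j := by
  constructor
  · rintro ⟨e, he⟩
    rcases (ev_iff q h e).1 he.symm with ⟨h1, h2⟩ | ⟨h1, h2⟩
    · left; rw [h2, h1]
    · right; rw [h2, h1]
  · rintro (h1 | h1)
    · exact ⟨i, ((ev_iff q h i).2 (Or.inl ⟨rfl, h1⟩)).symm⟩
    · exact ⟨j, ((ev_iff q h j).2 (Or.inr ⟨rfl, h1⟩)).symm⟩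

/-- induction principle: prove things for entries of `zz` -/
lemma zz_ind (C : Fin (2*q+3) → Fin (2*q+3) → BB K q → Prop) (h0 : ∀ i, C i i 0)
    (h1 : ∀ i j h, C i j (X (zv q i j h))) (h2 : ∀ i j h, C j i (- X (zv q i j h))) (i j) :
    C i j (zz K q i j) := by
  rcases lt_trichotomy i j with h | h | h
  · rw [zz_lt K q h]; exact h1 i j h
  · subst h; rw [zz_diag]; exact h0 i
  · rw [zz_skew, zz_lt K q h]; exact h2 j i h

noncomputable def zb (i j : Fin (2*q+3)) : BB K q := if adj q i j then zz K q i j else 0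

lemma zb_skew (i j) : zb K q j i = - zb K q i j := by
  unfold zb
  by_cases h : adj q i j
  · rw [if_pos h, if_pos ((adj_comm q).1 h), zz_skew]
  · rw [if_neg h, if_neg (fun h' => h ((adj_comm q).1 h')), neg_zero]

lemma zb_diag (i) : zb K q i i = 0 := by
  unfold zb; rw [zz_diag, ite_self]

noncomputable abbrev Phi : BB K q →ₐ[K] Polynomial (BB K q) := wt (Set.range (ev q))

lemma Phi_z (i j) : (Phi K q (zz K q i j)).natDegree ≤ 1 ∧
    (Phi K q (zz K q i j)).coeff 1 = zb K q i j := by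
  unfold zb
  refine zz_ind K q (fun i j f => (Phi K q f).natDegree ≤ 1 ∧
    (Phi K q f).coeff 1 = if adj q i j then f else 0) ?_ ?_ ?_ i j
  · intro i; simp
  · intro i j h
    by_cases hh : adj q i j
    · rw [if_pos hh, Phi, wt_X_mem ((mem_range_ev q h).2 hh)]
      exact ⟨(Polynomial.natDegree_C_mul_le _ _).trans Polynomial.natDegree_X_le, by simp⟩
    · rw [if_neg hh, Phi, wt_X_nmem (fun h' => hh ((mem_range_ev q h).1 h'))]
      simp [Polynomial.coeff_C]
  · intro i j h
    rw [map_neg, Polynomial.natDegree_neg, Polynomial.coeff_neg, if_congr (adj_comm q) rfl rfl]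
    by_cases hh : adj q i j
    · rw [if_pos hh, Phi, wt_X_mem ((mem_range_ev q h).2 hh)]
      exact ⟨(Polynomial.natDegree_C_mul_le _ _).trans Polynomial.natDegree_X_le, by simp⟩
    · rw [if_neg hh, Phi, wt_X_nmem (fun h' => hh ((mem_range_ev q h).1 h'))]
      simp [Polynomial.coeff_C]

lemma Phi_zb (i j) : Phi K q (zb K q i j) = Polynomial.C (zb K q i j) * Polynomial.X ^ 1 := by
  have := wt_coeff (Set.range (ev q)) (zz K q i j) 1
  rwa [(Phi_z K q i j).2] at this

lemma Phi_p (i) : (Phi K q (pp (zz K q) i)).natDegree ≤ q+1 ∧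
    (Phi K q (pp (zz K q) i)).coeff (q+1) = pp (zb K q) i := by
  have e : Phi K q (pp (zz K q) i) = pp (fun i j => Phi K q (zz K q i j)) i :=
    pp_map (Phi K q).toRingHom (zz K q) i
  have := pp_top (fun i j => Phi K q (zz K q i j)) (fun i j => (Phi_z K q i j).1) (q+1)
    (by rw [Fintype.card_fin]; omega) i
  rw [e]
  refine ⟨this.1, this.2.trans ?_⟩
  congr; funext i j; exact (Phi_z K q i j).2

lemma Phi_q (i j k) : (Phi K q (qq (zz K q) i j k)).natDegree ≤ q ∧
    (Phi K q (qq (zz K q) i j k)).coeff q = qq (zb K q) i j k := by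
  have e : Phi K q (qq (zz K q) i j k) = qq (fun i j => Phi K q (zz K q i j)) i j k :=
    qq_map (Phi K q).toRingHom (zz K q) i j k
  have := qq_top (fun i j => Phi K q (zz K q i j)) (fun i j => (Phi_z K q i j).1) q
    (by rw [Fintype.card_fin]) i j k
  rw [e]
  refine ⟨this.1, this.2.trans ?_⟩
  congr; funext i j; exact (Phi_z K q i j).2

lemma Phi_y (c j) : Phi K q (yy K q c j) = Polynomial.C (yy K q c j) := by
  rw [yy_eq, Phi, wt_X_nmem]
  rintro ⟨e, he⟩
  exact ev_ne_yv q _ _ _ he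

/-- edge variable up to sign -/
lemma zb_edge (e) : Associated (zb K q e (e+1)) (X (ev q e)) := by
  unfold zb
  rw [if_pos (show adj q e (e+1) from Or.inl rfl)]
  have h1 := val_succ q e
  rcases lt_trichotomy e (e+1) with h | h | h
  · rw [zz_lt K q h, (ev_iff q h e).2 (Or.inl ⟨rfl, rfl⟩)]
  · exfalso; rw [Fin.ext_iff] at h; split_ifs at h1 <;> omega
  · rw [zz_skew, zz_lt K q h, (ev_iff q h e).2 (Or.inr ⟨rfl, rfl⟩)]
    exact Associated.neg_left (Associated.refl _)

end cyc
section units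
variable {ι R : Type*} [LinearOrder ι] [CommRing R]
lemma ep_unit (i j : ι) : IsUnit (ep R i j) := IsUnit.of_mul_eq_one _ (ep_sq i j)
lemma sg_unit (i j : ι) (S : Finset ι) : IsUnit (sg R i j S) := by
  unfold sg
  exact IsUnit.prod_iff.2 fun k _ => (ep_unit i k).mul (ep_unit j k)
lemma s1_unit (i : ι) (S : Finset ι) : IsUnit (s1 R i S) := by
  unfold s1
  exact IsUnit.prod_iff.2 fun k _ => (ep_unit i k)
end units
section cyc2
open MvPolynomial
open scoped Fin.CommRing
variable (K : Type) [Field K] (q : ℕ)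

lemma natCast_inj {a b : ℕ} (ha : a < 2*q+3) (hb : b < 2*q+3)
    (h : (a : Fin (2*q+3)) = (b : Fin (2*q+3))) : a = b := by
  have := congrArg Fin.val h
  rwa [Fin.val_natCast, Fin.val_natCast, Nat.mod_eq_of_lt ha, Nat.mod_eq_of_lt hb] at this

def pathS (i : Fin (2*q+3)) (k : ℕ) : Finset (Fin (2*q+3)) :=
  (Finset.Ico (2*k) (2*q+2)).image (fun s : ℕ => i + 1 + (s : Fin (2*q+3)))

lemma mem_pathS {i : Fin (2*q+3)} {k s : ℕ} (hs : s < 2*q+3) :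
    i + 1 + (s : Fin (2*q+3)) ∈ pathS q i k ↔ 2*k ≤ s ∧ s < 2*q+2 := by
  unfold pathS
  rw [Finset.mem_image]
  constructor
  · rintro ⟨s', h1, h2⟩
    rw [Finset.mem_Ico] at h1
    have := natCast_inj q (by omega) hs (add_left_cancel h2)
    omega
  · intro h; exact ⟨s, Finset.mem_Ico.2 h, rfl⟩

lemma pathS_succ {i : Fin (2*q+3)} {k : ℕ} (hk : k < q+1) :
    ((pathS q i k).erase (i+1+((2*k : ℕ) : Fin (2*q+3)))).erase
      (i+1+((2*k+1 : ℕ) : Fin (2*q+3))) = pathS q i (k+1) := by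
  ext x
  simp only [Finset.mem_erase, pathS, Finset.mem_image, Finset.mem_Ico]
  constructor
  · rintro ⟨h1, h2, s, hs, rfl⟩
    refine ⟨s, ⟨?_, hs.2⟩, rfl⟩
    by_contra hh
    have : s = 2*k ∨ s = 2*k+1 := by omega
    rcases this with rfl | rfl
    · exact h2 rfl
    · exact h1 rfl
  · rintro ⟨s, hs, rfl⟩
    refine ⟨?_, ?_, s, ⟨by omega, hs.2⟩, rfl⟩
    · intro h
      have := natCast_inj q (by omega) (by omega) (add_left_cancel h); omega
    · intro h
      have := natCast_inj q (by omega) (by omega) (add_left_cancel h); omega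

lemma pfS_path (i : Fin (2*q+3)) (m : ℕ) : ∀ k, k + m = q + 1 →
    Associated (pfS (zb K q) (pathS q i k))
      (∏ s ∈ Finset.Ico k (q+1), X (ev q (i+1+((2*s : ℕ) : Fin (2*q+3))))) := by
  induction m with
  | zero =>
    intro k hk
    have : pathS q i k = ∅ := by unfold pathS; rw [Finset.Ico_eq_empty (by omega)]; rfl
    rw [this, Finset.Ico_eq_empty (by omega), pfS_empty, Finset.prod_empty]
  | succ m ih =>
    intro k hk
    have hv : i+1+((2*k : ℕ) : Fin (2*q+3)) ∈ pathS q i k := (mem_pathS q (by omega)).2 (by omega)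
    have hu : i+1+((2*k+1 : ℕ) : Fin (2*q+3)) ∈ pathS q i k := (mem_pathS q (by omega)).2 (by omega)
    have huv : i+1+((2*k+1 : ℕ) : Fin (2*q+3)) ≠ i+1+((2*k : ℕ) : Fin (2*q+3)) := by
      intro h
      have := natCast_inj q (by omega) (by omega) (add_left_cancel h); omega
    have hu1 : i+1+((2*k+1 : ℕ) : Fin (2*q+3)) = i+1+((2*k : ℕ) : Fin (2*q+3)) + 1 := by
      push_cast; ring
    rw [pfS_leaf (zb K q) (zb_skew K q) _ _ _ hv hu huv, pathS_succ q (by omega),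
      Finset.prod_eq_prod_Ico_succ_bot (by omega)]
    · refine Associated.mul_mul ?_ (ih (k+1) (by omega))
      rw [hu1]
      refine (associated_unit_mul_left _ _ ((ep_unit _ _).mul (sg_unit _ _ _))).trans
        (zb_edge K q _)
    · intro x hx hxu
      unfold pathS at hx
      obtain ⟨s, hs, rfl⟩ := Finset.mem_image.1 hx
      rw [Finset.mem_Ico] at hs
      unfold zb
      rw [if_neg]
      rintro (h | h)
      · exact hxu (h.trans hu1.symm)
      · have : i + 1 + ((2*k : ℕ) : Fin (2*q+3)) = i + 1 + ((s + 1 : ℕ) : Fin (2*q+3)) := by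
          rw [h]; push_cast; ring
        have := natCast_inj q (by omega) (by omega) (add_left_cancel this)
        omega

lemma pathS_zero (i : Fin (2*q+3)) : pathS q i 0 = Finset.univ.erase i := by
  ext x
  simp only [Finset.mem_erase, Finset.mem_univ, and_true]
  have hx : x = i + 1 + (((x - i - 1 : Fin (2*q+3)) : ℕ) : Fin (2*q+3)) := by
    rw [Fin.cast_val_eq_self]; ring
  have hi : i + 1 + ((2*q+2 : ℕ) : Fin (2*q+3)) = i := by
    have : (1 : Fin (2*q+3)) + ((2*q+2 : ℕ) : Fin (2*q+3)) = 0 := by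
      have := Fin.natCast_self (2*q+3)
      rw [← this]; push_cast; ring
    rw [add_assoc, this, add_zero]
  rw [hx, mem_pathS q (by omega)]
  constructor
  · rintro ⟨_, h⟩ h'
    have := natCast_inj q (by omega) (by omega) (add_left_cancel (h'.trans hi.symm))
    omega
  · intro h
    refine ⟨by omega, ?_⟩
    by_contra hh
    apply h
    conv_rhs => rw [← hi]
    congr 2
    omega

noncomputable def mon (i : Fin (2*q+3)) : BB K q :=
  ∏ s ∈ Finset.range (q+1), X (ev q (i+1+((2*s : ℕ) : Fin (2*q+3))))

lemma pb_assoc (i) : Associated (pp (zb K q) i) (mon K q i) := by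
  unfold pp mon
  refine (associated_unit_mul_left _ _ (s1_unit _ _)).trans ?_
  rw [← pathS_zero, Finset.range_eq_Ico]
  exact pfS_path K q i (q+1) 0 (by omega)

end cyc2
end PfP

namespace PfP
section ex
variable {ι : Type*} {R : Type*} [LinearOrder ι] [Fintype ι] [CommRing R]

def ImZ (z : ι → ι → R) (v : ι → R) : Prop := ∃ u : ι → R, ∀ l, v l = ∑ k, z l k * u k

lemma ker_exact [IsDomain R] [DecompositionMonoid R] (z : ι → ι → R)
    (hz : ∀ i j, z j i = - z i j) (hd : ∀ i, z i i = 0) (i j : ι) (h0 : pp z i ≠ 0)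
    (hr : IsRelPrime (pp z i) (pp z j)) (u : ι → R) (hu : ∀ l, ∑ k, z l k * u k = 0) :
    ∃ c, ∀ k, u k = pp z k * c := by
  have h1 := kerZ_minor z hz hd u hu
  have h2 : pp z i ∣ u i := hr.dvd_of_dvd_mul_left ⟨u j, (h1 i j).symm⟩
  obtain ⟨c, hc⟩ := h2
  refine ⟨c, fun k => mul_left_cancel₀ h0 ?_⟩
  rw [h1 i k, hc]; ring
end ex

section cyc3
open MvPolynomial
open scoped Fin.CommRing
variable (K : Type) [Field K] (q : ℕ)

lemma cyc_self (i : Fin (2*q+3)) : i + 1 + ((2*q+2 : ℕ) : Fin (2*q+3)) = i := by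
  have : (1 : Fin (2*q+3)) + ((2*q+2 : ℕ) : Fin (2*q+3)) = 0 := by
    have := Fin.natCast_self (2*q+3)
    rw [← this]; push_cast; ring
  rw [add_assoc, this, add_zero]

lemma X_relprime {σ : Type*} {v w : σ} (h : v ≠ w) :
    IsRelPrime (X v : MvPolynomial σ K) (X w) := by
  rw [(MvPolynomial.X_prime (R := K) (i := v)).irreducible.isRelPrime_iff_not_dvd]
  rw [MvPolynomial.X_dvd_X]
  exact h

lemma mon_ne (i) : mon K q i ≠ 0 := by
  unfold mon; exact Finset.prod_ne_zero_iff.2 fun s _ => X_ne_zero _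

lemma mon_relprime (e) : IsRelPrime (mon K q e) (mon K q (e+1)) := by
  unfold mon
  refine IsRelPrime.prod_left fun s hs => IsRelPrime.prod_right fun s' hs' => X_relprime K ?_
  intro h
  have h := ev_inj q h
  have : e + 1 + ((2*s : ℕ) : Fin (2*q+3)) = e + 1 + ((2*s'+1 : ℕ) : Fin (2*q+3)) := by
    rw [h]; push_cast; ring
  rw [Finset.mem_range] at hs hs'
  have := natCast_inj q (by omega) (by omega) (add_left_cancel this)
  omega

lemma kill_mon0 (e) : kill {ev q e} (mon K q e) = mon K q e := by
  unfold mon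
  rw [map_prod]
  refine Finset.prod_congr rfl fun s hs => kill_X_nmem ?_
  intro h
  have h := ev_inj q h
  rw [Finset.mem_range] at hs
  have := natCast_inj q (by omega) (by omega) (add_left_cancel (h.trans (cyc_self q e).symm))
  omega

lemma kill_mon1 (e) : kill {ev q e} (mon K q (e+1)) = mon K q (e+1) := by
  unfold mon
  rw [map_prod]
  refine Finset.prod_congr rfl fun s hs => kill_X_nmem ?_
  intro h
  have h := ev_inj q h
  rw [Finset.mem_range] at hs
  have h2 : e + 1 + ((2*s+1 : ℕ) : Fin (2*q+3)) = e := by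
    conv_rhs => rw [← h]
    push_cast; ring
  have := natCast_inj q (by omega) (by omega) (add_left_cancel (h2.trans (cyc_self q e).symm))
  omega

lemma relprime_of_assoc {R : Type*} [CommRing R] {a b a' b' : R} (h1 : Associated a a')
    (h2 : Associated b b') (h : IsRelPrime a' b') : IsRelPrime a b :=
  fun _ ha hb => h (ha.trans h1.dvd) (hb.trans h2.dvd)

lemma cancelX (e) (v : Fin (2*q+3) → BB K q) (h : ImZ (zb K q) (fun l => X (ev q e) * v l)) :
    ImZ (zb K q) v := by
  obtain ⟨u, hu⟩ := h
  replace hu : ∀ l, X (ev q e) * v l = ∑ k, zb K q l k * u k := hu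
  set ρ : BB K q →ₐ[K] BB K q := kill {ev q e} with hρ
  have hp : ∀ i, pp (fun i j => ρ (zb K q i j)) i = ρ (pp (zb K q) i) := fun i =>
    (pp_map ρ.toRingHom (zb K q) i).symm
  have a0 : Associated (ρ (pp (zb K q) e)) (mon K q e) := by
    have := (pb_assoc K q e).map ρ
    rwa [hρ, kill_mon0] at this
  have a1 : Associated (ρ (pp (zb K q) (e+1))) (mon K q (e+1)) := by
    have := (pb_assoc K q (e+1)).map ρ
    rwa [hρ, kill_mon1] at this
  obtain ⟨c, hc⟩ := ker_exact (fun i j => ρ (zb K q i j))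
    (fun i j => by rw [zb_skew, map_neg]) (fun i => by rw [zb_diag, map_zero]) e (e+1)
    (by rw [hp]; exact a0.ne_zero_iff.2 (mon_ne K q e))
    (by rw [hp, hp]; exact relprime_of_assoc a0 a1 (mon_relprime K q e))
    (fun k => ρ (u k)) (by
      intro l
      have := congrArg ρ (hu l)
      simp only [map_mul, map_sum] at this
      rw [← this, hρ, kill_X_mem (Set.mem_singleton _), zero_mul])
  have hd : ∀ k, X (ev q e) ∣ u k - pp (zb K q) k * ρ c := by
    intro k
    apply dvd_of_kill
    have hcc : ρ (ρ c) = ρ c := by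
      have : ρ.comp ρ = ρ := by
        apply MvPolynomial.algHom_ext
        intro v
        simp only [AlgHom.comp_apply]
        by_cases h : v ∈ ({ev q e} : Set _)
        · rw [hρ, kill_X_mem h, map_zero]
        · rw [hρ, kill_X_nmem h, kill_X_nmem h]
      exact DFunLike.congr_fun this c
    have hpp : ∀ f, ρ (ρ f) = ρ f := by
      intro f
      have : ρ.comp ρ = ρ := by
        apply MvPolynomial.algHom_ext
        intro v
        simp only [AlgHom.comp_apply]
        by_cases h : v ∈ ({ev q e} : Set _)
        · rw [hρ, kill_X_mem h, map_zero]
        · rw [hρ, kill_X_nmem h, kill_X_nmem h]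
      exact DFunLike.congr_fun this f
    have h3 := congrArg ρ (hc k)
    rw [hp, map_mul, hpp, hpp] at h3
    rw [← hρ, map_sub, map_mul, hpp, h3, sub_self]
  choose u' hu' using hd
  refine ⟨u', fun l => mul_left_cancel₀ (X_ne_zero (R := K) (ev q e)) ?_⟩
  rw [hu l, Finset.mul_sum]
  have hz := Zp (zb K q) (zb_skew K q) (zb_diag K q) l
  calc _ = ∑ k, zb K q l k * u k - (∑ k, zb K q l k * pp (zb K q) k) * ρ c := by
        rw [hz]; ring
    _ = ∑ k, zb K q l k * (u k - pp (zb K q) k * ρ c) := by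
        rw [Finset.sum_mul, ← Finset.sum_sub_distrib]
        exact Finset.sum_congr rfl fun k _ => by ring
    _ = _ := Finset.sum_congr rfl fun k _ => by rw [hu' k]; ring

lemma cancelProd {α : Type*} (T : Finset α) (g : α → Fin (2*q+3)) :
    ∀ (v : Fin (2*q+3) → BB K q),
    ImZ (zb K q) (fun l => (∏ s ∈ T, X (ev q (g s))) * v l) → ImZ (zb K q) v := by
  classical
  induction T using Finset.induction with
  | empty => intro v h; simpa using h
  | insert a T ha ih =>
    intro v h
    apply ih
    apply cancelX K q (g a)
    simpa only [Finset.prod_insert ha, mul_assoc] using h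

/-- exactness for the cycle -/
lemma Ebar (v : Fin (2*q+3) → BB K q) (h : ∑ k, pp (zb K q) k * v k = 0) : ImZ (zb K q) v := by
  obtain ⟨c, hc⟩ := (pb_assoc K q 0)
  apply cancelProd K q (Finset.range (q+1)) (fun s => 0+1+((2*s : ℕ) : Fin (2*q+3)))
  change ImZ _ (fun l => mon K q 0 * v l)
  have := pv_mul (zb K q) (zb_skew K q) (zb_diag K q) v h 0
  refine ⟨fun k => c * ∑ j, v j * qq (zb K q) 0 j k, fun l => ?_⟩
  show mon K q 0 * v l = ∑ k, zb K q l k * (c * ∑ j, v j * qq (zb K q) 0 j k)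
  rw [← hc, mul_right_comm, this l, Finset.sum_mul]
  exact Finset.sum_congr rfl fun k _ => by ring

lemma top_step (N : ℕ) (v : Fin (2*q+3) → BB K q) (hv : ∀ k, (Phi K q (v k)).natDegree ≤ N)
    (h : ∑ k, pp (zb K q) k * (Phi K q (v k)).coeff N = 0) :
    (N = 0 ∧ ∀ k, v k = 0) ∨ (∃ N', N = N' + 1 ∧ ∃ u : Fin (2*q+3) → BB K q,
      ∀ l, (Phi K q (v l - ∑ k, zz K q l k * u k)).natDegree ≤ N') := by
  obtain ⟨u, hu⟩ := Ebar K q _ h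
  have hu2 : ∀ l, Phi K q ((Phi K q (v l)).coeff N) =
      (∑ k, Polynomial.C (zb K q l k) * Phi K q (u k)) * Polynomial.X := by
    intro l
    have h := hu l
    simp only at h
    rw [h, map_sum, Finset.sum_mul]
    refine Finset.sum_congr rfl fun k _ => ?_
    rw [map_mul, Phi_zb, pow_one]; ring
  have hc : ∀ l, (Phi K q ((Phi K q (v l)).coeff N)).coeff N = (Phi K q (v l)).coeff N :=
    fun l => wt_hom_coeff (wt_coeff _ _ _)
  rcases N with _ | N
  · left
    refine ⟨rfl, fun l => wt_zero_of (hv l) ?_⟩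
    rw [← hc l, hu2 l]; simp
  · right
    refine ⟨N, rfl, fun k => (Phi K q (u k)).coeff N, fun l => ?_⟩
    have hn : ∀ k, (Phi K q ((Phi K q (u k)).coeff N)).natDegree ≤ N :=
      fun k => wt_hom_natDegree (wt_coeff _ _ _)
    have ts := top_sum Finset.univ (fun k => Phi K q (zz K q l k))
      (fun k => Phi K q ((Phi K q (u k)).coeff N)) (a := 1) (b := N)
      (fun k _ => (Phi_z K q l k).1) (fun k _ => hn k)
    rw [add_comm 1 N] at ts
    rw [map_sub, map_sum]
    simp only [map_mul]
    apply natDegree_le_pred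
    · exact (Polynomial.natDegree_sub_le _ _).trans (max_le (hv l) ts.1)
    · rw [Polynomial.coeff_sub, ts.2, ← hc l, hu2 l, Polynomial.coeff_mul_X,
        Polynomial.finsetSum_coeff, sub_eq_zero]
      refine Finset.sum_congr rfl fun k _ => ?_
      rw [Polynomial.coeff_C_mul, (Phi_z K q l k).2, wt_hom_coeff (wt_coeff _ _ _)]

lemma pZ (u : Fin (2*q+3) → BB K q) : ∑ l, pp (zz K q) l * ∑ k, zz K q l k * u k = 0 := by
  simp_rw [Finset.mul_sum]
  rw [Finset.sum_comm]
  refine Finset.sum_eq_zero fun k _ => ?_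
  have := Zp (zz K q) (zz_skew K q) (zz_diag K q) k
  calc _ = - ((∑ l, zz K q k l * pp (zz K q) l) * u k) := by
        rw [Finset.sum_mul, ← Finset.sum_neg_distrib]
        refine Finset.sum_congr rfl fun l _ => ?_
        rw [zz_skew K q k l]; ring
    _ = 0 := by rw [this]; ring

lemma exists_bound (v : Fin (2*q+3) → BB K q) : ∃ N, ∀ k, (Phi K q (v k)).natDegree ≤ N :=
  ⟨Finset.univ.sup (fun k => (Phi K q (v k)).natDegree), fun k =>
    Finset.le_sup (f := fun k => (Phi K q (v k)).natDegree) (Finset.mem_univ k)⟩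

lemma ImZ_of_sub {v u : Fin (2*q+3) → BB K q}
    (h : ImZ (zz K q) (fun l => v l - ∑ k, zz K q l k * u k)) : ImZ (zz K q) v := by
  obtain ⟨u', hu'⟩ := h
  refine ⟨fun k => u' k + u k, fun l => ?_⟩
  have := hu' l
  simp only [mul_add, Finset.sum_add_distrib]
  rw [← this]; ring

/-- exactness at the middle -/
theorem exE (v : Fin (2*q+3) → BB K q) (h : ∑ k, pp (zz K q) k * v k = 0) : ImZ (zz K q) v := by
  obtain ⟨N, hN⟩ := exists_bound K q v
  induction N generalizing v with
  | zero =>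
    have ts := top_sum Finset.univ (fun k => Phi K q (pp (zz K q) k))
      (fun k => Phi K q (v k)) (fun k _ => (Phi_p K q k).1) (fun k _ => hN k)
    rw [Finset.sum_congr rfl (fun k _ => (map_mul (Phi K q) _ _).symm), ← map_sum, h] at ts
    simp only [(Phi_p K q _).2] at ts
    rcases top_step K q _ v hN (by rw [← ts.2]; simp) with ⟨_, h⟩ | ⟨N', h, _⟩
    · exact ⟨0, fun l => by simp [h]⟩
    · omega
  | succ N ih =>
    have ts := top_sum Finset.univ (fun k => Phi K q (pp (zz K q) k))
      (fun k => Phi K q (v k)) (fun k _ => (Phi_p K q k).1) (fun k _ => hN k)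
    rw [Finset.sum_congr rfl (fun k _ => (map_mul (Phi K q) _ _).symm), ← map_sum, h] at ts
    simp only [(Phi_p K q _).2] at ts
    rcases top_step K q _ v hN (by rw [← ts.2]; simp) with ⟨h, _⟩ | ⟨N', hN', u, hu⟩
    · omega
    · obtain rfl : N = N' := by omega
      refine ImZ_of_sub K q (ih _ ?_ hu)
      simp only [mul_sub, Finset.sum_sub_distrib]
      rw [h, pZ, sub_zero]

noncomputable def Pbar : Ideal (BB K q) := Ideal.span (Set.range (pp (zb K q)))
noncomputable def PP : Ideal (BB K q) := Ideal.span (Set.range (pp (zz K q)))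

lemma mem_span_range {ι : Type*} [Fintype ι] {R : Type*} [CommRing R] (p : ι → R) (f : R) :
    f ∈ Ideal.span (Set.range p) ↔ ∃ h : ι → R, f = ∑ i, p i * h i := by
  rw [← Ideal.submodule_span_eq, Submodule.mem_span_range_iff_exists_fun]
  constructor
  · rintro ⟨c, rfl⟩; exact ⟨c, Finset.sum_congr rfl fun i _ => by simp [mul_comm]⟩
  · rintro ⟨c, rfl⟩; exact ⟨c, Finset.sum_congr rfl fun i _ => by simp [mul_comm]⟩

lemma top_mem (M : ℕ) : ∀ (h : Fin (2*q+3) → BB K q) (D : ℕ),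
    (∀ k, (Phi K q (h k)).natDegree ≤ M) →
    (Phi K q (∑ k, pp (zz K q) k * h k)).natDegree ≤ D →
    (Phi K q (∑ k, pp (zz K q) k * h k)).coeff D ∈ Pbar K q := by
  induction M with
  | zero =>
    intro h D hM hD
    have ts := top_sum Finset.univ (fun k => Phi K q (pp (zz K q) k))
      (fun k => Phi K q (h k)) (fun k _ => (Phi_p K q k).1) (fun k _ => hM k)
    rw [Finset.sum_congr rfl (fun k _ => (map_mul (Phi K q) _ _).symm), ← map_sum] at ts
    simp only [(Phi_p K q _).2] at ts
    rcases lt_trichotomy (q+1+0) D with h1 | h1 | h1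
    · rw [Polynomial.coeff_eq_zero_of_natDegree_lt (lt_of_le_of_lt ts.1 h1)]
      exact zero_mem _
    · rw [← h1, ts.2]; exact (mem_span_range _ _).2 ⟨_, rfl⟩
    · rcases top_step K q _ h hM (by
        rw [← ts.2]; exact Polynomial.coeff_eq_zero_of_natDegree_lt (lt_of_le_of_lt hD h1))
        with ⟨_, h⟩ | ⟨N', h, _⟩
      · simp [h]
      · omega
  | succ M ih =>
    intro h D hM hD
    have ts := top_sum Finset.univ (fun k => Phi K q (pp (zz K q) k))
      (fun k => Phi K q (h k)) (fun k _ => (Phi_p K q k).1) (fun k _ => hM k)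
    rw [Finset.sum_congr rfl (fun k _ => (map_mul (Phi K q) _ _).symm), ← map_sum] at ts
    simp only [(Phi_p K q _).2] at ts
    rcases lt_trichotomy (q+1+(M+1)) D with h1 | h1 | h1
    · rw [Polynomial.coeff_eq_zero_of_natDegree_lt (lt_of_le_of_lt ts.1 h1)]
      exact zero_mem _
    · rw [← h1, ts.2]; exact (mem_span_range _ _).2 ⟨_, rfl⟩
    · rcases top_step K q _ h hM (by
        rw [← ts.2]; exact Polynomial.coeff_eq_zero_of_natDegree_lt (lt_of_le_of_lt hD h1))
        with ⟨h, _⟩ | ⟨N', hN', u, hu⟩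
      · omega
      · obtain rfl : M = N' := by omega
        have e : ∑ k, pp (zz K q) k * (h k - ∑ l, zz K q k l * u l) =
            ∑ k, pp (zz K q) k * h k := by
          simp only [mul_sub, Finset.sum_sub_distrib]
          rw [pZ, sub_zero]
        have := ih _ D hu
        rw [e] at this
        exact this hD

end cyc3
end PfP

namespace PfP
section p7
open MvPolynomial
open scoped Fin.CommRing
variable (K : Type) [Field K] (q : ℕ)

lemma pb_ne (i) : pp (zb K q) i ≠ 0 := (pb_assoc K q i).ne_zero_iff.2 (mon_ne K q i)

lemma pp_ne (i) : pp (zz K q) i ≠ 0 := by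
  intro h
  have := (Phi_p K q i).2
  rw [h, map_zero, Polynomial.coeff_zero] at this
  exact pb_ne K q i this.symm

lemma Phi_pb (i) : Phi K q (pp (zb K q) i) =
    Polynomial.C (pp (zb K q) i) * Polynomial.X ^ (q+1) := by
  have := wt_coeff (Set.range (ev q)) (pp (zz K q) i) (q+1)
  rwa [(Phi_p K q i).2] at this

lemma lead_p (i) : (Phi K q (pp (zz K q) i)).leadingCoeff = pp (zb K q) i := by
  have h : (Phi K q (pp (zz K q) i)).natDegree = q+1 := by
    apply le_antisymm (Phi_p K q i).1
    apply Polynomial.le_natDegree_of_ne_zero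
    rw [(Phi_p K q i).2]; exact pb_ne K q i
  rw [Polynomial.leadingCoeff, h, (Phi_p K q i).2]

lemma p_relprime : IsRelPrime (pp (zz K q) 0) (pp (zz K q) (0+1)) := by
  intro d h0 h1
  have h : ∀ i, d ∣ pp (zz K q) i → (Phi K q d).leadingCoeff ∣ pp (zb K q) i := by
    rintro i ⟨e, he⟩
    rw [← lead_p, he, map_mul, Polynomial.leadingCoeff_mul]
    exact dvd_mul_right _ _
  have hu := relprime_of_assoc (pb_assoc K q 0) (pb_assoc K q (0+1)) (mon_relprime K q 0)
    (h _ h0) (h _ h1)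
  have h2 := wt_coeff (Set.range (ev q)) d (Phi K q d).natDegree
  have h3 : IsUnit (wt (Set.range (ev q)) ((Phi K q d).coeff (Phi K q d).natDegree)) :=
    hu.map (wt (Set.range (ev q)))
  have hn : (Phi K q d).natDegree = 0 := by
    have := Polynomial.natDegree_eq_zero_of_isUnit h3
    rw [h2] at this
    exact (Polynomial.natDegree_C_mul_X_pow _ _ hu.ne_zero).symm.trans this
  have : d = (Phi K q d).leadingCoeff := by
    conv_lhs => rw [← wt_eval (Set.range (ev q)) d]
    rw [Polynomial.eq_C_of_natDegree_eq_zero hn]; simp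
  rw [this]; exact hu

theorem exK (u : Fin (2*q+3) → BB K q) (hu : ∀ l, ∑ k, zz K q l k * u k = 0) :
    ∃ c, ∀ k, u k = pp (zz K q) k * c :=
  ker_exact _ (zz_skew K q) (zz_diag K q) 0 (0+1) (pp_ne K q 0) (p_relprime K q) u hu

/-! the cycle: nonzerodivisor -/
noncomputable def wb : BB K q :=
  ∑ i, ∑ j, ∑ k, yy K q 0 i * yy K q 1 j * yy K q 2 k * qq (zb K q) i j k

lemma not_mem_Pbar {g : BB K q} (hg : g ∉ Pbar K q) :
    ∃ m ∈ g.support, ∀ i, ∃ s ∈ Finset.range (q+1),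
      m (ev q (i+1+((2*s : ℕ) : Fin (2*q+3)))) = 0 := by
  by_contra! hcon
  apply hg
  rw [g.as_sum]
  refine Ideal.sum_mem _ fun m hm => ?_
  obtain ⟨i, hi⟩ := hcon m hm
  have hd : mon K q i ∣ monomial m (coeff m g) := by
    unfold mon
    refine Finset.prod_dvd_of_isRelPrime ?_ ?_
    · intro s hs s' hs' hne
      refine X_relprime K fun h => hne ?_
      have h := natCast_inj q (by simp at hs; omega) (by simp at hs'; omega)
        (add_left_cancel (ev_inj q h))
      omega
    · intro s hs
      rw [X_dvd_monomial]
      exact Or.inr (hi s hs)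
  exact Ideal.mem_of_dvd _ ((pb_assoc K q i).dvd.trans hd) (Ideal.subset_span ⟨i, rfl⟩)

variable {q}
lemma kill_agree (F : Finset (Fin (2*q+3))) (e a b : Fin (2*q+3))
    (h : ¬ ((a = e ∧ b = e+1) ∨ (b = e ∧ a = e+1))) :
    kill (K := K) (ev q '' F) (zb K q a b) = kill (ev q '' (F.erase e : Finset _)) (zb K q a b) := by
  have key : ∀ a b (hab : a < b), ¬ ((a = e ∧ b = e+1) ∨ (b = e ∧ a = e+1)) →
      kill (K := K) (ev q '' F) (zb K q a b) =
        kill (ev q '' (F.erase e : Finset _)) (zb K q a b) := by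
    intro a b hab h
    unfold zb
    split_ifs
    · rw [zz_lt K q hab]
      have hne : zv q a b hab ≠ ev q e := fun hh => h ((ev_iff q hab e).1 hh)
      by_cases hm : zv q a b hab ∈ ev q '' F
      · rw [kill_X_mem hm, kill_X_mem]
        obtain ⟨x, hx, hx2⟩ := hm
        refine ⟨x, ?_, hx2⟩
        rw [Finset.mem_coe, Finset.mem_erase]
        exact ⟨fun hxe => hne (by rw [← hx2, hxe]), hx⟩
      · rw [kill_X_nmem hm, kill_X_nmem]
        rintro ⟨x, hx, hx2⟩
        exact hm ⟨x, Finset.mem_of_mem_erase hx, hx2⟩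
    · simp
  rcases lt_trichotomy a b with hab | hab | hab
  · exact key a b hab h
  · rw [hab, zb_diag, map_zero, map_zero]
  · rw [zb_skew K q b a, map_neg, map_neg, key b a hab (by tauto)]

lemma kill_pfS (F : Finset (Fin (2*q+3))) (e : Fin (2*q+3)) (S : Finset (Fin (2*q+3)))
    (h : e ∉ S) :
    kill (K := K) (ev q '' F) (pfS (zb K q) S) =
      kill (ev q '' (F.erase e : Finset _)) (pfS (zb K q) S) := by
  have h1 := fun D => pfS_map (kill (K := K) (σ := PairVar (2*q+6)) D).toRingHom (zb K q) S
  have h2 := fun D => show kill (K := K) D (pfS (zb K q) S) = _ from h1 D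
  rw [h2, h2]
  refine pfS_congr _ _ _ fun a ha b hb => kill_agree K F e a b ?_
  rintro (⟨rfl, _⟩ | ⟨rfl, _⟩) <;> exact h ‹_›

lemma kill_pp (F : Finset (Fin (2*q+3))) (e : Fin (2*q+3)) :
    kill (K := K) (ev q '' F) (pp (zb K q) e) =
      kill (ev q '' (F.erase e : Finset _)) (pp (zb K q) e) := by
  have h1 := fun D => s1_map (kill (K := K) (σ := PairVar (2*q+6)) D).toRingHom e Finset.univ
  have h2 := fun D => show kill (K := K) D (s1 _ e Finset.univ) = _ from h1 D
  unfold pp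
  rw [map_mul, map_mul, kill_pfS K F e _ (Finset.notMem_erase _ _), h2, h2]

lemma kill_qq (F : Finset (Fin (2*q+3))) (e i k : Fin (2*q+3)) :
    kill (K := K) (ev q '' F) (qq (zb K q) i e k) =
      kill (ev q '' (F.erase e : Finset _)) (qq (zb K q) i e k) := by
  have h1 := fun D => qq_map (kill (K := K) (σ := PairVar (2*q+6)) D).toRingHom (zb K q) i e k
  have h2 := fun D => show kill (K := K) D (qq (zb K q) i e k) = _ from h1 D
  rw [h2, h2]
  unfold qq
  split_ifs
  · congr 1
    refine pfS_congr _ _ _ fun a ha b hb => kill_agree K F e a b ?_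
    unfold E3 at ha hb
    simp only [Finset.mem_erase] at ha hb
    tauto
  · rfl

noncomputable def eta (i j k : Fin (2*q+3)) : BB K q →ₐ[K] BB K q :=
  open scoped Classical in
  aeval (R := K) fun v : PairVar (2*q+6) => if v = yv q 0 i ∨ v = yv q 1 j ∨ v = yv q 2 k then 1 else
    if (v.1.1 : ℕ) < 3 then 0 else X v

lemma eta_z (i j k a b) (D : Set (PairVar (2*q+6))) :
    eta K i j k (kill D (zb K q a b)) = kill D (zb K q a b) := by
  have key : ∀ a b (hab : a < b), eta K i j k (kill D (zb K q a b)) = kill D (zb K q a b) := by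
    intro a b hab
    unfold zb
    split_ifs
    · rw [zz_lt K q hab]
      by_cases h : zv q a b hab ∈ D
      · rw [kill_X_mem h, map_zero]
      · rw [kill_X_nmem h, eta, aeval_X, if_neg, if_neg]
        · simp [zv, emb3]
        · rintro (h | h | h) <;> exact zv_ne_yv q _ _ h
    · simp
  rcases lt_trichotomy a b with hab | hab | hab
  · exact key a b hab
  · rw [hab, zb_diag, map_zero, map_zero]
  · rw [zb_skew K q b a, map_neg, map_neg, key b a hab]

lemma eta_q (i j k a b c) (D : Set (PairVar (2*q+6))) :
    eta K i j k (kill D (qq (zb K q) a b c)) = kill D (qq (zb K q) a b c) := by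
  have h1 := qq_map (kill (K := K) D).toRingHom (zb K q) a b c
  have h2 : kill (K := K) D (qq (zb K q) a b c) = _ := h1
  have h3 := qq_map (eta K i j k).toRingHom (fun i j => (kill (K := K) D).toRingHom (zb K q i j)) a b c
  rw [h2]
  refine (show eta K i j k _ = _ from h3).trans ?_
  congr 1
  funext x y
  exact eta_z K i j k x y D

lemma eta_y (i j k : Fin (2*q+3)) (c : Fin 3) (a) (e : Set (Fin (2*q+3))) :
    eta K i j k (kill (ev q '' e) (yy K q c a)) = if a = ![i,j,k] c then 1 else 0 := by
  rw [yy_eq, kill_X_nmem (by rintro ⟨x, _, hx⟩; exact ev_ne_yv q _ _ _ hx), eta, aeval_X]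
  have : (yv q c a = yv q 0 i ∨ yv q c a = yv q 1 j ∨ yv q c a = yv q 2 k) ↔ a = ![i,j,k] c := by
    simp only [yv_inj]
    fin_cases c <;> simp
  simp only [this]
  split_ifs with h1 h2
  · rfl
  · rfl
  · exact absurd (by simp [yv]) h2

lemma kill_wb (F : Set (Fin (2*q+3))) (h : kill (ev q '' F) (wb K q) = 0) (i j k) :
    kill (K := K) (ev q '' F) (qq (zb K q) i j k) = 0 := by
  have := congrArg (eta K i j k) h
  unfold wb at this
  simp only [map_sum, map_mul, eta_y, eta_q, map_zero] at this
  rw [Finset.sum_eq_single i, Finset.sum_eq_single j, Finset.sum_eq_single k] at this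
  · simpa using this
  · intro c _ hc; simp [hc]
  · simp
  · intro c _ hc; simp [hc]
  · simp
  · intro c _ hc; simp [hc]
  · simp

variable (q)
theorem Wbar (g : BB K q) (h : wb K q * g ∈ Pbar K q) : g ∈ Pbar K q := by
  by_contra hg
  obtain ⟨m, hm, hm0⟩ := not_mem_Pbar K q hg
  let F0 : Finset (Fin (2*q+3)) := Finset.univ.filter fun e => m (ev q e) = 0
  let Q : Finset (Fin (2*q+3)) → Prop := fun F => ∀ i, kill (K := K) (ev q '' F) (pp (zb K q) i) = 0
  have hF0 : Q F0 := by
    intro i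
    obtain ⟨s, hs, h0⟩ := hm0 i
    have : kill (K := K) (ev q '' F0) (mon K q i) = 0 := by
      unfold mon
      rw [map_prod]
      refine Finset.prod_eq_zero hs (kill_X_mem ⟨_, ?_, rfl⟩)
      simp [F0]; simpa using h0
    have h2 := (pb_assoc K q i).map (kill (K := K) (ev q '' F0))
    rw [this] at h2
    exact (associated_zero_iff_eq_zero _).1 h2
  obtain ⟨F, hFF, hF, hmin⟩ : ∃ F ⊆ F0, Q F ∧ ∀ e ∈ F, ¬ Q (F.erase e) := by
    obtain ⟨F, hF, hF2⟩ := exists_minimal_le_of_wellFoundedLT Q F0 hF0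
    refine ⟨F, hF, hF2.prop, fun e he hQ => ?_⟩
    have := hF2.le_of_le hQ (Finset.erase_subset _ _)
    exact (Finset.notMem_erase e F) (this he)
  have hne : F.Nonempty := by
    rw [Finset.nonempty_iff_ne_empty]
    rintro rfl
    have h1 := hF 0
    have h2 : kill (K := K) (ev q '' (∅ : Finset (Fin (2*q+3)))) = AlgHom.id K _ := by
      apply MvPolynomial.algHom_ext
      intro v
      rw [kill_X_nmem (by simp)]; rfl
    rw [h2] at h1
    exact pb_ne K q 0 h1
  obtain ⟨e, he⟩ := hne
  have h1 := hmin e he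
  simp only [Q, not_forall] at h1
  obtain ⟨i, hi⟩ := h1
  have hkg : kill (K := K) (ev q '' F) g ≠ 0 := by
    refine kill_ne_zero hm ?_
    rintro v ⟨x, hx, rfl⟩
    have := hFF hx
    simpa [F0] using this
  have hkw : kill (K := K) (ev q '' F) (wb K q) = 0 := by
    obtain ⟨u, hu⟩ := (mem_span_range _ _).1 h
    have := congrArg (kill (K := K) (ev q '' F)) hu
    rw [map_mul, map_sum] at this
    rw [Finset.sum_eq_zero (fun i _ => by rw [map_mul, hF i, zero_mul])] at this
    exact (mul_eq_zero.1 this).resolve_right hkg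
  have hq := kill_wb K (q := q) F hkw i e (e+1)
  apply hi
  by_cases hie : i = e
  · rw [hie, ← kill_pp]; exact hF e
  · have hs := sum_qq_z (zb K q) (zb_skew K q) (zb_diag K q) i e e
    rw [if_pos rfl, if_neg (Ne.symm hie), sub_zero] at hs
    rw [← hF i, ← hs, map_sum, map_sum]
    refine Finset.sum_congr rfl fun k _ => ?_
    rw [map_mul, map_mul, ← kill_qq K F e i k]
    by_cases hk : k = e + 1
    · rw [hk, hq, zero_mul, zero_mul]
    · rw [kill_agree K F e e k]
      rintro (⟨_, h⟩ | ⟨h, h'⟩)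
      · exact hk h
      · exact hk (h.trans h')

lemma Phi_w : (Phi K q (ww K q)).natDegree ≤ q ∧ (Phi K q (ww K q)).coeff q = wb K q := by
  constructor
  · unfold ww
    simp only [map_sum, map_mul, Phi_y]
    simp only [← Polynomial.C_mul]
    refine Polynomial.natDegree_sum_le_of_forall_le _ _ fun i _ =>
      Polynomial.natDegree_sum_le_of_forall_le _ _ fun j _ =>
      Polynomial.natDegree_sum_le_of_forall_le _ _ fun k _ => ?_
    exact (Polynomial.natDegree_C_mul_le _ _).trans (Phi_q K q i j k).1
  · unfold ww wb
    simp only [map_sum, map_mul, Phi_y]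
    simp only [← Polynomial.C_mul, Polynomial.finsetSum_coeff,
      Polynomial.coeff_C_mul, (Phi_q K q _ _ _).2]

theorem Wcan (g : BB K q) (h : ww K q * g ∈ PP K q) : g ∈ PP K q := by
  obtain ⟨N, hN⟩ : ∃ N, (Phi K q g).natDegree ≤ N := ⟨_, le_rfl⟩
  have main : ∀ N (g : BB K q), (Phi K q g).natDegree ≤ N → ww K q * g ∈ PP K q →
      ∃ g', g - g' ∈ PP K q ∧ (Phi K q g').natDegree ≤ N ∧ (Phi K q g').coeff N = 0 := by
    intro N g hN h
    obtain ⟨u, hu⟩ := (mem_span_range _ _).1 h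
    obtain ⟨M, hM⟩ := exists_bound K q u
    have t := top_mem K q M u (q+N) hM
    rw [← hu, map_mul] at t
    have ts := top_sum {()} (fun _ => Phi K q (ww K q)) (fun _ => Phi K q g)
      (fun _ _ => (Phi_w K q).1) (fun _ _ => hN)
    simp only [Finset.sum_singleton, (Phi_w K q).2] at ts
    have t := t ts.1
    rw [ts.2] at t
    have t := Wbar K q _ t
    obtain ⟨v, hv⟩ := (mem_span_range _ _).1 t
    have hc : (Phi K q ((Phi K q g).coeff N)).coeff N = (Phi K q g).coeff N :=
      wt_hom_coeff (wt_coeff _ _ _)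
    have hv2 : Phi K q ((Phi K q g).coeff N) =
        (∑ k, Polynomial.C (pp (zb K q) k) * Phi K q (v k)) * Polynomial.X ^ (q+1) := by
      rw [hv, map_sum, Finset.sum_mul]
      refine Finset.sum_congr rfl fun k _ => ?_
      rw [map_mul, Phi_pb]; ring
    by_cases hNq : N < q+1
    · refine ⟨g, by simp, hN, ?_⟩
      rw [← hc, hv2, Polynomial.coeff_mul_X_pow', if_neg (by omega)]
    · obtain ⟨N', rfl⟩ := Nat.exists_eq_add_of_le (not_lt.1 hNq)
      let v' := fun k => (Phi K q (v k)).coeff N'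
      have ts := top_sum Finset.univ (fun k => Phi K q (pp (zz K q) k))
        (fun k => Phi K q (v' k)) (a := q+1) (b := N')
        (fun k _ => (Phi_p K q k).1) (fun k _ => wt_hom_natDegree (wt_coeff _ _ _))
      refine ⟨g - ∑ k, pp (zz K q) k * v' k, ?_, ?_, ?_⟩
      · rw [sub_sub_cancel]; exact (mem_span_range _ _).2 ⟨_, rfl⟩
      · rw [map_sub, map_sum]
        simp only [map_mul]
        exact (Polynomial.natDegree_sub_le _ _).trans (max_le hN ts.1)
      · rw [map_sub, map_sum]
        simp only [map_mul]
        rw [Polynomial.coeff_sub, ts.2, ← hc, hv2, add_comm (q+1) N', Polynomial.coeff_mul_X_pow,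
          Polynomial.finsetSum_coeff, sub_eq_zero]
        refine Finset.sum_congr rfl fun k _ => ?_
        rw [Polynomial.coeff_C_mul, (Phi_p K q k).2]
        congr 1
        exact (wt_hom_coeff (wt_coeff _ _ _)).symm
  induction N generalizing g with
  | zero =>
    obtain ⟨g', h1, h2, h3⟩ := main 0 g hN h
    rw [wt_zero_of h2 h3, sub_zero] at h1
    exact h1
  | succ N ih =>
    obtain ⟨g', h1, h2, h3⟩ := main _ g hN h
    have : g' ∈ PP K q := by
      refine ih g' ?_ (natDegree_le_pred h2 h3)
      have : ww K q * g' = ww K q * g - ww K q * (g - g') := by ring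
      rw [this]
      exact sub_mem h (Ideal.mul_mem_left _ _ h1)
    have := add_mem h1 this
    rwa [sub_add_cancel] at this
end p7
end PfP

namespace PfP
section mccoy
variable {R : Type*} [CommRing R]

lemma mccoy (p r : R) (n : ℕ) : ∀ G : Polynomial R, G.natDegree ≤ n →
    G * (Polynomial.C p * Polynomial.X + Polynomial.C r) = 0 → Polynomial.C p ^ (n+1) * G = 0 := by
  have key : ∀ (n : ℕ) (G : Polynomial R), G.natDegree ≤ n →
    G * (Polynomial.C p * Polynomial.X + Polynomial.C r) = 0 → p * G.coeff n = 0 := by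
    intro n G hG h
    have := congrArg (fun f => Polynomial.coeff f (n+1)) h
    simp only [mul_add, Polynomial.coeff_add, Polynomial.coeff_zero] at this
    rw [← mul_assoc, Polynomial.coeff_mul_X, Polynomial.coeff_mul_C, Polynomial.coeff_mul_C,
      Polynomial.coeff_eq_zero_of_natDegree_lt (lt_of_le_of_lt hG (Nat.lt_succ_self n))] at this
    rw [mul_comm]; simpa using this
  have hle : ∀ G : Polynomial R, (Polynomial.C p * G).natDegree ≤ G.natDegree :=
    fun G => Polynomial.natDegree_C_mul_le _ _
  induction n with
  | zero =>
    intro G hG h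
    have := key 0 G hG h
    rw [Polynomial.eq_C_of_natDegree_le_zero hG, zero_add, pow_one, ← Polynomial.C_mul, this,
      map_zero]
  | succ n ih =>
    intro G hG h
    have := key _ G hG h
    have := ih (Polynomial.C p * G) (natDegree_le_pred ((hle G).trans hG)
      (by rw [Polynomial.coeff_C_mul, this])) (by rw [mul_assoc, h, mul_zero])
    rw [pow_succ, mul_assoc, this]
end mccoy

section qsys
variable {B : Type} [CommRing B]

/-- quasi-regular generating systems -/
def QSys (Hm : ℕ → B → Prop) (J : Ideal B) : Prop :=
  ∀ j, ∃ (ι : Type) (_ : Fintype ι) (M : ι → B), (∀ x, Hm j (M x)) ∧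
    Ideal.span (Set.range M) = J ^ j ∧
    ∀ c : ι → B, ∑ x, M x * c x ∈ J ^ (j+1) → ∀ x, c x ∈ J

lemma QSys_bot (Hm : ℕ → B → Prop) (h1 : Hm 0 1) : QSys Hm (⊥ : Ideal B) := by
  intro j
  rcases j with _ | j
  · refine ⟨Unit, inferInstance, fun _ => 1, fun _ => h1, by simp, fun c hc x => ?_⟩
    simpa using hc
  · refine ⟨Empty, inferInstance, fun x => x.elim, fun x => x.elim, ?_, fun c hc x => x.elim⟩
    rw [Set.range_eq_empty, Ideal.span_empty, ← Ideal.zero_eq_bot, zero_pow (Nat.succ_ne_zero j)]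

lemma pow_expand (J : Ideal B) (a : B) (j : ℕ) : ∀ y ∈ (J ⊔ Ideal.span {a}) ^ j,
    ∃ x : ℕ → B, (∀ i ≤ j, x i ∈ J ^ (j - i)) ∧ y = ∑ i ∈ Finset.range (j+1), a ^ i * x i := by
  induction j with
  | zero => intro y _; exact ⟨fun _ => y, by simp, by simp⟩
  | succ j ih =>
    intro y hy
    rw [pow_succ] at hy
    refine Submodule.mul_induction_on hy ?_ ?_
    · intro r hr s hs
      obtain ⟨x, hx, rfl⟩ := ih r hr
      obtain ⟨s', hs', t', ht', rfl⟩ := Submodule.mem_sup.1 hs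
      obtain ⟨t, rfl⟩ := Ideal.mem_span_singleton.1 ht'
      refine ⟨fun i => (if i ≤ j then x i * s' else 0) + (if i = 0 then 0 else x (i-1) * t), ?_, ?_⟩
      · intro i hi
        refine add_mem ?_ ?_
        · split_ifs with h
          · rw [Nat.sub_add_comm h, pow_succ]
            exact Ideal.mul_mem_mul (hx i h) hs'
          · exact zero_mem _
        · split_ifs with h
          · exact zero_mem _
          · have := hx (i-1) (by omega)
            rw [show j - (i-1) = j+1-i by omega] at this
            exact Ideal.mul_mem_right _ _ this
      · simp only [mul_add, Finset.sum_add_distrib]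
        rw [Finset.sum_range_succ (fun i => a ^ i * if i ≤ j then x i * s' else 0),
          if_neg (by omega), mul_zero, add_zero,
          Finset.sum_range_succ' (fun i => a ^ i * if i = 0 then 0 else x (i-1) * t)]
        simp only [if_pos, mul_zero, add_zero, Nat.add_sub_cancel, Nat.succ_ne_zero, if_false]
        rw [Finset.sum_mul, Finset.sum_mul]
        congr 1
        · refine Finset.sum_congr rfl fun i hi => ?_
          rw [if_pos (by rw [Finset.mem_range] at hi; omega)]; ring
        · exact Finset.sum_congr rfl fun i hi => by ring
    · rintro y y' ⟨x, hx, rfl⟩ ⟨x', hx', rfl⟩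
      refine ⟨fun i => x i + x' i, fun i hi => add_mem (hx i hi) (hx' i hi), ?_⟩
      simp only [mul_add, Finset.sum_add_distrib]

lemma pow_contract (J : Ideal B) (a : B) {i j : ℕ} (h : i ≤ j) {x : B} (hx : x ∈ J ^ (j-i)) :
    a ^ i * x ∈ (J ⊔ Ideal.span {a}) ^ j := by
  obtain ⟨k, rfl⟩ := Nat.exists_eq_add_of_le h
  rw [pow_add]
  refine Ideal.mul_mem_mul (Ideal.pow_mem_pow ?_ _) ?_
  · exact (le_sup_right : _ ≤ J ⊔ Ideal.span {a}) (Ideal.mem_span_singleton_self a)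
  · rw [Nat.add_sub_cancel_left] at hx
    exact Ideal.pow_right_mono le_sup_left _ hx

lemma QSys_nzd {Hm : ℕ → B → Prop} {J : Ideal B} (hJ : QSys Hm J) {a : B}
    (ha : ∀ x, a * x ∈ J → x ∈ J) (j : ℕ) : ∀ x, a * x ∈ J ^ j → x ∈ J ^ j := by
  induction j with
  | zero => simp
  | succ j ih =>
    intro x hx
    have h1 := ih x (Ideal.pow_le_pow_right (Nat.le_succ j) hx)
    obtain ⟨ι, _, M, _, hM, hI⟩ := hJ j
    rw [← hM, mem_span_range] at h1
    obtain ⟨c, rfl⟩ := h1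
    have := hI (fun x => a * c x) (by
      rw [Finset.mul_sum] at hx
      convert hx using 1
      exact Finset.sum_congr rfl fun i _ => by ring)
    refine Ideal.sum_mem _ fun i _ => ?_
    rw [pow_succ]
    refine Ideal.mul_mem_mul ?_ (ha _ (this i))
    rw [← hM]; exact Ideal.subset_span ⟨i, rfl⟩

lemma peel {J : Ideal B} {a : B} (ha : ∀ j x, a * x ∈ J ^ j → x ∈ J ^ j) (j : ℕ) (t : ℕ → B)
    (ht : ∀ i, t i ∈ J ^ (j - i)) (h0 : ∑ i ∈ Finset.range (j+2), a ^ i * t i = 0)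
    (i : ℕ) (hi : i ≤ j) : ∃ s ∈ J ^ (j - i), t i - a * s ∈ J ^ (j - i + 1) := by
  let r : ℕ → B := fun i => ∑ l ∈ Finset.range (j+2-i), a ^ l * t (i+l)
  have hr : ∀ i ≤ j+1, r i = t i + a * r (i+1) := by
    intro i hi
    simp only [r]
    rw [show j+2-i = (j+2-(i+1))+1 by omega, Finset.sum_range_succ', Finset.mul_sum]
    simp only [pow_zero, one_mul, add_zero]
    rw [add_comm]
    congr 1
    refine Finset.sum_congr rfl fun l _ => ?_
    rw [show i + (l+1) = i+1+l by ring]; ring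
  have h2 : ∀ i ≤ j+1, r i ∈ J ^ (j+1-i) := by
    intro i
    induction i with
    | zero => intro _; simp only [r, zero_add, Nat.sub_zero]; rw [h0]; exact zero_mem _
    | succ i ih =>
      intro hi
      have h3 := ih (by omega)
      have h4 := hr i (by omega)
      rw [show j+1-(i+1) = j-i by omega]
      apply ha
      have : a * r (i+1) = r i - t i := by rw [h4]; ring
      rw [this]
      exact sub_mem (Ideal.pow_le_pow_right (by omega) h3) (ht i)
  refine ⟨- r (i+1), ?_, ?_⟩
  · have := h2 (i+1) (by omega)
    rw [show j+1-(i+1) = j-i by omega] at this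
    exact neg_mem this
  · have := h2 i (by omega)
    rw [show j+1-i = j-i+1 by omega, hr i (by omega)] at this
    rwa [mul_neg, sub_neg_eq_add]

lemma QSys_step {Hm : ℕ → B → Prop} {J : Ideal B} (hJ : QSys Hm J) {a : B}
    (hH : ∀ i j x, Hm j x → Hm (i + j) (a ^ i * x))
    (ha : ∀ x, a * x ∈ J → x ∈ J) : QSys Hm (J ⊔ Ideal.span {a}) := by
  have hz := QSys_nzd hJ ha
  intro j
  choose ι fι M hM hspan hI using hJ
  refine ⟨Σ i : Fin (j+1), ι (j - i), inferInstance, fun x => a ^ (x.1 : ℕ) * M _ x.2, ?_, ?_, ?_⟩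
  · rintro ⟨i, x⟩
    have := hH i _ _ (hM (j - i) x)
    rwa [show (i : ℕ) + (j - i) = j by omega] at this
  · apply le_antisymm
    · rw [Ideal.span_le]
      rintro _ ⟨⟨i, x⟩, rfl⟩
      refine pow_contract J a (by omega) ?_
      rw [← hspan]; exact Ideal.subset_span ⟨x, rfl⟩
    · intro y hy
      obtain ⟨x, hx, rfl⟩ := pow_expand J a j y hy
      refine Ideal.sum_mem _ fun i hi => ?_
      rw [Finset.mem_range] at hi
      have := hx i (by omega)
      rw [← hspan, mem_span_range] at this
      obtain ⟨c, hc⟩ := this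
      rw [hc, Finset.mul_sum]
      refine Ideal.sum_mem _ fun k _ => ?_
      rw [← mul_assoc]
      exact Ideal.mul_mem_right _ _ (Ideal.subset_span ⟨⟨⟨i, hi⟩, k⟩, rfl⟩)
  · intro c hc
    rintro ⟨i, x⟩
    obtain ⟨y, hy, hy2⟩ := pow_expand J a (j+1) _ hc
    rw [Fintype.sum_sigma] at hy2
    let t : ℕ → B := fun i => (if h : i < j+1 then ∑ x, M (j-i) x * c ⟨⟨i, h⟩, x⟩ else 0)
      - (if i ≤ j+1 then y i else 0)
    have hsp : ∀ j (c : ι j → B), ∑ x, M j x * c x ∈ J ^ j := by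
      intro j c; rw [← hspan j]; exact (mem_span_range _ _).2 ⟨c, rfl⟩
    obtain ⟨s, hs, hs2⟩ := peel hz j t (by
      intro i
      refine sub_mem ?_ ?_
      · split_ifs with h
        · exact hsp (j-i) (fun x => c ⟨⟨i, h⟩, x⟩)
        · exact zero_mem _
      · split_ifs with h
        · exact Ideal.pow_le_pow_right (by omega) (hy i h)
        · exact zero_mem _) (by
      simp only [t, mul_sub, Finset.sum_sub_distrib]
      rw [sub_eq_zero, Finset.sum_range_succ, dif_neg (by omega), mul_zero, add_zero]
      rw [show ∑ i ∈ Finset.range (j+2), a ^ i * (if i ≤ j+1 then y i else 0) =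
        ∑ i ∈ Finset.range (j+1+1), a ^ i * y i from Finset.sum_congr rfl fun i hi => by
          rw [if_pos (by rw [Finset.mem_range] at hi; omega)]]
      rw [← hy2, Finset.sum_range]
      refine Finset.sum_congr rfl fun i _ => ?_
      rw [dif_pos i.2, Finset.mul_sum]
      exact Finset.sum_congr rfl fun x _ => by ring) i (by omega)
    simp only [t] at hs2
    rw [dif_pos i.2, if_pos (by omega)] at hs2
    obtain ⟨d, rfl⟩ := (mem_span_range _ _).1 (by rwa [← hspan] at hs)
    have h5 := hI _ (fun x => c ⟨i, x⟩ - a * d x) (by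
      have := add_mem hs2 (by
        have := hy i (by omega)
        rwa [show j + 1 - (i : ℕ) = j - i + 1 by omega] at this)
      convert this using 1
      simp only [mul_sub, Finset.sum_sub_distrib, Finset.mul_sum]
      have : ∀ x, M (j-i) x * (a * d x) = a * (M (j-i) x * d x) := fun x => by ring
      simp only [this, Fin.eta]
      ring) x
    have h6 := add_mem ((le_sup_left : J ≤ J ⊔ Ideal.span {a}) h5)
      (Ideal.mul_mem_right (d x) _ ((le_sup_right : _ ≤ J ⊔ Ideal.span {a})
        (Ideal.mem_span_singleton_self a)))
    simpa using h6
end qsys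

section reg
open MvPolynomial
variable {σ : Type} {K : Type} [Field K]

noncomputable def psi (v : σ) : MvPolynomial σ K →ₐ[K] Polynomial (MvPolynomial σ K) :=
  open scoped Classical in
  aeval (R := K) (fun u : σ => if u = v then Polynomial.X else Polynomial.C (X u))

lemma psi_self (v : σ) : psi (K := K) v (X v) = Polynomial.X := by simp [psi]
lemma psi_ne {v u : σ} (h : u ≠ v) : psi (K := K) v (X u) = Polynomial.C (X u) := by simp [psi, h]
lemma psi_eval (v : σ) (f : MvPolynomial σ K) : (psi v f).eval (X v) = f := by
  induction f using MvPolynomial.induction_on with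
  | C a =>
    have : psi v (C a : MvPolynomial σ K) = Polynomial.C (C a) := by simp [psi]
    rw [this]; simp
  | add f g hf hg => rw [map_add, Polynomial.eval_add, hf, hg]
  | mul_X f u hf =>
    rw [map_mul, Polynomial.eval_mul, hf]
    by_cases h : u = v
    · rw [h, psi_self]; simp
    · rw [psi_ne h]; simp

lemma psi_mem {v : σ} {S : Set (MvPolynomial σ K)} (hS : ∀ s ∈ S, psi v s = Polynomial.C s)
    (f : MvPolynomial σ K) : f ∈ Ideal.span S ↔ ∀ n, (psi v f).coeff n ∈ Ideal.span S := by
  constructor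
  · intro h
    rw [← Ideal.mem_map_C_iff, Ideal.map_span]
    have h2 := Ideal.mem_map_of_mem (psi (K := K) v).toRingHom h
    rw [Ideal.map_span] at h2
    have : (psi (K := K) v).toRingHom '' S = Polynomial.C '' S := Set.image_congr hS
    rw [this] at h2
    exact h2
  · intro h
    rw [← psi_eval v f, Polynomial.eval_eq_sum_range]
    exact Ideal.sum_mem _ fun i _ => Ideal.mul_mem_right _ _ (h i)

lemma mccoy_mem {v : σ} {S : Set (MvPolynomial σ K)} (hS : ∀ s ∈ S, psi v s = Polynomial.C s)
    {a p r : MvPolynomial σ K}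
    (ha : psi v a = Polynomial.C p * Polynomial.X + Polynomial.C r)
    (g : MvPolynomial σ K) (h : a * g ∈ Ideal.span S) (hp : psi v p = Polynomial.C p) :
    ∃ N, p ^ N * g ∈ Ideal.span S := by
  have h1 := (psi_mem hS _).1 h
  have h2 := mccoy (Ideal.Quotient.mk (Ideal.span S) p) (Ideal.Quotient.mk (Ideal.span S) r) _
    ((psi v g).map (Ideal.Quotient.mk (Ideal.span S))) le_rfl (by
      ext n
      have := Ideal.Quotient.eq_zero_iff_mem.2 (h1 n)
      rw [mul_comm a g, map_mul, ha, ← Polynomial.coeff_map] at this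
      simpa using this)
  refine ⟨((psi v g).map (Ideal.Quotient.mk (Ideal.span S))).natDegree + 1,
    (psi_mem hS _).2 fun n => ?_⟩
  rw [← Ideal.Quotient.eq_zero_iff_mem, ← Polynomial.coeff_map, map_mul, map_pow, hp]
  rw [Polynomial.map_mul, Polynomial.map_pow, Polynomial.map_C, h2, Polynomial.coeff_zero]
end reg

section reg2
open MvPolynomial
open scoped Fin.CommRing
variable (K : Type) [Field K] (q : ℕ)

lemma psi_z (c l i j) : psi (yv q c l) (zz K q i j) = Polynomial.C (zz K q i j) := by
  refine zz_ind K q (fun i j f => psi (yv q c l) f = Polynomial.C f) ?_ ?_ ?_ i j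
  · intro i; simp
  · intro i j h; exact psi_ne (zv_ne_yv q c l)
  · intro i j h; rw [map_neg, psi_ne (zv_ne_yv q c l), map_neg]

lemma psi_p (c l i) : psi (yv q c l) (pp (zz K q) i) = Polynomial.C (pp (zz K q) i) := by
  have h1 := pp_map (psi (K := K) (yv q c l)).toRingHom (zz K q) i
  have h2 := pp_map (Polynomial.C : BB K q →+* _) (zz K q) i
  rw [h2]
  refine (show psi (yv q c l) (pp (zz K q) i) = _ from h1).trans ?_
  congr 1
  funext a b
  exact psi_z K q c l a b

lemma psi_y (c l c' i) (h : yv q c' i ≠ yv q c l) :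
    psi (yv q c l) (yy K q c' i) = Polynomial.C (yy K q c' i) := by
  rw [yy_eq, psi_ne h]

lemma psi_a_ne {c c'} (l) (h : c' ≠ c) : psi (yv q c l) (aa K q c') = Polynomial.C (aa K q c') := by
  unfold aa
  rw [map_sum, map_sum]
  refine Finset.sum_congr rfl fun j _ => ?_
  rw [map_mul, map_mul, psi_p, psi_y]
  rw [Ne, yv_inj]; tauto

lemma psi_a (c l) : ∃ r, psi (yv q c l) (aa K q c) =
    Polynomial.C (pp (zz K q) l) * Polynomial.X + Polynomial.C r := by
  classical
  refine ⟨∑ j ∈ Finset.univ.erase l, yy K q c j * pp (zz K q) j, ?_⟩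
  unfold aa
  rw [← Finset.add_sum_erase _ _ (Finset.mem_univ l), map_add]
  congr 1
  · rw [map_mul, psi_p, yy_eq, psi_self]; ring
  · rw [map_sum, map_sum]
    refine Finset.sum_congr rfl fun j hj => ?_
    rw [map_mul, map_mul, psi_p, psi_y]
    rw [Ne, yv_inj]
    have := Finset.ne_of_mem_erase hj
    tauto

lemma aa_ne (c) : aa K q c ≠ 0 := by
  intro h
  obtain ⟨r, hr⟩ := psi_a K q c 0
  rw [h, map_zero] at hr
  have := congrArg (fun f => Polynomial.coeff f 1) hr
  simp [Polynomial.coeff_C] at this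
  exact pp_ne K q 0 this.symm

lemma reg_of_colon (c : Fin 3) (S : Set (BB K q))
    (hS : ∀ s ∈ S, ∃ c', c' ≠ c ∧ s = aa K q c')
    (hcol : ∀ h, (∀ l, pp (zz K q) l * h ∈ Ideal.span S) → h ∈ Ideal.span S)
    (g : BB K q) (hg : aa K q c * g ∈ Ideal.span S) : g ∈ Ideal.span S := by
  have h1 : ∀ l, ∃ N, pp (zz K q) l ^ N * g ∈ Ideal.span S := by
    intro l
    obtain ⟨r, hr⟩ := psi_a K q c l
    refine mccoy_mem (v := yv q c l) ?_ hr g hg (psi_p K q c l l)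
    intro s hs
    obtain ⟨c', hc', rfl⟩ := hS s hs
    exact psi_a_ne K q l hc'
  have h2 : PP K q ≤ ((Ideal.span S).colon {g}).radical := by
    unfold PP
    rw [Ideal.span_le]
    rintro _ ⟨l, rfl⟩
    obtain ⟨N, hN⟩ := h1 l
    refine ⟨N, ?_⟩
    rw [Submodule.mem_colon_singleton]; exact hN
  have hfg : (PP K q).FG := Submodule.fg_span (Set.finite_range _)
  obtain ⟨n, hn⟩ := Ideal.exists_pow_le_of_le_radical_of_fg h2 hfg
  have h3 : ∀ n, ∀ g, (∀ y ∈ PP K q ^ n, y * g ∈ Ideal.span S) → g ∈ Ideal.span S := by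
    intro n
    induction n with
    | zero => intro g h; simpa using h 1 (by simp)
    | succ n ih =>
      intro g h
      refine ih g fun y hy => hcol _ fun l => ?_
      have := h (y * pp (zz K q) l) (by
        rw [pow_succ]; exact Ideal.mul_mem_mul hy (Ideal.subset_span ⟨l, rfl⟩))
      rwa [mul_comm y, mul_assoc] at this
  refine h3 n g fun y hy => ?_
  have := hn hy
  rw [Submodule.mem_colon_singleton] at this
  exact this

lemma reg1 (g : BB K q) (hg : aa K q 1 * g ∈ Ideal.span {aa K q 0}) :
    g ∈ Ideal.span {aa K q 0} := by
  refine reg_of_colon K q 1 _ ?_ ?_ g hg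
  · rintro s rfl; exact ⟨0, by decide, rfl⟩
  · intro h hh
    simp only [Ideal.mem_span_singleton'] at hh ⊢
    choose c hc using hh
    obtain ⟨c', hc'⟩ := exK K q c (by
      intro k
      apply mul_right_cancel₀ (aa_ne K q 0)
      rw [Finset.sum_mul, zero_mul]
      calc _ = (∑ l, zz K q k l * pp (zz K q) l) * h := by
            rw [Finset.sum_mul]
            exact Finset.sum_congr rfl fun l _ => by rw [mul_assoc, hc l]; ring
        _ = 0 := by rw [Zp _ (zz_skew K q) (zz_diag K q), zero_mul])
    refine ⟨c', mul_left_cancel₀ (pp_ne K q 0) ?_⟩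
    rw [← hc 0, hc' 0]; ring

lemma reg2 (g : BB K q) (hg : aa K q 2 * g ∈ Ideal.span {aa K q 0, aa K q 1}) :
    g ∈ Ideal.span {aa K q 0, aa K q 1} := by
  refine reg_of_colon K q 2 _ ?_ ?_ g hg
  · rintro s (rfl | rfl)
    · exact ⟨0, by decide, rfl⟩
    · exact ⟨1, by decide, rfl⟩
  · intro h hh
    simp only [Ideal.mem_span_pair] at hh ⊢
    choose c d hcd using hh
    set a0 := aa K q 0
    set a1 := aa K q 1
    have hs : ∀ k, (∑ l, zz K q k l * c l) * a0 + (∑ l, zz K q k l * d l) * a1 = 0 := by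
      intro k
      rw [Finset.sum_mul, Finset.sum_mul, ← Finset.sum_add_distrib]
      calc _ = (∑ l, zz K q k l * pp (zz K q) l) * h := by
            rw [Finset.sum_mul]
            exact Finset.sum_congr rfl fun l _ => by
              rw [mul_assoc _ (pp (zz K q) l), ← hcd l]; ring
        _ = 0 := by rw [Zp _ (zz_skew K q) (zz_diag K q), zero_mul]
    have he : ∀ k, ∃ e, e * a0 = ∑ l, zz K q k l * d l := by
      intro k
      rw [← Ideal.mem_span_singleton']
      refine reg1 K q _ (Ideal.mem_span_singleton'.2 ⟨- ∑ l, zz K q k l * c l, ?_⟩)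
      linear_combination - hs k
    choose e he using he
    have he2 : ∀ k, ∑ l, zz K q k l * c l = - e k * a1 := by
      intro k
      apply mul_right_cancel₀ (aa_ne K q 0)
      linear_combination hs k + a1 * he k
    have hpe : ∑ k, pp (zz K q) k * e k = 0 := by
      apply mul_right_cancel₀ (aa_ne K q 0)
      rw [zero_mul, ← pZ K q d, Finset.sum_mul]
      exact Finset.sum_congr rfl fun k _ => by rw [← he k]; ring
    obtain ⟨u, hu⟩ := exE K q e hpe
    obtain ⟨c', hc'⟩ := exK K q (fun l => c l + a1 * u l) (by
      intro k
      simp only [mul_add, Finset.sum_add_distrib]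
      rw [he2 k, hu k, Finset.sum_congr rfl fun l _ => mul_left_comm _ _ _, ← Finset.mul_sum]
      ring)
    obtain ⟨d', hd'⟩ := exK K q (fun l => d l - a0 * u l) (by
      intro k
      simp only [mul_sub, Finset.sum_sub_distrib]
      rw [← he k, hu k, Finset.sum_congr rfl fun l _ => mul_left_comm _ _ _, ← Finset.mul_sum]
      ring)
    refine ⟨c', d', mul_left_cancel₀ (pp_ne K q 0) ?_⟩
    have h1 := hc' 0
    have h2 := hd' 0
    linear_combination hcd 0 - a0 * h1 - a1 * h2

noncomputable def JJ : Ideal (BB K q) := Ideal.span (Set.range (aa K q))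

lemma JJ_eq : JJ K q = ((⊥ ⊔ Ideal.span {aa K q 0}) ⊔ Ideal.span {aa K q 1}) ⊔
    Ideal.span {aa K q 2} := by
  unfold JJ
  rw [bot_sup_eq, ← Ideal.span_union, ← Ideal.span_union]
  congr 1
  ext x
  simp only [Set.mem_range, Fin.exists_fin_succ, Set.mem_union, Set.mem_singleton_iff]
  simp [eq_comm, or_assoc]

theorem QJ : QSys (fun j f => MvPolynomial.IsHomogeneous f ((q+2)*j)) (JJ K q) := by
  rw [JJ_eq]
  have hH : ∀ c (i j : ℕ) (x : BB K q), x.IsHomogeneous ((q+2)*j) →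
      (aa K q c ^ i * x).IsHomogeneous ((q+2)*(i+j)) := by
    intro c i j x hx
    rw [mul_add]
    exact ((aa_homog K q c).pow i).mul hx
  refine QSys_step (QSys_step (QSys_step (QSys_bot _ ?_) (hH 0) ?_) (hH 1) ?_) (hH 2) ?_
  · simpa using MvPolynomial.isHomogeneous_one _ _
  · intro x hx
    simp only [Ideal.mem_bot] at hx ⊢
    exact (mul_eq_zero.1 hx).resolve_left (aa_ne K q 0)
  · rw [bot_sup_eq]; exact reg1 K q
  · rw [bot_sup_eq, ← Ideal.span_union]; exact reg2 K q

lemma wP_le (f : BB K q) (hf : f ∈ PP K q) : ww K q * f ∈ JJ K q := by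
  obtain ⟨h, rfl⟩ := (mem_span_range _ _).1 hf
  rw [Finset.mul_sum]
  refine Ideal.sum_mem _ fun m _ => ?_
  rw [← mul_assoc]
  apply Ideal.mul_mem_right
  have e : ww K q * pp (zz K q) m =
      aa K q 0 * (∑ j, ∑ k, yy K q 1 j * yy K q 2 k * qq (zz K q) m j k) +
      aa K q 1 * (∑ i, ∑ k, yy K q 0 i * yy K q 2 k * qq (zz K q) i m k) +
      aa K q 2 * (∑ i, ∑ j, yy K q 0 i * yy K q 1 j * qq (zz K q) i j m) := by
    have e0 : ww K q * pp (zz K q) m = ∑ i, ∑ j, ∑ k, yy K q 0 i * yy K q 1 j * yy K q 2 k *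
        (pp (zz K q) i * qq (zz K q) m j k + pp (zz K q) j * qq (zz K q) i m k
          + pp (zz K q) k * qq (zz K q) i j m) := by
      unfold ww
      simp only [Finset.sum_mul]
      refine Finset.sum_congr rfl fun i _ => Finset.sum_congr rfl fun j _ =>
        Finset.sum_congr rfl fun k _ => ?_
      rw [← four_term _ (zz_skew K q) (zz_diag K q) m (pp_ne K q m)]; ring
    rw [e0]
    simp only [mul_add, Finset.sum_add_distrib]
    unfold aa
    congr 1
    · congr 1
      · rw [Finset.sum_mul]
        simp only [Finset.mul_sum]
        refine Finset.sum_congr rfl fun i _ => Finset.sum_congr rfl fun j _ =>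
          Finset.sum_congr rfl fun k _ => by ring
      · rw [Finset.sum_comm]
        rw [Finset.sum_mul]
        simp only [Finset.mul_sum]
        refine Finset.sum_congr rfl fun i _ => Finset.sum_congr rfl fun j _ =>
          Finset.sum_congr rfl fun k _ => by ring
    · rw [Finset.sum_congr rfl fun i _ => Finset.sum_comm, Finset.sum_comm]
      rw [Finset.sum_mul]
      simp only [Finset.mul_sum]
      refine Finset.sum_congr rfl fun i _ => Finset.sum_congr rfl fun j _ =>
          Finset.sum_congr rfl fun k _ => by ring
  rw [e]
  have ha : ∀ c, aa K q c ∈ JJ K q := fun c => Ideal.subset_span ⟨c, rfl⟩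
  exact add_mem (add_mem (Ideal.mul_mem_right _ _ (ha 0)) (Ideal.mul_mem_right _ _ (ha 1)))
    (Ideal.mul_mem_right _ _ (ha 2))

lemma JJ_le : JJ K q ≤ PP K q := by
  unfold JJ
  rw [Ideal.span_le]
  rintro _ ⟨c, rfl⟩
  unfold aa
  exact Ideal.sum_mem _ fun j _ => Ideal.mul_mem_left _ _ (Ideal.subset_span ⟨j, rfl⟩)
end reg2
end PfP

namespace PfP
section hom
variable {A : Type} [CommRing A] {K : Type} [Field K] (H : ℤ → AddSubgroup A) (κ : A →+* K)

structure GR : Prop where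
  mul : ∀ {i j : ℤ} {a b : A}, a ∈ H i → b ∈ H j → a * b ∈ H (i + j)
  one : (1 : A) ∈ H 0
  const : ∀ {j : ℤ} {a : A}, a ∈ H j → j ≠ 0 → κ a = 0
  ind : ∀ (P : A → Prop), P 0 → (∀ a b, P a → P b → P (a + b)) → (∀ j, ∀ a ∈ H j, P a) → ∀ a, P a
  comp : ∀ j, ∃ c : A →+ A, (∀ a ∈ H j, c a = a) ∧ ∀ j', j' ≠ j → ∀ a ∈ H j', c a = 0

def Fr {ι : Type} (σ : ι → ℤ) (j : ℤ) : AddSubgroup (ι →₀ A) where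
  carrier := {f | ∀ k, f k ∈ H (j - σ k)}
  add_mem' := fun ha hb k => add_mem (ha k) (hb k)
  zero_mem' := fun k => zero_mem _
  neg_mem' := fun ha k => neg_mem (ha k)

lemma mem_Fr {ι : Type} {σ : ι → ℤ} {j : ℤ} {f : ι →₀ A} :
    f ∈ Fr H σ j ↔ ∀ k, f k ∈ H (j - σ k) := Iff.rfl

def IsGr {M : Type} [AddCommGroup M] [Module A M] (ℳ : ℤ → AddSubgroup M) : Prop :=
  ∀ (i j : ℤ) (a : A) (x : M), a ∈ H i → x ∈ ℳ j → a • x ∈ ℳ (i + j)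

def kp {M : Type} [AddCommGroup M] [Module A M] (N : Submodule A M) (ℳ : ℤ → AddSubgroup M) :
    ℤ → AddSubgroup N := fun j => (ℳ j).comap N.subtype.toAddMonoidHom

lemma mem_kp {M : Type} [AddCommGroup M] [Module A M] {N : Submodule A M} {ℳ : ℤ → AddSubgroup M}
    {j : ℤ} {x : N} : x ∈ kp N ℳ j ↔ (x : M) ∈ ℳ j := Iff.rfl

/-- partial graded free resolutions -/
def Res (D : ℤ) : ℕ → (ℕ → Prop) → (ℕ → Set ℤ) → ∀ (M : Type) [AddCommGroup M] [Module A M],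
    (ℤ → AddSubgroup M) → Prop
  | 0, _, _, _, _, _, _ => True
  | n+1, C, S, M, _, _, ℳ => ∃ (ι : Type) (σ : ι → ℤ) (π : (ι →₀ A) →ₗ[A] M),
      (∀ j, ∀ f ∈ Fr H σ j, π f ∈ ℳ j) ∧ (∀ j, ∀ x ∈ ℳ j, ∃ f ∈ Fr H σ j, π f = x) ∧
      Set.range σ = S 0 ∧ (C 0 → ∀ x ∈ Fr H σ D, π x = 0 → ∀ k, κ (x k) = 0) ∧
      Res D n (fun k => C (k+1)) (fun k => S (k+1)) (LinearMap.ker π)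
        (kp (LinearMap.ker π) (Fr H σ))

variable {H κ}

lemma IsGr_Fr (hG : GR H κ) {ι : Type} (σ : ι → ℤ) : IsGr H (Fr H σ) := by
  intro i j a x ha hx k
  rw [Finsupp.smul_apply, smul_eq_mul, add_sub_assoc]
  exact hG.mul ha (hx k)

lemma IsGr_kp {M : Type} [AddCommGroup M] [Module A M] {N : Submodule A M}
    {ℳ : ℤ → AddSubgroup M} (h : IsGr H ℳ) : IsGr H (kp N ℳ) :=
  fun i j a x ha hx => h i j a x ha hx

lemma lc_graded {M : Type} [AddCommGroup M] [Module A M] {ℳ : ℤ → AddSubgroup M}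
    (hM : IsGr H ℳ) {ι : Type} {σ : ι → ℤ} {m : ι → M} (hm : ∀ k, m k ∈ ℳ (σ k)) (j : ℤ)
    (f : ι →₀ A) (hf : f ∈ Fr H σ j) : Finsupp.linearCombination A m f ∈ ℳ j := by
  rw [Finsupp.linearCombination_apply]
  refine AddSubgroup.sum_mem _ fun k _ => ?_
  have := hM _ _ _ _ (hf k) (hm k)
  rwa [sub_add_cancel] at this

lemma single_Fr (hG : GR H κ) {ι : Type} (σ : ι → ℤ) (k : ι) :
    Finsupp.single k (1 : A) ∈ Fr H σ (σ k) := by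
  classical
  intro k'
  rw [Finsupp.single_apply]
  split_ifs with h
  · rw [h, sub_self]; exact hG.one
  · exact zero_mem _

lemma Res_zero (D : ℤ) (n : ℕ) : ∀ (C : ℕ → Prop) (M : Type) [AddCommGroup M] [Module A M]
    (ℳ : ℤ → AddSubgroup M), (∀ x : M, x = 0) → Res H κ D n C (fun _ => ∅) M ℳ := by
  induction n with
  | zero => intros; trivial
  | succ n ih =>
    intro C M _ _ ℳ h0
    refine ⟨Empty, fun x => x.elim, 0, ?_, ?_, Set.range_eq_empty _, ?_, ih _ _ _ ?_⟩
    · intro j f _; exact zero_mem _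
    · intro j x _; exact ⟨0, zero_mem _, (h0 x).symm⟩
    · intro _ x _ _ k; exact k.elim
    · rintro ⟨x, _⟩; ext k; exact k.elim

lemma Res_shift (D : ℤ) (e : ℤ) (n : ℕ) : ∀ (S : ℕ → Set ℤ) (M : Type) [AddCommGroup M] [Module A M]
    (ℳ : ℤ → AddSubgroup M), Res H κ D n (fun _ => False) S M ℳ →
    Res H κ D n (fun _ => False) (fun k => (fun x => x + e) '' S k) M (fun j => ℳ (j - e)) := by
  induction n with
  | zero => intros; trivial
  | succ n ih =>
    rintro S M _ _ ℳ ⟨ι, σ, π, h1, h2, h3, -, h5⟩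
    have hF : ∀ j, Fr H (fun k => σ k + e) j = Fr H σ (j - e) := by
      intro j; ext f; simp only [mem_Fr]
      refine forall_congr' fun k => ?_
      rw [show j - (σ k + e) = j - e - σ k by ring]
    refine ⟨ι, fun k => σ k + e, π, ?_, ?_, ?_, fun h => h.elim, ?_⟩
    · intro j f hf; rw [hF] at hf; exact h1 _ f hf
    · intro j x hx; rw [hF]; exact h2 _ x hx
    · show (Set.range fun k => σ k + e) = (fun x => x + e) '' S 0
      rw [← h3, ← Set.range_comp]; rfl
    · have := ih _ _ _ h5
      have e2 : kp (LinearMap.ker π) (Fr H fun k => σ k + e) =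
          fun j => kp (LinearMap.ker π) (Fr H σ) (j - e) := by
        funext j; unfold kp; rw [hF]
      rw [e2]; exact this

theorem horse (hG : GR H κ) (D : ℤ) (n : ℕ) : ∀ (M' M M'' : Type) [AddCommGroup M'] [Module A M']
    [AddCommGroup M] [Module A M] [AddCommGroup M''] [Module A M'']
    (ℳ' : ℤ → AddSubgroup M') (ℳ : ℤ → AddSubgroup M) (ℳ'' : ℤ → AddSubgroup M'')
    (i : M' →ₗ[A] M) (p : M →ₗ[A] M'') (_ : IsGr H ℳ) (_ : Function.Injective i)
    (_ : ∀ x, p x = 0 ↔ ∃ y, i y = x) (_ : ∀ j x, x ∈ ℳ' j ↔ i x ∈ ℳ j)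
    (_ : ∀ j x, x ∈ ℳ j → p x ∈ ℳ'' j) (_ : ∀ j, ∀ y ∈ ℳ'' j, ∃ x ∈ ℳ j, p x = y)
    (S' S'' : ℕ → Set ℤ) (_ : Res H κ D n (fun _ => False) S' M' ℳ')
    (_ : Res H κ D n (fun _ => False) S'' M'' ℳ''),
    Res H κ D n (fun _ => False) (fun k => S' k ∪ S'' k) M ℳ := by
  induction n with
  | zero => intros; trivial
  | succ n ih =>
    intro M' M M'' _ _ _ _ _ _ ℳ' ℳ ℳ'' i p hgr hinj hex hi hp hs S' S'' R' R''
    obtain ⟨ι', σ', π', a1, a2, a3, -, a5⟩ := R'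
    obtain ⟨ι'', σ'', π'', b1, b2, b3, -, b5⟩ := R''
    have hl : ∀ k, ∃ x ∈ ℳ (σ'' k), p x = π'' (Finsupp.single k 1) := fun k =>
      hs _ _ (b1 _ _ (single_Fr hG σ'' k))
    choose l hl1 hl2 using hl
    let inL : (ι' →₀ A) →ₗ[A] (ι' ⊕ ι'' →₀ A) := Finsupp.lmapDomain A A Sum.inl
    let inR : (ι'' →₀ A) →ₗ[A] (ι' ⊕ ι'' →₀ A) := Finsupp.lmapDomain A A Sum.inr
    let pL : (ι' ⊕ ι'' →₀ A) →ₗ[A] (ι' →₀ A) := Finsupp.lcomapDomain Sum.inl Sum.inl_injective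
    let pR : (ι' ⊕ ι'' →₀ A) →ₗ[A] (ι'' →₀ A) := Finsupp.lcomapDomain Sum.inr Sum.inr_injective
    have iLl : ∀ f k, inL f (Sum.inl k) = f k := fun f k =>
      Finsupp.mapDomain_apply Sum.inl_injective _ _
    have iLr : ∀ f k, inL f (Sum.inr k) = 0 := fun f k =>
      Finsupp.mapDomain_of_notMem_range _ _ (by simp)
    have iRr : ∀ f k, inR f (Sum.inr k) = f k := fun f k =>
      Finsupp.mapDomain_apply Sum.inr_injective _ _
    have iRl : ∀ f k, inR f (Sum.inl k) = 0 := fun f k =>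
      Finsupp.mapDomain_of_notMem_range _ _ (by simp)
    have pLa : ∀ f k, pL f k = f (Sum.inl k) := fun f k => rfl
    have pRa : ∀ f k, pR f k = f (Sum.inr k) := fun f k => rfl
    have dec : ∀ f, f = inL (pL f) + inR (pR f) := by
      intro f
      ext (k | k)
      · rw [Finsupp.add_apply, iLl, iRl, pLa, add_zero]
      · rw [Finsupp.add_apply, iLr, iRr, pRa, zero_add]
    let π : (ι' ⊕ ι'' →₀ A) →ₗ[A] M :=
      Finsupp.linearCombination A (Sum.elim (fun k => i (π' (Finsupp.single k 1))) l)
    have πL : ∀ f, π (inL f) = i (π' f) := by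
      have : π ∘ₗ inL = i ∘ₗ π' := by
        ext k
        simp [π, inL, Finsupp.lmapDomain_apply, Finsupp.mapDomain_single]
      exact fun f => DFunLike.congr_fun this f
    have πR : ∀ f, p (π (inR f)) = π'' f := by
      have : p ∘ₗ π ∘ₗ inR = π'' := by
        ext k
        simp [π, inR, Finsupp.lmapDomain_apply, Finsupp.mapDomain_single, hl2]
      exact fun f => DFunLike.congr_fun this f
    have pi0 : ∀ y, p (i y) = 0 := fun y => (hex _).2 ⟨y, rfl⟩
    have pπ : ∀ f, p (π f) = π'' (pR f) := by
      intro f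
      conv_lhs => rw [dec f]
      rw [map_add, map_add, πL, pi0, πR, zero_add]
    let σ : ι' ⊕ ι'' → ℤ := Sum.elim σ' σ''
    have FrL : ∀ j f, inL f ∈ Fr H σ j ↔ f ∈ Fr H σ' j := by
      intro j f
      constructor
      · intro h k; have := h (Sum.inl k); rwa [iLl] at this
      · rintro h (k | k)
        · rw [iLl]; exact h k
        · rw [iLr]; exact zero_mem _
    have FrR : ∀ j f, f ∈ Fr H σ'' j → inR f ∈ Fr H σ j := by
      rintro j f h (k | k)
      · rw [iRl]; exact zero_mem _
      · rw [iRr]; exact h k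
    have hπ : ∀ j, ∀ f ∈ Fr H σ j, π f ∈ ℳ j := by
      intro j f hf
      refine lc_graded hgr (σ := σ) ?_ j f hf
      rintro (k | k)
      · exact (hi _ _).1 (a1 _ _ (single_Fr hG σ' k))
      · exact hl1 k
    refine ⟨ι' ⊕ ι'', σ, π, hπ, ?_, ?_, fun h => h.elim, ?_⟩
    · intro j x hx
      obtain ⟨f, hf, hf2⟩ := b2 j _ (hp j x hx)
      have h1 : p (x - π (inR f)) = 0 := by rw [map_sub, πR, hf2, sub_self]
      obtain ⟨y, hy⟩ := (hex _).1 h1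
      have hy2 : y ∈ ℳ' j := by
        rw [hi, hy]; exact sub_mem hx (hπ _ _ (FrR _ _ hf))
      obtain ⟨f', hf', hf2'⟩ := a2 j y hy2
      refine ⟨inL f' + inR f, add_mem ((FrL _ _).2 hf') (FrR _ _ hf), ?_⟩
      rw [map_add, πL, hf2', hy, sub_add_cancel]
    · show Set.range (Sum.elim σ' σ'') = _
      rw [Set.Sum.elim_range, a3, b3]
    · let ik : LinearMap.ker π' →ₗ[A] LinearMap.ker π :=
        (inL ∘ₗ (LinearMap.ker π').subtype).codRestrict _ (by
          rintro ⟨x, hx⟩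
          rw [LinearMap.mem_ker] at hx ⊢
          show π (inL x) = 0
          rw [πL, hx, map_zero])
      let pk : LinearMap.ker π →ₗ[A] LinearMap.ker π'' :=
        (pR ∘ₗ (LinearMap.ker π).subtype).codRestrict _ (by
          rintro ⟨x, hx⟩
          rw [LinearMap.mem_ker] at hx ⊢
          show π'' (pR x) = 0
          rw [← pπ, hx, map_zero])
      have ikv : ∀ x, (ik x : ι' ⊕ ι'' →₀ A) = inL x := fun x => rfl
      have pkv : ∀ x, (pk x : ι'' →₀ A) = pR x := fun x => rfl
      have inLinj : Function.Injective inL := Finsupp.mapDomain_injective Sum.inl_injective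
      refine ih _ _ _ (kp _ (Fr H σ')) _ (kp _ (Fr H σ'')) ik pk (IsGr_kp (IsGr_Fr hG σ)) ?_ ?_ ?_
        ?_ ?_ _ _ a5 b5
      · intro x y hxy
        have := congrArg Subtype.val hxy
        rw [ikv, ikv] at this
        exact Subtype.ext (inLinj this)
      · intro x
        constructor
        · intro h
          have h := congrArg Subtype.val h
          rw [pkv] at h
          have h2 : (x : ι' ⊕ ι'' →₀ A) = inL (pL x) := by
            conv_lhs => rw [dec x]
            rw [h]; simp
          refine ⟨⟨pL x, ?_⟩, Subtype.ext ?_⟩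
          · rw [LinearMap.mem_ker]
            apply hinj
            rw [← πL, ← h2, map_zero]
            exact x.2
          · rw [ikv]; exact h2.symm
        · rintro ⟨y, rfl⟩
          apply Subtype.ext
          rw [pkv, ikv]
          ext k
          rw [pRa, iLr]; rfl
      · intro j x
        rw [mem_kp, mem_kp, ikv, FrL]
      · intro j x hx k
        exact hx (Sum.inr k)
      · rintro j ⟨y, hy⟩ hy2
        have hy3 : y ∈ Fr H σ'' j := hy2
        rw [LinearMap.mem_ker] at hy
        have h1 : p (π (inR y)) = 0 := by rw [πR, hy]
        obtain ⟨z, hz⟩ := (hex _).1 h1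
        have hz2 : z ∈ ℳ' j := by rw [hi, hz]; exact hπ _ _ (FrR _ _ hy3)
        obtain ⟨f', hf', hf2'⟩ := a2 j z hz2
        refine ⟨⟨inR y - inL f', ?_⟩, sub_mem (FrR _ _ hy3) ((FrL _ _).2 hf'), Subtype.ext ?_⟩
        · rw [LinearMap.mem_ker, map_sub, πL, hf2', hz, sub_self]
        · rw [pkv]
          ext k
          rw [pRa]
          show (inR y - inL f') (Sum.inr k) = _
          rw [Finsupp.sub_apply, iRr, iLr, sub_zero]

def coneS (S S' : ℕ → Set ℤ) : ℕ → Set ℤ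
  | 0 => S 0
  | k+1 => S (k+1) ∪ S' k

theorem cone (hG : GR H κ) (D : ℤ) (n : ℕ) (M' M M'' : Type) [AddCommGroup M'] [Module A M']
    [AddCommGroup M] [Module A M] [AddCommGroup M''] [Module A M'']
    (ℳ' : ℤ → AddSubgroup M') (ℳ : ℤ → AddSubgroup M) (ℳ'' : ℤ → AddSubgroup M'')
    (i : M' →ₗ[A] M) (p : M →ₗ[A] M'') (hinj : Function.Injective i)
    (hex : ∀ x, p x = 0 ↔ ∃ y, i y = x) (hi : ∀ j x, x ∈ ℳ' j ↔ i x ∈ ℳ j)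
    (hp : ∀ j x, x ∈ ℳ j → p x ∈ ℳ'' j) (hs : ∀ j, ∀ y ∈ ℳ'' j, ∃ x ∈ ℳ j, p x = y)
    (S' S : ℕ → Set ℤ) (R' : Res H κ D n (fun _ => False) S' M' ℳ')
    (R : Res H κ D (n+1) (fun _ => False) S M ℳ) :
    Res H κ D (n+1) (fun _ => False) (coneS S S') M'' ℳ'' := by
  obtain ⟨ι, σ, π, a1, a2, a3, -, a5⟩ := R
  refine ⟨ι, σ, p ∘ₗ π, fun j f hf => hp _ _ (a1 _ _ hf), ?_, a3, fun h => h.elim, ?_⟩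
  · intro j y hy
    obtain ⟨x, hx, rfl⟩ := hs j y hy
    obtain ⟨f, hf, rfl⟩ := a2 j x hx
    exact ⟨f, hf, rfl⟩
  · let ik : LinearMap.ker π →ₗ[A] LinearMap.ker (p ∘ₗ π) :=
      (LinearMap.ker π).subtype.codRestrict _ (by
        rintro ⟨x, hx⟩
        rw [LinearMap.mem_ker] at hx ⊢
        show p (π x) = 0
        rw [hx, map_zero])
    have hr : ∀ x : LinearMap.ker (p ∘ₗ π), π x ∈ LinearMap.range i := by
      rintro ⟨x, hx⟩
      obtain ⟨y, hy⟩ := (hex _).1 (LinearMap.mem_ker.1 hx)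
      exact ⟨y, hy⟩
    let pk : LinearMap.ker (p ∘ₗ π) →ₗ[A] M' :=
      (LinearEquiv.ofInjective i hinj).symm.toLinearMap ∘ₗ
        (π ∘ₗ (LinearMap.ker (p ∘ₗ π)).subtype).codRestrict (LinearMap.range i) hr
    have hpk : ∀ x, i (pk x) = π x := by
      intro x
      have := congrArg Subtype.val (LinearEquiv.apply_symm_apply (LinearEquiv.ofInjective i hinj)
        ⟨π x, hr x⟩)
      exact this
    refine horse hG D n _ _ _ (kp _ (Fr H σ)) _ ℳ' ik pk (IsGr_kp (IsGr_Fr hG σ)) ?_ ?_ ?_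
      ?_ ?_ (fun k => S (k+1)) S' a5 R'
    · intro x y hxy
      have := congrArg Subtype.val hxy
      exact Subtype.ext this
    · intro x
      constructor
      · intro h
        refine ⟨⟨x, ?_⟩, rfl⟩
        rw [LinearMap.mem_ker, ← hpk, h, map_zero]
      · rintro ⟨y, rfl⟩
        apply hinj
        rw [hpk, map_zero]
        exact y.2
    · intro j x; rfl
    · intro j x hx
      rw [hi, hpk]; exact a1 _ _ hx
    · intro j y hy
      obtain ⟨f, hf, hf2⟩ := a2 j _ ((hi _ _).1 hy)
      refine ⟨⟨f, ?_⟩, hf, hinj ?_⟩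
      · rw [LinearMap.mem_ker]; show p (π f) = 0; rw [hf2]; exact (hex _).2 ⟨y, rfl⟩
      · rw [hpk]; exact hf2

/-- elements of degree `D` with no generators of degree `D` -/
lemma Fr_const (hG : GR H κ) {ι : Type} {σ : ι → ℤ} {D : ℤ} (h : D ∉ Set.range σ) {f : ι →₀ A}
    (hf : f ∈ Fr H σ D) (k : ι) : κ (f k) = 0 :=
  hG.const (hf k) (fun h0 => h ⟨k, by linarith⟩)

lemma const_map {ι ι' : Type} (φ : (ι →₀ A) →ₗ[A] (ι' →₀ A)) (f : ι →₀ A)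
    (hf : ∀ k, κ (f k) = 0) (k : ι') : κ (φ f k) = 0 := by
  have : φ f = Finsupp.linearCombination A (fun k => φ (Finsupp.single k 1)) f := by
    have : φ = Finsupp.linearCombination A (fun k => φ (Finsupp.single k 1)) := by
      ext k; simp
    conv_lhs => rw [this]
  rw [this, Finsupp.linearCombination_apply, Finsupp.sum, Finsupp.finsetSum_apply, map_sum]
  refine Finset.sum_eq_zero fun x _ => ?_
  rw [Finsupp.smul_apply, smul_eq_mul, map_mul, hf, zero_mul]

lemma Res_flags (hG : GR H κ) (D : ℤ) (n : ℕ) : ∀ (S : ℕ → Set ℤ) (M : Type) [AddCommGroup M]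
    [Module A M] (ℳ : ℤ → AddSubgroup M), Res H κ D n (fun _ => False) S M ℳ →
    Res H κ D n (fun i => i + 1 < n ∧ (D ∉ S i ∨ D ∉ S (i+1))) S M ℳ := by
  induction n with
  | zero => intros; trivial
  | succ n ih =>
    rintro S M _ _ ℳ ⟨ι, σ, π, h1, h2, h3, -, h5⟩
    refine ⟨ι, σ, π, h1, h2, h3, ?_, ?_⟩
    · rintro ⟨hn, h | h⟩ x hx hx0 k
      · exact Fr_const hG (by rwa [h3]) hx k
      · rcases n with _ | n
        · omega
        · obtain ⟨ι', σ', π', c1, c2, c3, -, -⟩ := h5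
          obtain ⟨f, hf, hf2⟩ := c2 D ⟨x, hx0⟩ hx
          have : x = ((LinearMap.ker π).subtype ∘ₗ π') f := by
            show x = (π' f : ι →₀ A)
            rw [hf2]
          rw [this]
          refine const_map _ _ (fun k' => Fr_const hG (D := D) (σ := σ') ?_ hf k') k
          rw [c3]; exact h
    · have := ih _ _ _ h5
      have e : (fun k => k + 1 + 1 < n + 1 ∧ (D ∉ S (k+1) ∨ D ∉ S (k+1+1))) =
          fun i => i + 1 < n ∧ (D ∉ S (i+1) ∨ D ∉ S (i+1+1)) := by
        funext k; simp
      show Res H κ D n (fun k => k + 1 + 1 < n + 1 ∧ (D ∉ S (k+1) ∨ D ∉ S (k+1+1))) _ _ _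
      rw [e]; exact this

theorem cmp (hG : GR H κ) (D : ℤ) (i : ℕ) : ∀ (C C' : ℕ → Prop) (S T : ℕ → Set ℤ) (M N : Type)
    [AddCommGroup M] [Module A M] [AddCommGroup N] [Module A N]
    (ℳ : ℤ → AddSubgroup M) (𝒩 : ℤ → AddSubgroup N)
    (_ : Res H κ D (i+1) C S M ℳ) (_ : Res H κ D (i+1) C' T N 𝒩)
    (f : M →ₗ[A] N) (g : N →ₗ[A] M) (_ : ∀ j, ∀ x ∈ ℳ j, f x ∈ 𝒩 j)
    (_ : ∀ j, ∀ x ∈ 𝒩 j, g x ∈ ℳ j)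
    (Λ : Type) (τ : Λ → ℤ) (u : (Λ →₀ A) →ₗ[A] M) (v : M →ₗ[A] (Λ →₀ A))
    (_ : ∀ j, ∀ x ∈ Fr H τ j, u x ∈ ℳ j) (_ : ∀ j, ∀ x ∈ ℳ j, v x ∈ Fr H τ j)
    (_ : ∀ x, x - g (f x) = u (v x))
    (_ : i = 0 → ∀ x ∈ ℳ D, ∀ k, κ (v x k) = 0)
    (_ : ∀ i', i = i' + 1 → C i') (_ : C i) (_ : D ∈ S i), D ∈ T i := by
  induction i with
  | zero =>
    intro C C' S T M N _ _ _ _ ℳ 𝒩 RM RN f g hf hg Λ τ u v hu hv huv hv0 _ hC hD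
    obtain ⟨ι, σ, π, a1, a2, a3, a4, -⟩ := RM
    obtain ⟨ι', σ', π', b1, b2, b3, -, -⟩ := RN
    by_contra hT
    rw [← a3] at hD
    obtain ⟨k, hk⟩ := hD
    have hx := a1 _ _ (single_Fr hG σ k)
    rw [hk] at hx
    set x := π (Finsupp.single k 1) with hxdef
    obtain ⟨y, hy, hy2⟩ := b2 D _ (hf _ _ hx)
    have hgl : ∀ k', ∃ t ∈ Fr H σ (σ' k'), π t = g (π' (Finsupp.single k' 1)) := fun k' =>
      a2 _ _ (hg _ _ (b1 _ _ (single_Fr hG σ' k')))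
    choose gl hgl1 hgl2 using hgl
    have hul : ∀ k', ∃ t ∈ Fr H σ (τ k'), π t = u (Finsupp.single k' 1) := fun k' =>
      a2 _ _ (hu _ _ (single_Fr hG τ k'))
    choose ul hul1 hul2 using hul
    let gt := Finsupp.linearCombination A gl
    let ut := Finsupp.linearCombination A ul
    have hgt : ∀ z, π (gt z) = g (π' z) := by
      have : π ∘ₗ gt = g ∘ₗ π' := by ext k; simp [gt, hgl2]
      exact fun z => DFunLike.congr_fun this z
    have hut : ∀ z, π (ut z) = u z := by
      have : π ∘ₗ ut = u := by ext k; simp [ut, hul2]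
      exact fun z => DFunLike.congr_fun this z
    have t0 : π (Finsupp.single k 1 - (gt y + ut (v x))) = 0 := by
      rw [map_sub, map_add, hgt, hut, hy2, ← huv, ← hxdef]; abel
    have t1 : gt y + ut (v x) ∈ Fr H σ D :=
      add_mem (lc_graded (IsGr_Fr hG σ) hgl1 _ _ hy)
        (lc_graded (IsGr_Fr hG σ) hul1 _ _ (hv _ _ hx))
    have t2 : Finsupp.single k 1 - (gt y + ut (v x)) ∈ Fr H σ D := by
      refine sub_mem ?_ t1
      rw [← hk]; exact single_Fr hG σ k
    have := a4 hC _ t2 t0 k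
    rw [Finsupp.sub_apply, Finsupp.add_apply, map_sub, map_add,
      const_map gt y (fun k' => Fr_const hG (by rwa [b3]) hy k') k,
      const_map ut (v x) (fun k' => hv0 rfl _ hx k') k] at this
    simp at this
  | succ i ih =>
    intro C C' S T M N _ _ _ _ ℳ 𝒩 RM RN f g hf hg Λ τ u v hu hv huv hv0 hC1 hC hD
    obtain ⟨ι, σ, π, a1, a2, a3, a4, a5⟩ := RM
    obtain ⟨ι', σ', π', b1, b2, b3, -, b5⟩ := RN
    have hgl : ∀ k', ∃ t ∈ Fr H σ (σ' k'), π t = g (π' (Finsupp.single k' 1)) := fun k' =>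
      a2 _ _ (hg _ _ (b1 _ _ (single_Fr hG σ' k')))
    choose gl hgl1 hgl2 using hgl
    have hfl : ∀ k', ∃ t ∈ Fr H σ' (σ k'), π' t = f (π (Finsupp.single k' 1)) := fun k' =>
      b2 _ _ (hf _ _ (a1 _ _ (single_Fr hG σ k')))
    choose fl hfl1 hfl2 using hfl
    have hul : ∀ k', ∃ t ∈ Fr H σ (τ k'), π t = u (Finsupp.single k' 1) := fun k' =>
      a2 _ _ (hu _ _ (single_Fr hG τ k'))
    choose ul hul1 hul2 using hul
    let gt := Finsupp.linearCombination A gl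
    let ft := Finsupp.linearCombination A fl
    let ut := Finsupp.linearCombination A ul
    have hgt : ∀ z, π (gt z) = g (π' z) := by
      have : π ∘ₗ gt = g ∘ₗ π' := by ext k; simp [gt, hgl2]
      exact fun z => DFunLike.congr_fun this z
    have hft : ∀ z, π' (ft z) = f (π z) := by
      have : π' ∘ₗ ft = f ∘ₗ π := by ext k; simp [ft, hfl2]
      exact fun z => DFunLike.congr_fun this z
    have hut : ∀ z, π (ut z) = u z := by
      have : π ∘ₗ ut = u := by ext k; simp [ut, hul2]
      exact fun z => DFunLike.congr_fun this z
    have ftg : ∀ j, ∀ x ∈ Fr H σ j, ft x ∈ Fr H σ' j := lc_graded (IsGr_Fr hG σ') hfl1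
    have gtg : ∀ j, ∀ x ∈ Fr H σ' j, gt x ∈ Fr H σ j := lc_graded (IsGr_Fr hG σ) hgl1
    have utg : ∀ j, ∀ x ∈ Fr H τ j, ut x ∈ Fr H σ j := lc_graded (IsGr_Fr hG σ) hul1
    let fk : LinearMap.ker π →ₗ[A] LinearMap.ker π' :=
      (ft ∘ₗ (LinearMap.ker π).subtype).codRestrict _ (by
        rintro ⟨x, hx⟩
        rw [LinearMap.mem_ker] at hx ⊢
        show π' (ft x) = 0
        rw [hft, hx, map_zero])
    let gk : LinearMap.ker π' →ₗ[A] LinearMap.ker π :=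
      (gt ∘ₗ (LinearMap.ker π').subtype).codRestrict _ (by
        rintro ⟨x, hx⟩
        rw [LinearMap.mem_ker] at hx ⊢
        show π (gt x) = 0
        rw [hgt, hx, map_zero])
    let hk : (ι →₀ A) →ₗ[A] LinearMap.ker π :=
      (LinearMap.id - gt ∘ₗ ft - ut ∘ₗ v ∘ₗ π).codRestrict _ (by
        intro x
        rw [LinearMap.mem_ker]
        show π (x - gt (ft x) - ut (v (π x))) = 0
        rw [map_sub, map_sub, hgt, hft, hut, ← huv, sub_self])
    have hD' : D ∈ (fun k => S (k+1)) i := hD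
    refine ih _ _ _ (fun k => T (k+1)) _ _ _ _ a5 b5 fk gk ?_ ?_ ι σ hk (LinearMap.ker π).subtype
      ?_ ?_ ?_ ?_ ?_ hC hD'
    · intro j x hx; exact ftg _ _ hx
    · intro j x hx; exact gtg _ _ hx
    · intro j x hx
      show x - gt (ft x) - ut (v (π x)) ∈ Fr H σ j
      exact sub_mem (sub_mem hx (gtg _ _ (ftg _ _ hx))) (utg _ _ (hv _ _ (a1 _ _ hx)))
    · intro j x hx; exact hx
    · rintro ⟨x, hx⟩
      apply Subtype.ext
      rw [LinearMap.mem_ker] at hx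
      show x - gt (ft x) = x - gt (ft x) - ut (v (π x))
      rw [hx, map_zero, map_zero, sub_zero]
    · rintro rfl ⟨x, hx⟩ hx2 k
      exact a4 (hC1 0 rfl) x hx2 hx k
    · rintro i' rfl
      exact hC1 (i'+1) rfl

/-- comparison for the same module -/
theorem cmp_self (hG : GR H κ) (D : ℤ) (i : ℕ) (C C' : ℕ → Prop) (S T : ℕ → Set ℤ) (M : Type)
    [AddCommGroup M] [Module A M] (ℳ : ℤ → AddSubgroup M)
    (h1 : Res H κ D (i+1) C S M ℳ) (h2 : Res H κ D (i+1) C' T M ℳ)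
    (hC1 : ∀ i', i = i' + 1 → C i') (hC : C i) (hD : D ∈ S i) : D ∈ T i := by
  refine cmp hG D i C C' S T M M ℳ ℳ h1 h2 LinearMap.id LinearMap.id (fun _ _ h => h)
    (fun _ _ h => h) Empty (fun x => x.elim) 0 0 ?_ ?_ ?_ ?_ hC1 hC hD
  · intro j x _; exact zero_mem _
  · intro j x _; exact zero_mem _
  · intro x; simp
  · intro _ x _ k; exact k.elim

/-! strictness from projections -/
lemma GR.comp_mem (hG : GR H κ) {j : ℤ} {c : A →+ A} (h1 : ∀ a ∈ H j, c a = a)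
    (h2 : ∀ j', j' ≠ j → ∀ a ∈ H j', c a = 0) (a : A) : c a ∈ H j := by
  refine hG.ind (fun a => c a ∈ H j) (by simp) (fun a b ha hb => by
    rw [map_add]; exact add_mem ha hb) ?_ a
  intro j' a ha
  by_cases h : j' = j
  · subst h; rw [h1 a ha]; exact ha
  · rw [h2 j' h a ha]; exact zero_mem _

def HasProj {M : Type} [AddCommGroup M] (ℳ : ℤ → AddSubgroup M) : Prop :=
  ∀ j, ∃ c : M →+ M, (∀ a ∈ ℳ j, c a = a) ∧ ∀ j', j' ≠ j → ∀ a ∈ ℳ j', c a = 0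

lemma strict (hG : GR H κ) {M : Type} [AddCommGroup M] [Module A M] {ℳ : ℤ → AddSubgroup M}
    (hP : HasProj ℳ) {ι : Type} {σ : ι → ℤ} (ψ : (ι →₀ A) →ₗ[A] M)
    (hψ : ∀ j, ∀ f ∈ Fr H σ j, ψ f ∈ ℳ j) (j : ℤ) (x : M) (hx : x ∈ ℳ j) (f : ι →₀ A)
    (hf : ψ f = x) : ∃ f' ∈ Fr H σ j, ψ f' = x := by
  classical
  obtain ⟨c, hc1, hc2⟩ := hP j
  suffices h : ∀ f, ∃ f' ∈ Fr H σ j, ψ f' = c (ψ f) by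
    obtain ⟨f', h1, h2⟩ := h f
    exact ⟨f', h1, by rw [h2, hf, hc1 x hx]⟩
  intro f
  induction f using Finsupp.induction_linear with
  | zero => exact ⟨0, zero_mem _, by simp⟩
  | add f g hf hg =>
    obtain ⟨f', h1, h2⟩ := hf
    obtain ⟨g', h3, h4⟩ := hg
    exact ⟨f' + g', add_mem h1 h3, by simp [h2, h4]⟩
  | single k a =>
    refine hG.ind (fun a => ∃ f' ∈ Fr H σ j, ψ f' = c (ψ (Finsupp.single k a))) ?_ ?_ ?_ a
    · exact ⟨0, zero_mem _, by simp⟩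
    · rintro a b ⟨f', h1, h2⟩ ⟨g', h3, h4⟩
      exact ⟨f' + g', add_mem h1 h3, by simp [h2, h4, Finsupp.single_add]⟩
    · intro j' a ha
      have hm : Finsupp.single k a ∈ Fr H σ (j' + σ k) := by
        intro k'
        rw [Finsupp.single_apply]
        split_ifs with h
        · rw [← h, add_sub_cancel_right]; exact ha
        · exact zero_mem _
      by_cases h : j' + σ k = j
      · rw [h] at hm
        exact ⟨_, hm, (hc1 _ (hψ _ _ hm)).symm⟩
      · exact ⟨0, zero_mem _, by rw [map_zero, hc2 _ h _ (hψ _ _ hm)]⟩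

lemma HasProj_Fr (hG : GR H κ) {ι : Type} (σ : ι → ℤ) : HasProj (Fr H σ) := by
  intro j
  choose c h1 h2 using hG.comp
  refine ⟨{ toFun := fun f => Finsupp.onFinset f.support (fun k => c (j - σ k) (f k)) ?_
            map_zero' := ?_
            map_add' := ?_ }, ?_, ?_⟩
  · intro k hk
    rw [Finsupp.mem_support_iff]
    rintro h0
    exact hk (by rw [h0, map_zero])
  · ext k; simp
  · intro f g; ext k; simp
  · intro f hf; ext k; exact h1 _ _ (hf k)
  · intro j' hj f hf; ext k
    exact h2 _ _ (by omega) _ (hf k)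

/-- the kernel of a map generated by a graded map of free modules -/
lemma Res_cons (hG : GR H κ) (D : ℤ) (n : ℕ) {ι κ' : Type} {σ : ι → ℤ} {τ : κ' → ℤ}
    (N : Submodule A (ι →₀ A)) (ψ : (κ' →₀ A) →ₗ[A] (ι →₀ A))
    (hψ : ∀ j, ∀ f ∈ Fr H τ j, ψ f ∈ Fr H σ j) (hr : LinearMap.range ψ = N)
    (C : ℕ → Prop) (hC : C 0 → ∀ x, ψ x = 0 → ∀ k, κ (x k) = 0) (S : ℕ → Set ℤ)
    (hS : Set.range τ = S 0)
    (h : Res H κ D n (fun k => C (k+1)) (fun k => S (k+1)) (LinearMap.ker ψ)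
      (kp (LinearMap.ker ψ) (Fr H τ))) :
    Res H κ D (n+1) C S N (kp N (Fr H σ)) := by
  have hmem : ∀ x, ψ x ∈ N := fun x => hr ▸ ⟨x, rfl⟩
  refine ⟨κ', τ, ψ.codRestrict N hmem, hψ, ?_, hS, ?_, ?_⟩
  · rintro j ⟨x, hx⟩ hx2
    obtain ⟨f, hf⟩ : x ∈ LinearMap.range ψ := hr ▸ hx
    obtain ⟨f', h1, h2⟩ := strict hG (HasProj_Fr hG σ) ψ hψ j x hx2 f hf
    exact ⟨f', h1, Subtype.ext h2⟩
  · intro h0 x _ hx k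
    exact hC h0 x (congrArg Subtype.val hx) k
  · have e : LinearMap.ker (ψ.codRestrict N hmem) = LinearMap.ker ψ := LinearMap.ker_codRestrict ..
    rw [e]; exact h

lemma Res_trunc (D : ℤ) (n : ℕ) : ∀ (n' : ℕ) (_ : n ≤ n') (C : ℕ → Prop) (S : ℕ → Set ℤ) (M : Type)
    [AddCommGroup M] [Module A M] (ℳ : ℤ → AddSubgroup M), Res H κ D n' C S M ℳ →
    Res H κ D n C S M ℳ := by
  induction n with
  | zero => intros; trivial
  | succ n ih =>
    intro n' hn C S M _ _ ℳ h
    obtain ⟨n', rfl⟩ : ∃ k, n' = k + 1 := ⟨n' - 1, by omega⟩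
    obtain ⟨ι, σ, π, h1, h2, h3, h4, h5⟩ := h
    exact ⟨ι, σ, π, h1, h2, h3, h4, ih n' (by omega) _ _ _ _ h5⟩
end hom
end PfP

namespace PfP
section quo
variable {A : Type} [CommRing A] {K : Type} [Field K] {H : ℤ → AddSubgroup A} {κ : A →+* K}

def HI (H : ℤ → AddSubgroup A) (E : Ideal A) : Prop :=
  ∃ s : Set A, E = Ideal.span s ∧ ∀ x ∈ s, ∃ j, x ∈ H j

lemma HI_bot : HI H (⊥ : Ideal A) := ⟨∅, by simp, by simp⟩

lemma HI_sup {E E' : Ideal A} (h : HI H E) (h' : HI H E') : HI H (E ⊔ E') := by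
  obtain ⟨s, rfl, hs⟩ := h
  obtain ⟨s', rfl, hs'⟩ := h'
  refine ⟨s ∪ s', (Ideal.span_union _ _).symm, ?_⟩
  rintro x (hx | hx)
  · exact hs x hx
  · exact hs' x hx

lemma HI_span (s : Set A) (h : ∀ x ∈ s, ∃ j, x ∈ H j) : HI H (Ideal.span s) := ⟨s, rfl, h⟩

lemma HI.comp (hG : GR H κ) {E : Ideal A} (h : HI H E) {j : ℤ} {c : A →+ A}
    (h1 : ∀ a ∈ H j, c a = a) (h2 : ∀ j', j' ≠ j → ∀ a ∈ H j', c a = 0) (f : A) (hf : f ∈ E) :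
    c f ∈ E := by
  obtain ⟨s, rfl, hs⟩ := h
  refine Submodule.span_induction (p := fun f _ => ∀ a : A, c (a * f) ∈ Ideal.span s) ?_ ?_ ?_ ?_
    hf 1 |> fun h => by simpa using h
  · intro x hx a
    obtain ⟨e, he⟩ := hs x hx
    refine hG.ind (fun a => c (a * x) ∈ Ideal.span s) (by simp) ?_ ?_ a
    · intro a b ha hb
      rw [add_mul, map_add]; exact add_mem ha hb
    · intro i a ha
      have := hG.mul ha he
      by_cases h : i + e = j
      · rw [h1 _ (h ▸ this)]
        exact Ideal.mul_mem_left _ _ (Ideal.subset_span hx)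
      · rw [h2 _ h _ this]; exact zero_mem _
  · intro a; simp
  · intro x y _ _ hx hy a
    rw [mul_add, map_add]; exact add_mem (hx a) (hy a)
  · intro r x _ hx a
    rw [smul_eq_mul, ← mul_assoc]; exact hx _

def QP (H : ℤ → AddSubgroup A) (E : Ideal A) (j : ℤ) : AddSubgroup (A ⧸ E) :=
  (H j).map (E.mkQ).toAddMonoidHom

lemma mem_QP {E : Ideal A} {j : ℤ} {x : A ⧸ E} : x ∈ QP H E j ↔ ∃ a ∈ H j, E.mkQ a = x := Iff.rfl

lemma mkQ_eq0 {E : Ideal A} {a : A} : E.mkQ a = 0 ↔ a ∈ E := Submodule.Quotient.mk_eq_zero _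

lemma mkQ_eq {E : Ideal A} {a b : A} : E.mkQ a = E.mkQ b ↔ a - b ∈ E := Submodule.Quotient.eq _

lemma IsGr_QP (hG : GR H κ) (E : Ideal A) : IsGr H (QP H E) := by
  rintro i j a x ha ⟨b, hb, rfl⟩
  exact ⟨a * b, hG.mul ha hb, rfl⟩

lemma HasProj_QP (hG : GR H κ) {E : Ideal A} (hE : HI H E) : HasProj (QP H E) := by
  intro j
  obtain ⟨c, h1, h2⟩ := hG.comp j
  have hs : ∀ x : A ⧸ E, ∃ a, E.mkQ a = x := Submodule.mkQ_surjective E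
  choose o ho using hs
  have key : ∀ a, E.mkQ (c (o (E.mkQ a))) = E.mkQ (c a) := by
    intro a
    rw [mkQ_eq, ← map_sub]
    exact hE.comp hG h1 h2 _ (mkQ_eq.1 (ho _))
  refine ⟨{ toFun := fun x => E.mkQ (c (o x)), map_zero' := ?_, map_add' := ?_ }, ?_, ?_⟩
  · have := key 0
    rw [map_zero, map_zero, map_zero] at this; exact this
  · intro x y
    have := key (o x + o y)
    rw [map_add, ho, ho, map_add, map_add] at this; exact this
  · rintro _ ⟨a, ha, rfl⟩
    show E.mkQ (c (o (E.mkQ a))) = E.mkQ a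
    rw [key, h1 a ha]
  · rintro j' hj _ ⟨a, ha, rfl⟩
    show E.mkQ (c (o (E.mkQ a))) = 0
    rw [key, h2 j' hj a ha, map_zero]

def mulQ (g : A) (E Q : Ideal A) (h : ∀ x ∈ Q, g * x ∈ E) : (A ⧸ Q) →ₗ[A] (A ⧸ E) :=
  Submodule.mapQ Q E (LinearMap.mulLeft A g) (fun x hx => h x hx)

lemma mulQ_mk (g : A) (E Q : Ideal A) (h : ∀ x ∈ Q, g * x ∈ E) (a : A) :
    mulQ g E Q h (Q.mkQ a) = E.mkQ (g * a) := rfl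

lemma mulQ_inj (g : A) (E Q : Ideal A) (h : ∀ x, x ∈ Q ↔ g * x ∈ E) :
    Function.Injective (mulQ g E Q fun x => (h x).1) := by
  rw [← LinearMap.ker_eq_bot, LinearMap.ker_eq_bot']
  intro m hm
  obtain ⟨a, rfl⟩ := Submodule.mkQ_surjective Q m
  rw [mulQ_mk, mkQ_eq0] at hm
  rw [mkQ_eq0]; exact (h a).2 hm

lemma mulQ_ex (g : A) (E Q : Ideal A) (h : ∀ x, x ∈ Q ↔ g * x ∈ E) (x : A ⧸ E) :
    Submodule.factor (le_sup_left : E ≤ E ⊔ Ideal.span {g}) x = 0 ↔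
      ∃ y, mulQ g E Q (fun x => (h x).1) y = x := by
  obtain ⟨a, rfl⟩ := Submodule.mkQ_surjective E x
  have e : Submodule.factor (le_sup_left : E ≤ E ⊔ Ideal.span {g}) (E.mkQ a) =
    (E ⊔ Ideal.span {g}).mkQ a := rfl
  rw [e, mkQ_eq0]
  constructor
  · intro h'
    obtain ⟨y, hy, z, hz, rfl⟩ := Submodule.mem_sup.1 h'
    obtain ⟨b, rfl⟩ := Ideal.mem_span_singleton'.1 hz
    refine ⟨Q.mkQ b, ?_⟩
    rw [mulQ_mk, mkQ_eq]
    have : g * b - (y + b * g) = -y := by ring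
    rw [this]; exact neg_mem hy
  · rintro ⟨y, hy⟩
    obtain ⟨b, rfl⟩ := Submodule.mkQ_surjective Q y
    rw [mulQ_mk, mkQ_eq] at hy
    have : a = -(g * b - a) + b * g := by ring
    rw [this]
    exact add_mem (Ideal.mem_sup_left (neg_mem hy))
      (Ideal.mem_sup_right (Ideal.mem_span_singleton'.2 ⟨b, rfl⟩))

lemma comp_mul (hG : GR H κ) {g : A} {e j : ℤ} (hg : g ∈ H e) {c c' : A →+ A}
    (h1 : ∀ a ∈ H j, c a = a) (h2 : ∀ j', j' ≠ j → ∀ a ∈ H j', c a = 0)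
    (h1' : ∀ a ∈ H (j - e), c' a = a) (h2' : ∀ j', j' ≠ j - e → ∀ a ∈ H j', c' a = 0) (a : A) :
    c (g * a) = g * c' a := by
  refine hG.ind (fun a => c (g * a) = g * c' a) (by simp) ?_ ?_ a
  · intro a b ha hb
    rw [mul_add, map_add, map_add, mul_add, ha, hb]
  · intro i a ha
    have := hG.mul hg ha
    by_cases h : i = j - e
    · subst h
      rw [h1' a ha, h1 _ (by rwa [add_sub_cancel] at this)]
    · rw [h2' i h a ha, h2 _ (by omega) _ this, mul_zero]

lemma mulQ_gr (hG : GR H κ) (g : A) (e : ℤ) (hg : g ∈ H e) (E Q : Ideal A) (hE : HI H E)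
    (h : ∀ x, x ∈ Q ↔ g * x ∈ E) (j : ℤ) (x : A ⧸ Q) :
    x ∈ QP H Q (j - e) ↔ mulQ g E Q (fun x => (h x).1) x ∈ QP H E j := by
  constructor
  · rintro ⟨a, ha, rfl⟩
    refine ⟨g * a, ?_, rfl⟩
    have := hG.mul hg ha
    rwa [add_sub_cancel] at this
  · rintro ⟨b, hb, hb2⟩
    obtain ⟨a, rfl⟩ := Submodule.mkQ_surjective Q x
    rw [mulQ_mk] at hb2
    have hb2 := mkQ_eq.1 hb2
    obtain ⟨c, h1, h2⟩ := hG.comp j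
    obtain ⟨c', h1', h2'⟩ := hG.comp (j - e)
    refine ⟨c' a, hG.comp_mem h1' h2' a, mkQ_eq.2 ?_⟩
    rw [h]
    have k := hE.comp hG h1 h2 _ hb2
    rw [map_sub, comp_mul hG hg h1 h2 h1' h2' a, h1 b hb] at k
    have : g * (c' a - a) = (b - g * a) - (b - g * c' a) := by ring
    rw [this]; exact sub_mem hb2 k

/-- `A ⧸ E` has a free resolution with generator degrees `S` -/
def RS (H : ℤ → AddSubgroup A) (κ : A →+* K) (E : Ideal A) (S : ℕ → Set ℤ) : Prop :=
  ∀ D n, Res H κ D n (fun _ => False) S (A ⧸ E) (QP H E)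

def sh (e : ℤ) (S : ℕ → Set ℤ) : ℕ → Set ℤ := fun k => (fun x => x + e) '' S k

lemma RS_horse (hG : GR H κ) (g : A) (e : ℤ) (hg : g ∈ H e) (E Q : Ideal A) (hE : HI H E)
    (h : ∀ x, x ∈ Q ↔ g * x ∈ E) (S S' : ℕ → Set ℤ) (hQ : RS H κ Q S)
    (hE' : RS H κ (E ⊔ Ideal.span {g}) S') : RS H κ E (fun k => sh e S k ∪ S' k) := by
  intro D n
  refine horse hG D n _ _ _ (fun j => QP H Q (j - e)) _ _ (mulQ g E Q fun x => (h x).1)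
    (Submodule.factor (le_sup_left : E ≤ E ⊔ Ideal.span {g})) (IsGr_QP hG E) (mulQ_inj g E Q h)
    (mulQ_ex g E Q h) (mulQ_gr hG g e hg E Q hE h) ?_ ?_ (sh e S) S' ?_ (hE' D n)
  · rintro j _ ⟨a, ha, rfl⟩; exact ⟨a, ha, rfl⟩
  · rintro j _ ⟨a, ha, rfl⟩; exact ⟨E.mkQ a, ⟨a, ha, rfl⟩, rfl⟩
  · exact Res_shift D e n S _ _ (hQ D n)

lemma RS_cone (hG : GR H κ) (g : A) (e : ℤ) (hg : g ∈ H e) (E Q : Ideal A) (hE : HI H E)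
    (h : ∀ x, x ∈ Q ↔ g * x ∈ E) (S S' : ℕ → Set ℤ) (hQ : RS H κ Q S)
    (hE' : RS H κ E S') : RS H κ (E ⊔ Ideal.span {g}) (coneS S' (sh e S)) := by
  intro D n
  rcases n with _ | n
  · trivial
  refine cone hG D n _ _ _ (fun j => QP H Q (j - e)) _ _ (mulQ g E Q fun x => (h x).1)
    (Submodule.factor (le_sup_left : E ≤ E ⊔ Ideal.span {g})) (mulQ_inj g E Q h)
    (mulQ_ex g E Q h) (mulQ_gr hG g e hg E Q hE h) ?_ ?_ (sh e S) S' ?_ (hE' D (n+1))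
  · rintro j _ ⟨a, ha, rfl⟩; exact ⟨a, ha, rfl⟩
  · rintro j _ ⟨a, ha, rfl⟩; exact ⟨E.mkQ a, ⟨a, ha, rfl⟩, rfl⟩
  · exact Res_shift D e n S _ _ (hQ D n)

lemma RS_top : RS H κ (⊤ : Ideal A) (fun _ => ∅) := by
  intro D n
  refine Res_zero D n _ _ _ ?_
  intro x
  obtain ⟨a, rfl⟩ := Submodule.mkQ_surjective _ x
  rw [mkQ_eq0]; trivial

/-- resolution of a cyclic module from a resolution of the ideal -/
lemma Res_cyc (E : Ideal A) (D : ℤ) (n : ℕ) (S : ℕ → Set ℤ) (hS : S 0 = {0})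
    (h : Res H κ D n (fun _ => False) (fun k => S (k+1))
      (LinearMap.ker (E.mkQ ∘ₗ Finsupp.lapply (R := A) ()))
      (kp (LinearMap.ker (E.mkQ ∘ₗ Finsupp.lapply (R := A) ())) (Fr H (fun _ : Unit => (0:ℤ))))) :
    Res H κ D (n+1) (fun _ => False) S (A ⧸ E) (QP H E) := by
  refine ⟨Unit, fun _ => 0, E.mkQ ∘ₗ Finsupp.lapply (R := A) (), ?_, ?_, ?_, fun h => h.elim, h⟩
  · intro j f hf
    have := hf ()
    rw [sub_zero] at this
    exact ⟨f (), this, rfl⟩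
  · rintro j _ ⟨a, ha, rfl⟩
    refine ⟨Finsupp.single () a, ?_, ?_⟩
    · intro k; rw [sub_zero]
      have : Finsupp.single () a k = a := by simp
      rw [this]; exact ha
    · show E.mkQ (Finsupp.single () a ()) = E.mkQ a
      simp
  · rw [hS]; simp

lemma RS_bot : RS H κ (⊥ : Ideal A) (fun k => if k = 0 then {0} else ∅) := by
  intro D n
  rcases n with _ | n
  · trivial
  refine Res_cyc ⊥ D n _ (by simp) ?_
  simp only [Nat.succ_ne_zero, if_false]
  refine Res_zero D n _ _ _ ?_
  rintro ⟨x, hx⟩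
  have : x () ∈ (⊥ : Ideal A) := mkQ_eq0.1 hx
  ext
  simpa using this

lemma mem_span_image {ι : Type} [Fintype ι] (M : ι → A) (p : Set ι) (f : A)
    (hf : f ∈ Ideal.span (M '' p)) : ∃ c : ι → A, (∀ x, x ∉ p → c x = 0) ∧ f = ∑ x, M x * c x := by
  classical
  refine Submodule.span_induction (p := fun f _ => ∃ c : ι → A, (∀ x, x ∉ p → c x = 0) ∧
    f = ∑ x, M x * c x) ?_ ?_ ?_ ?_ hf
  · rintro _ ⟨x, hx, rfl⟩
    refine ⟨Pi.single x 1, ?_, ?_⟩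
    · intro y hy
      rw [Pi.single_eq_of_ne]
      rintro rfl; exact hy hx
    · simp [Pi.single_apply]
  · exact ⟨0, by simp, by simp⟩
  · rintro _ _ _ _ ⟨c, h1, rfl⟩ ⟨c', h1', rfl⟩
    refine ⟨c + c', fun x hx => by simp [h1 x hx, h1' x hx], ?_⟩
    simp [mul_add, Finset.sum_add_distrib]
  · rintro a _ _ ⟨c, h1, rfl⟩
    refine ⟨fun x => a * c x, fun x hx => by simp [h1 x hx], ?_⟩
    rw [smul_eq_mul, Finset.mul_sum]
    exact Finset.sum_congr rfl fun x _ => by ring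

/-- colon ideals in a chain -/
lemma colon_chain {ι : Type} [Fintype ι] (E0 Q : Ideal A) (M : ι → A)
    (hc : ∀ c : ι → A, ∑ x, M x * c x ∈ E0 → ∀ x, c x ∈ Q) (hQ : ∀ x, ∀ f ∈ Q, M x * f ∈ E0)
    (p : Set ι) (a : ι) (ha : a ∉ p) (g : A) :
    g ∈ Q ↔ M a * g ∈ E0 ⊔ Ideal.span (M '' p) := by
  classical
  constructor
  · intro h; exact Ideal.mem_sup_left (hQ a g h)
  · intro h
    obtain ⟨y, hy, z, hz, hyz⟩ := Submodule.mem_sup.1 h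
    obtain ⟨c, h1, rfl⟩ := mem_span_image M p z hz
    have := hc (Pi.single a g - c) (by
      simp only [Pi.sub_apply, mul_sub, Finset.sum_sub_distrib]
      have e : ∑ x, M x * (Pi.single a g : ι → A) x = M a * g := by simp [Pi.single_apply]
      rw [e, ← hyz, add_sub_cancel_right]; exact hy) a
    simpa [h1 a ha] using this

/-- going down a chain -/
lemma chain_down (hG : GR H κ) {ι : Type} [Fintype ι] (E0 Q : Ideal A) (M : ι → A) (e : ℤ)
    (hM : ∀ x, M x ∈ H e) (hE : HI H E0)
    (hc : ∀ c : ι → A, ∑ x, M x * c x ∈ E0 → ∀ x, c x ∈ Q) (hQ : ∀ x, ∀ f ∈ Q, M x * f ∈ E0)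
    (S S' : ℕ → Set ℤ) (hS : RS H κ Q S) (hS' : RS H κ (E0 ⊔ Ideal.span (Set.range M)) S') :
    ∃ T, RS H κ E0 T ∧ ∀ k, T k ⊆ sh e S k ∪ S' k := by
  classical
  have key : ∀ t : Finset ι, ∃ T, RS H κ (E0 ⊔ Ideal.span (M '' {x | x ∉ t})) T ∧
      ∀ k, T k ⊆ sh e S k ∪ S' k := by
    intro t
    induction t using Finset.induction_on with
    | empty =>
      refine ⟨S', ?_, fun k => Set.subset_union_right⟩
      simpa using hS'
    | insert a t hat ih =>
      obtain ⟨T, hT, hT2⟩ := ih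
      have e1 : {x | x ∉ t} = insert a {x | x ∉ insert a t} := by
        ext x
        by_cases h : x = a
        · subst h; simp [hat]
        · simp [h]
      rw [e1, Set.image_insert_eq, Ideal.span_insert, sup_comm (Ideal.span {M a}), ← sup_assoc] at hT
      refine ⟨_, RS_horse hG (M a) e (hM a) _ Q ?_
        (colon_chain E0 Q M hc hQ _ a (by simp)) S T hS hT, ?_⟩
      · refine HI_sup hE (HI_span _ ?_)
        rintro _ ⟨x, _, rfl⟩; exact ⟨e, hM x⟩
      · intro k
        exact Set.union_subset Set.subset_union_left (hT2 k)
  obtain ⟨T, h1, h2⟩ := key Finset.univ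
  exact ⟨T, by simpa using h1, h2⟩

/-- going up a chain -/
lemma chain_up (hG : GR H κ) {ι : Type} [Fintype ι] (E0 Q : Ideal A) (M : ι → A) (e : ℤ)
    (hM : ∀ x, M x ∈ H e) (hE : HI H E0)
    (hc : ∀ c : ι → A, ∑ x, M x * c x ∈ E0 → ∀ x, c x ∈ Q) (hQ : ∀ x, ∀ f ∈ Q, M x * f ∈ E0)
    (S S' : ℕ → Set ℤ) (hS : RS H κ Q S) (hS' : RS H κ E0 S') :
    ∃ T, RS H κ (E0 ⊔ Ideal.span (Set.range M)) T ∧ T 0 ⊆ S' 0 ∧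
      (∀ k, T (k+1) ⊆ S' (k+1) ∪ sh e S k) ∧ (Nonempty ι → ∀ k, sh e S k ⊆ T (k+1)) := by
  classical
  have key : ∀ t : Finset ι, ∃ T, RS H κ (E0 ⊔ Ideal.span (M '' {x | x ∈ t})) T ∧ T 0 ⊆ S' 0 ∧
      (∀ k, T (k+1) ⊆ S' (k+1) ∪ sh e S k) ∧ (t.Nonempty → ∀ k, sh e S k ⊆ T (k+1)) := by
    intro t
    induction t using Finset.induction_on with
    | empty =>
      refine ⟨S', ?_, subset_rfl, fun k => Set.subset_union_left, by simp⟩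
      simpa using hS'
    | insert a t hat ih =>
      obtain ⟨T, hT, hT0, hT2, -⟩ := ih
      have e1 : {x | x ∈ insert a t} = insert a {x | x ∈ t} := by
        ext x; simp
      rw [e1, Set.image_insert_eq, Ideal.span_insert, sup_comm (Ideal.span {M a}), ← sup_assoc]
      refine ⟨_, RS_cone hG (M a) e (hM a) _ Q ?_
        (colon_chain E0 Q M hc hQ _ a (by simpa using hat)) S T hS hT, hT0, ?_, ?_⟩
      · refine HI_sup hE (HI_span _ ?_)
        rintro _ ⟨x, _, rfl⟩; exact ⟨e, hM x⟩
      · intro k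
        exact Set.union_subset (hT2 k) Set.subset_union_right
      · intro _ k
        exact Set.subset_union_right
  obtain ⟨T, h1, h2, h3, h4⟩ := key Finset.univ
  exact ⟨T, by simpa using h1, h2, h3, fun h => h4 Finset.univ_nonempty⟩
end quo
end PfP

namespace PfP
section gr
open MvPolynomial
variable (V : Type) (K : Type) [Field K]

noncomputable def Hh (j : ℤ) : AddSubgroup (MvPolynomial V K) :=
  (zg (homogeneousSubmodule V K) j).toAddSubgroup

variable {V K}
lemma mem_Hh {j : ℤ} {a : MvPolynomial V K} :
    a ∈ Hh V K j ↔ (0 ≤ j ∧ a.IsHomogeneous j.toNat) ∨ (j < 0 ∧ a = 0) := by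
  show a ∈ zg (homogeneousSubmodule V K) j ↔ _
  unfold zg
  split_ifs with h
  · simp [h, mem_homogeneousSubmodule]
  · simp [h, not_le.1 h]

lemma mem_Hh_nat {n : ℕ} {a : MvPolynomial V K} (h : a.IsHomogeneous n) : a ∈ Hh V K (n : ℤ) :=
  mem_Hh.2 (Or.inl ⟨by positivity, by simpa using h⟩)

lemma GRH : GR (Hh V K) (constantCoeff (σ := V) (R := K)) where
  mul := by
    intro i j a b ha hb
    rw [mem_Hh] at ha hb
    rcases ha with ⟨hi, ha⟩ | ⟨hi, rfl⟩
    · rcases hb with ⟨hj, hb⟩ | ⟨hj, rfl⟩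
      · rw [mem_Hh]; left
        refine ⟨by omega, ?_⟩
        rw [Int.toNat_add hi hj]; exact ha.mul hb
      · rw [mul_zero]; exact zero_mem _
    · rw [zero_mul]; exact zero_mem _
  one := mem_Hh.2 (Or.inl ⟨le_rfl, isHomogeneous_one _ _⟩)
  const := by
    intro j a ha hj
    rw [mem_Hh] at ha
    rcases ha with ⟨hi, ha⟩ | ⟨hi, rfl⟩
    · rw [constantCoeff_eq]
      refine ha.coeff_eq_zero ?_
      simp; omega
    · simp
  ind := by
    intro P h0 ha hh a
    rw [← sum_homogeneousComponent a]
    refine Finset.sum_induction _ P ha h0 ?_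
    intro i _
    exact hh i _ (mem_Hh_nat (homogeneousComponent_isHomogeneous i a))
  comp := by
    intro j
    by_cases hj : 0 ≤ j
    · refine ⟨(homogeneousComponent j.toNat).toAddMonoidHom, ?_, ?_⟩
      · intro a ha
        rcases mem_Hh.1 ha with ⟨hi, ha⟩ | ⟨hi, rfl⟩
        · show homogeneousComponent j.toNat a = a
          rw [homogeneousComponent_of_mem ha, if_pos rfl]
        · simp
      · intro j' hj' a ha
        rcases mem_Hh.1 ha with ⟨hi, ha⟩ | ⟨hi, rfl⟩
        · show homogeneousComponent j.toNat a = 0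
          rw [homogeneousComponent_of_mem ha, if_neg (by omega)]
        · simp
    · refine ⟨0, ?_, fun _ _ _ _ => rfl⟩
      intro a ha
      rcases mem_Hh.1 ha with ⟨hi, ha⟩ | ⟨hi, rfl⟩
      · omega
      · simp
end gr

section res
open MvPolynomial
variable (K : Type) [Field K] (q : ℕ)

abbrev RSB (E : Ideal (BB K q)) (S : ℕ → Set ℤ) : Prop :=
  RS (Hh (PairVar (2*q+6)) K) (constantCoeff (σ := PairVar (2*q+6)) (R := K)) E S

def TJ (d : ℤ) (r : ℕ) : ℕ → Set ℤ := fun k => {x | k ≤ r ∧ x = d * k}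

lemma cone_TJ (d : ℤ) (r : ℕ) (T : ℕ → Set ℤ) (h : ∀ k, T k ⊆ TJ d r k) (k : ℕ) :
    coneS T (sh d T) k ⊆ TJ d (r+1) k := by
  rcases k with _ | k
  · intro x hx
    obtain ⟨_, h2⟩ := h 0 hx
    exact ⟨by omega, h2⟩
  · rintro x (hx | ⟨y, hy, rfl⟩)
    · obtain ⟨h1, h2⟩ := h _ hx
      exact ⟨by omega, h2⟩
    · obtain ⟨h1, h2⟩ := h _ hy
      refine ⟨by omega, ?_⟩
      show y + d = _
      rw [h2]; push_cast; ring

lemma aa_H (c) : aa K q c ∈ Hh (PairVar (2*q+6)) K ((q:ℤ)+2) := by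
  have := mem_Hh_nat (aa_homog K q c)
  push_cast at this; exact this

lemma RS_J : ∃ T, RSB K q (JJ K q) T ∧ ∀ k, T k ⊆ TJ (q+2) 3 k := by
  have h1 : HI (Hh (PairVar (2*q+6)) K) (⊥ ⊔ Ideal.span {aa K q 0}) :=
    HI_sup HI_bot (HI_span _ (by rintro _ rfl; exact ⟨_, aa_H K q 0⟩))
  have h2 := HI_sup h1 (HI_span {aa K q 1} (by rintro _ rfl; exact ⟨_, aa_H K q 1⟩))
  have r0 : RSB K q ⊥ _ := RS_bot
  have r1 : RSB K q _ _ := RS_cone GRH (aa K q 0) _ (aa_H K q 0) ⊥ ⊥ HI_bot (by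
    intro x; simp [aa_ne K q 0]) _ _ r0 r0
  have r2 : RSB K q _ _ := RS_cone GRH (aa K q 1) _ (aa_H K q 1) _ _ h1 (by
    intro x
    refine ⟨fun h => Ideal.mul_mem_left _ _ h, fun h => ?_⟩
    rw [bot_sup_eq] at h ⊢
    exact reg1 K q x h) _ _ r1 r1
  have r3 : RSB K q _ _ := RS_cone GRH (aa K q 2) _ (aa_H K q 2) _ _ h2 (by
    intro x
    refine ⟨fun h => Ideal.mul_mem_left _ _ h, fun h => ?_⟩
    have e : (⊥ ⊔ Ideal.span {aa K q 0}) ⊔ Ideal.span {aa K q 1} =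
      Ideal.span {aa K q 0, aa K q 1} := by
      rw [bot_sup_eq, Ideal.span_insert]
    rw [e] at h ⊢
    exact reg2 K q x h) _ _ r2 r2
  rw [← JJ_eq] at r3
  refine ⟨_, r3, ?_⟩
  refine cone_TJ _ 2 _ (cone_TJ _ 1 _ (cone_TJ _ 0 _ ?_))
  intro k x hx
  rcases k with _ | k
  · refine ⟨le_rfl, ?_⟩
    simpa using hx
  · simp at hx

def TP : ℕ → Set ℤ
  | 0 => {0}
  | 1 => {(q:ℤ)+1}
  | 2 => {(q:ℤ)+2}
  | 3 => {2*(q:ℤ)+3}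
  | _+4 => ∅

lemma mem_H_of {n : ℕ} {z : ℤ} {a : BB K q} (h : a.IsHomogeneous n) (hz : z = n) :
    a ∈ Hh (PairVar (2*q+6)) K z := by
  subst hz; exact mem_Hh_nat h

noncomputable def fs (v : Fin (2*q+3) → BB K q) : Fin (2*q+3) →₀ BB K q :=
  Finsupp.equivFunOnFinite.symm v

lemma fs_apply (v : Fin (2*q+3) → BB K q) (k) : fs K q v k = v k := rfl

lemma lc_fin {M : Type} [AddCommGroup M] [Module (BB K q) M] (m : Fin (2*q+3) → M)
    (f : Fin (2*q+3) →₀ BB K q) :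
    Finsupp.linearCombination (BB K q) m f = ∑ k, f k • m k := by
  rw [Finsupp.linearCombination_apply, Finsupp.sum_fintype]
  intro i; simp

lemma RS_P : RSB K q (PP K q) (TP q) := by
  intro D n
  have hG := GRH (V := PairVar (2*q+6)) (K := K)
  rcases n with _ | n
  · trivial
  refine Res_cyc (PP K q) D n _ rfl ?_
  rcases n with _ | n
  · trivial
  let m1 : Fin (2*q+3) → (Unit →₀ BB K q) := fun k => Finsupp.single () (pp (zz K q) k)
  let ψ1 := Finsupp.linearCombination (BB K q) m1
  let m2 : Fin (2*q+3) → (Fin (2*q+3) →₀ BB K q) := fun k => fs K q (fun l => zz K q l k)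
  let ψ2 := Finsupp.linearCombination (BB K q) m2
  let ψ3 := Finsupp.linearCombination (BB K q) (fun _ : Unit => fs K q (pp (zz K q)))
  have e1 : ∀ f, ψ1 f () = ∑ k, pp (zz K q) k * f k := by
    intro f
    show Finsupp.linearCombination (BB K q) m1 f () = _
    rw [lc_fin, Finsupp.finsetSum_apply]
    refine Finset.sum_congr rfl fun k _ => ?_
    simp [m1, mul_comm]
  have e2 : ∀ f l, ψ2 f l = ∑ k, zz K q l k * f k := by
    intro f l
    show Finsupp.linearCombination (BB K q) m2 f l = _
    rw [lc_fin, Finsupp.finsetSum_apply]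
    refine Finset.sum_congr rfl fun k _ => ?_
    rw [Finsupp.smul_apply, smul_eq_mul]
    show f k * zz K q l k = _
    ring
  have e3 : ∀ f k, ψ3 f k = pp (zz K q) k * f () := by
    intro f k
    show Finsupp.linearCombination (BB K q) (fun _ : Unit => fs K q (pp (zz K q))) f k = _
    rw [Finsupp.linearCombination_apply, Finsupp.sum_fintype _ _ (by simp)]
    simp [fs_apply, mul_comm]
  refine Res_cons hG D n (τ := fun _ : Fin (2*q+3) => (q:ℤ)+1) _ ψ1 ?_ ?_ _ (fun h => h.elim) _ ?_ ?_
  · refine lc_graded (IsGr_Fr hG _) ?_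
    intro k _
    rw [sub_zero]
    simp only [m1, Finsupp.single_eq_same]
    exact mem_H_of K q (pp_homog K q k) (by push_cast; ring)
  · ext x
    have hx : x ∈ LinearMap.ker ((PP K q).mkQ ∘ₗ Finsupp.lapply (R := BB K q) ()) ↔
      x () ∈ PP K q := mkQ_eq0
    rw [hx]
    unfold PP
    rw [mem_span_range]
    constructor
    · rintro ⟨f, rfl⟩; exact ⟨f, e1 f⟩
    · rintro ⟨h, hh⟩
      refine ⟨fs K q h, ?_⟩
      ext
      rw [e1, hh]; rfl
  · show _ = ({(q:ℤ)+1} : Set ℤ)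
    exact Set.range_const
  rcases n with _ | n
  · trivial
  refine Res_cons hG D n (τ := fun _ : Fin (2*q+3) => (q:ℤ)+2) _ ψ2 ?_ ?_ _ (fun h => h.elim) _ ?_ ?_
  · refine lc_graded (IsGr_Fr hG _) ?_
    intro k l
    exact mem_H_of K q (Xmat_homog K _ _ _ : (zz K q l k).IsHomogeneous 1) (by push_cast; ring)
  · ext x
    rw [LinearMap.mem_ker]
    constructor
    · rintro ⟨f, rfl⟩
      ext
      rw [e1]
      simp only [e2]
      rw [pZ]; rfl
    · intro h
      have h0 := e1 x
      rw [h] at h0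
      obtain ⟨u, hu⟩ := exE K q x h0.symm
      refine ⟨fs K q u, ?_⟩
      ext1 l
      rw [e2, hu]; rfl
  · show _ = ({(q:ℤ)+2} : Set ℤ)
    exact Set.range_const
  rcases n with _ | n
  · trivial
  refine Res_cons hG D n (τ := fun _ : Unit => 2*(q:ℤ)+3) _ ψ3 ?_ ?_ _ (fun h => h.elim) _ ?_ ?_
  · refine lc_graded (IsGr_Fr hG _) ?_
    intro _ l
    exact mem_H_of K q (pp_homog K q l) (by push_cast; ring)
  · ext x
    rw [LinearMap.mem_ker]
    constructor
    · rintro ⟨f, rfl⟩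
      ext1 l
      rw [e2]
      simp only [e3, ← mul_assoc]
      rw [← Finset.sum_mul, Zp _ (zz_skew K q) (zz_diag K q), zero_mul]; rfl
    · intro h
      obtain ⟨c, hc⟩ := exK K q x (fun l => by rw [← e2, h]; rfl)
      refine ⟨Finsupp.single () c, ?_⟩
      ext1 l
      rw [e3, hc]; simp
  · show _ = ({2*(q:ℤ)+3} : Set ℤ)
    exact Set.range_const
  refine Res_zero D n _ _ _ ?_
  rintro ⟨x, hx⟩
  rw [LinearMap.mem_ker] at hx
  have h0 := e3 x 0
  rw [hx] at h0
  have : x () = 0 := (mul_eq_zero.1 h0.symm).resolve_left (pp_ne K q 0)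
  apply Subtype.ext
  ext
  rw [this]; rfl
end res
end PfP

namespace PfP
section fin
open MvPolynomial
variable (K : Type) [Field K] (q : ℕ)

def TJm (m : ℕ) : ℕ → Set ℤ := fun k =>
  {x | k ≤ 3 ∧ 1 ≤ m ∧ x ≤ ((q:ℤ)+2) * k + ((q:ℤ)+2) * ((m:ℤ) - 1)}

lemma HI_Jpow (j : ℕ) : HI (Hh (PairVar (2*q+6)) K) (JJ K q ^ j) := by
  obtain ⟨ι, _, M, h1, h2, -⟩ := QJ K q j
  rw [← h2]
  refine HI_span _ ?_
  rintro _ ⟨x, rfl⟩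
  exact ⟨_, mem_Hh_nat (h1 x)⟩

lemma RS_Jm (m : ℕ) : ∃ T, RSB K q (JJ K q ^ m) T ∧ ∀ k, T k ⊆ TJm q m k := by
  induction m with
  | zero =>
    refine ⟨fun _ => ∅, ?_, fun k => Set.empty_subset _⟩
    rw [pow_zero, Ideal.one_eq_top]
    exact RS_top
  | succ m ih =>
    obtain ⟨T', hT', hT2'⟩ := ih
    obtain ⟨ι, _, M, h1, h2, h3⟩ := QJ K q m
    obtain ⟨S, hS, hS2⟩ := RS_J K q
    have hle : JJ K q ^ (m+1) ⊔ Ideal.span (Set.range M) = JJ K q ^ m := by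
      rw [h2]; exact sup_eq_right.2 (Ideal.pow_le_pow_right (Nat.le_succ m))
    obtain ⟨T, hT, hT2⟩ := chain_down GRH (JJ K q ^ (m+1)) (JJ K q) M _
      (fun x => mem_Hh_nat (h1 x)) (HI_Jpow K q _) h3 (by
        intro x f hf
        rw [pow_succ]
        refine Ideal.mul_mem_mul ?_ hf
        rw [← h2]; exact Ideal.subset_span ⟨x, rfl⟩) S T' hS (by rw [hle]; exact hT')
    refine ⟨T, hT, fun k x hx => ?_⟩
    have hq : (0:ℤ) ≤ (q:ℤ) + 2 := by positivity
    rcases hT2 k hx with ⟨y, hy, rfl⟩ | hx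
    · obtain ⟨a, b⟩ := hS2 k hy
      refine ⟨a, by omega, ?_⟩
      show y + _ ≤ _
      rw [b]; push_cast; linarith
    · obtain ⟨a, b, c⟩ := hT2' k hx
      refine ⟨a, by omega, c.trans ?_⟩
      push_cast
      nlinarith

noncomputable def EE (m : ℕ) : ℕ → Ideal (BB K q)
  | 0 => JJ K q ^ m
  | k+1 => EE m k ⊔ Ideal.span {ww K q ^ (k+1)} * JJ K q ^ (m - (k+1))

lemma EE_mono (m k : ℕ) : EE K q m k ≤ EE K q m (k+1) := le_sup_left

lemma EE_mono' (m : ℕ) {k k' : ℕ} (h : k ≤ k') : EE K q m k ≤ EE K q m k' :=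
  monotone_nat_of_le_succ (EE_mono K q m) h

lemma EE_le (m k : ℕ) : EE K q m k ≤ JJ K q ^ (m - k) := by
  induction k with
  | zero => exact le_rfl
  | succ k ih =>
    refine sup_le (ih.trans (Ideal.pow_le_pow_right (by omega))) Ideal.mul_le_right

lemma mem_EE (m k : ℕ) {x : BB K q} (hx : x ∈ JJ K q ^ (m - k)) : ww K q ^ k * x ∈ EE K q m k := by
  rcases k with _ | k
  · rw [pow_zero, one_mul]; exact hx
  · exact Ideal.mem_sup_right (Ideal.mul_mem_mul (Ideal.mem_span_singleton_self _) hx)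

lemma EE_top (m : ℕ) : EE K q m m = (JJ K q ⊔ Ideal.span {ww K q}) ^ m := by
  apply le_antisymm
  · have : ∀ k ≤ m, EE K q m k ≤ (JJ K q ⊔ Ideal.span {ww K q}) ^ m := by
      intro k
      induction k with
      | zero => intro _; exact Ideal.pow_right_mono le_sup_left m
      | succ k ih =>
        intro hk
        refine sup_le (ih (by omega)) ?_
        rw [Ideal.mul_le]
        intro r hr s hs
        obtain ⟨b, rfl⟩ := Ideal.mem_span_singleton'.1 hr
        rw [mul_assoc]
        exact Ideal.mul_mem_left _ _ (pow_contract _ _ hk hs)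
    exact this m le_rfl
  · intro y hy
    obtain ⟨x, hx, rfl⟩ := pow_expand _ _ _ y hy
    refine Ideal.sum_mem _ fun i hi => ?_
    have hi : i ≤ m := by rw [Finset.mem_range] at hi; omega
    exact EE_mono' K q m hi (mem_EE K q m i (hx i hi))

lemma Wcan_pow (k : ℕ) (g : BB K q) (h : ww K q ^ k * g ∈ PP K q) : g ∈ PP K q := by
  induction k with
  | zero => simpa using h
  | succ k ih =>
    refine ih (Wcan K q _ ?_)
    rwa [← mul_assoc, ← pow_succ']

lemma EE_step (m k : ℕ) (hk : k + 1 ≤ m) (S' : ℕ → Set ℤ) (hE : HI (Hh (PairVar (2*q+6)) K) (EE K q m k))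
    (hS' : RSB K q (EE K q m k) S') : HI (Hh (PairVar (2*q+6)) K) (EE K q m (k+1)) ∧
    ∃ T, RSB K q (EE K q m (k+1)) T ∧ T 0 ⊆ S' 0 ∧
      (∀ i, T (i+1) ⊆ S' (i+1) ∪ sh (((q:ℤ)+2)*m+k+1) (TP q) i) ∧
      ∀ i, sh (((q:ℤ)+2)*m+k+1) (TP q) i ⊆ T (i+1) := by
  obtain ⟨ι, _, M, h1, h2, h3⟩ := QJ K q (m-(k+1))
  have hsp : EE K q m (k+1) = EE K q m k ⊔ Ideal.span (Set.range fun x => ww K q ^ (k+1) * M x) := by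
    show _ ⊔ _ = _
    rw [← h2, Ideal.span_mul_span']
    congr 2
    ext y
    simp
  have hdeg : ∀ x, ww K q ^ (k+1) * M x ∈ Hh (PairVar (2*q+6)) K (((q:ℤ)+2)*m+k+1) := by
    intro x
    refine mem_H_of K q (((ww_homog K q).pow (k+1)).mul (h1 x)) ?_
    push_cast [Nat.cast_sub hk]
    ring
  have hJ : m - (k+1) + 1 = m - k := by omega
  rw [hJ] at h3
  have hne : Nonempty ι := by
    by_contra hne
    rw [not_nonempty_iff] at hne
    rw [Set.range_eq_empty, Ideal.span_empty] at h2
    have : aa K q 0 ^ (m-(k+1)) ∈ JJ K q ^ (m-(k+1)) :=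
      Ideal.pow_mem_pow (Ideal.subset_span (Set.mem_range_self 0)) _
    rw [← h2, Ideal.mem_bot] at this
    exact aa_ne K q 0 (eq_zero_of_pow_eq_zero this)
  refine ⟨?_, ?_⟩
  · rw [hsp]
    refine HI_sup hE (HI_span _ ?_)
    rintro _ ⟨x, rfl⟩; exact ⟨_, hdeg x⟩
  rw [hsp]
  obtain ⟨T, a, b, c, d⟩ := chain_up GRH (EE K q m k) (PP K q) (fun x => ww K q ^ (k+1) * M x) _ hdeg hE
    (by
      intro c hc x
      refine Wcan_pow K q (k+1) _ (JJ_le K q (h3 (fun x => ww K q ^ (k+1) * c x) ?_ x))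
      have := EE_le K q m k hc
      convert this using 1
      refine Finset.sum_congr rfl fun x _ => ?_
      ring)
    (by
      intro x f hf
      have : ww K q ^ (k+1) * M x * f = ww K q ^ k * (M x * (ww K q * f)) := by ring
      rw [this]
      refine mem_EE K q m k ?_
      rw [← hJ, pow_succ]
      refine Ideal.mul_mem_mul ?_ (wP_le K q f hf)
      rw [← h2]; exact Ideal.subset_span ⟨x, rfl⟩) _ _ (RS_P K q) hS'
  exact ⟨T, a, b, c, d hne⟩

def Bd (m k : ℕ) : ℕ → Set ℤ := fun i => TJm q m i ∪
  {x | ∃ i', i = i' + 1 ∧ ∃ k', 1 ≤ k' ∧ k' ≤ k ∧ x ∈ sh (((q:ℤ)+2)*m+k') (TP q) i'}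

lemma RS_EE (m k : ℕ) (hk : k ≤ m) : HI (Hh (PairVar (2*q+6)) K) (EE K q m k) ∧
    ∃ T, RSB K q (EE K q m k) T ∧ (∀ i, T i ⊆ Bd q m k i) ∧
      (1 ≤ k → ∀ i, sh (((q:ℤ)+2)*m+k) (TP q) i ⊆ T (i+1)) := by
  induction k with
  | zero =>
    obtain ⟨T, hT, hT2⟩ := RS_Jm K q m
    exact ⟨HI_Jpow K q m, T, hT, fun i x hx => Or.inl (hT2 i hx), by omega⟩
  | succ k ih =>
    obtain ⟨hE, S', hS', hS2, -⟩ := ih (by omega)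
    obtain ⟨hE', T, a, b, c, d⟩ := EE_step K q m k hk S' hE hS'
    have hmono : ∀ i, Bd q m k i ⊆ Bd q m (k+1) i := by
      rintro i x (hx | ⟨i', h1, k', h2, h3, h4⟩)
      · exact Or.inl hx
      · exact Or.inr ⟨i', h1, k', h2, by omega, h4⟩
    refine ⟨hE', T, a, ?_, ?_⟩
    · rintro (_ | i) x hx
      · exact hmono 0 (hS2 0 (b hx))
      · rcases c i hx with hx | hx
        · exact hmono _ (hS2 _ hx)
        · refine Or.inr ⟨i, rfl, k+1, by omega, le_rfl, ?_⟩
          push_cast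
          rwa [← add_assoc]
    · intro _ i
      push_cast
      rw [← add_assoc]; exact d i

lemma kap_m {V : Type} {ι : Type} (x : ι →₀ MvPolynomial V K)
    (hx : x ∈ (irrel (homogeneousSubmodule V K)) • (⊤ : Submodule (MvPolynomial V K) (ι →₀ MvPolynomial V K)))
    (k : ι) : constantCoeff (x k) = 0 := by
  have hle : irrel (homogeneousSubmodule V K) ≤ RingHom.ker (constantCoeff (σ := V) (R := K)) := by
    unfold irrel
    rw [Ideal.span_le]
    intro a ha
    obtain ⟨n, hn⟩ := Set.mem_iUnion.1 ha
    have hn : a.IsHomogeneous (n+1) := hn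
    show constantCoeff a = 0
    rw [constantCoeff_eq]
    exact hn.coeff_eq_zero (by simp)
  refine Submodule.smul_induction_on (p := fun x => constantCoeff (x k) = 0) hx ?_ ?_
  · intro r hr n _
    have : constantCoeff r = 0 := hle hr
    rw [Finsupp.smul_apply, smul_eq_mul, map_mul, this, zero_mul]
  · intro x y hx hy
    rw [Finsupp.add_apply, map_add, hx, hy, add_zero]

section R
variable {K} {V : Type} {E : Ideal (MvPolynomial V K)}
  (R : MinGradedFreeRes K (MvPolynomial V K) (zg (homogeneousSubmodule V K))
    (irrel (homogeneousSubmodule V K)) (MvPolynomial V K ⧸ E)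
    (quotPieces (homogeneousSubmodule V K) E))

lemma R_ker (D : ℤ) (n : ℕ) : ∀ i, Res (Hh V K) (constantCoeff (σ := V) (R := K)) D n (fun _ => True)
    (fun k => Set.range (R.σ (i+2+k))) (LinearMap.ker (R.d i))
    (kp (LinearMap.ker (R.d i)) (Fr (Hh V K) (R.σ (i+1)))) := by
  induction n with
  | zero => intro i; trivial
  | succ n ih =>
    intro i
    refine Res_cons GRH D n _ (τ := R.σ (i+2)) (R.d (i+1)) ?_ ?_ _ ?_ _ rfl ?_
    · intro j f hf; exact R.graded_d (i+1) j f hf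
    · exact ((LinearMap.exact_iff).1 (R.exact_d i)).symm
    · intro _ x hx k
      obtain ⟨y, rfl⟩ := (R.exact_d (i+1) x).1 hx
      exact kap_m K _ (R.minimal _ y) k
    · have := ih (i+1)
      have e : (fun k => Set.range (R.σ (i+2+(k+1)))) = fun k => Set.range (R.σ (i+1+2+k)) := by
        funext k
        have : i+2+(k+1) = i+1+2+k := by omega
        rw [this]
      rw [e]; exact this

lemma R_res (hE : HI (Hh V K) E) (D : ℤ) (n : ℕ) :
    Res (Hh V K) (constantCoeff (σ := V) (R := K)) D n (fun _ => True)
    (fun k => Set.range (R.σ k)) (MvPolynomial V K ⧸ E) (QP (Hh V K) E) := by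
  rcases n with _ | n
  · trivial
  have hg : ∀ j, ∀ f ∈ Fr (Hh V K) (R.σ 0) j, R.ε f ∈ QP (Hh V K) E j := by
    intro j f hf
    exact R.graded_ε j f hf
  refine ⟨R.ι 0, R.σ 0, R.ε, hg, ?_, rfl, ?_, ?_⟩
  · intro j x hx
    obtain ⟨f, hf⟩ := R.surj x
    exact strict GRH (HasProj_QP GRH hE) R.ε hg j x hx f hf
  · intro _ x _ hx k
    obtain ⟨y, rfl⟩ := (R.exact_ε x).1 hx
    exact kap_m K _ (R.minimal _ y) k
  · rcases n with _ | n
    · trivial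
    refine Res_cons GRH D n _ (τ := R.σ 1) (R.d 0) ?_ ?_ _ ?_ _ rfl ?_
    · intro j f hf; exact R.graded_d 0 j f hf
    · exact ((LinearMap.exact_iff).1 R.exact_ε).symm
    · intro _ x hx k
      obtain ⟨y, rfl⟩ := (R.exact_d 0 x).1 hx
      exact kap_m K _ (R.minimal _ y) k
    · have := R_ker R D n 0
      have e : (fun k => Set.range (R.σ (k+1+1))) = fun k => Set.range (R.σ (0+2+k)) := by
        funext k
        have : 0+2+k = k+1+1 := by omega
        rw [this]
      rw [e]; exact this
end R

lemma TP_bd (i : ℕ) (x : ℤ) (hx : x ∈ TP q i) : x - i ≤ 2 * (q:ℤ) ∧ i ≤ 3 := by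
  match i, hx with
  | 0, hx => have : x = 0 := hx; subst this; constructor <;> simp
  | 1, hx => have : x = (q:ℤ)+1 := hx; subst this; constructor <;> push_cast <;> omega
  | 2, hx => have : x = (q:ℤ)+2 := hx; subst this; constructor <;> push_cast <;> omega
  | 3, hx => have : x = 2*(q:ℤ)+3 := hx; subst this; constructor <;> push_cast <;> omega
  | _+4, hx => exact absurd hx (Set.notMem_empty _)

lemma Bd_le (m : ℕ) (hm : 2 ≤ m) (i : ℕ) (x : ℤ) (hx : x ∈ Bd q m m i) :
    i ≤ 4 ∧ x - i ≤ ((q:ℤ)+3) * ((m:ℤ)+2) - 7 := by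
  have hm' : (2:ℤ) ≤ m := by exact_mod_cast hm
  rcases hx with ⟨h1, -, h3⟩ | ⟨i', rfl, k', h1, h2, y, hy, rfl⟩
  · refine ⟨by omega, ?_⟩
    have : (i:ℤ) ≤ 3 := by exact_mod_cast h1
    nlinarith [mul_nonneg (Nat.cast_nonneg (α := ℤ) q) (sub_nonneg.2 this)]
  · obtain ⟨a, b⟩ := TP_bd q i' y hy
    refine ⟨by omega, ?_⟩
    have : (k':ℤ) ≤ m := by exact_mod_cast h2
    push_cast
    nlinarith

lemma Bd_D (m : ℕ) (hm : 2 ≤ m) : ((q:ℤ)+2)*m+m+2*q+3 ∉ Bd q m m 3 := by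
  intro h
  have h2 := (Bd_le q m hm 3 _ h).2
  push_cast at h2
  nlinarith

theorem main (I : Ideal (BB K q)) (hI : I = JJ K q ⊔ Ideal.span {ww K q}) (m : ℕ) (hm : 2 ≤ m)
    (R : MinGradedFreeRes K (BB K q) (zg (homogeneousSubmodule (PairVar (2 * q + 6)) K))
        (irrel (homogeneousSubmodule (PairVar (2 * q + 6)) K)) (BB K q ⧸ (I ^ m))
        (quotPieces (homogeneousSubmodule (PairVar (2 * q + 6)) K) (I ^ m))) :
    R.reg = ((q : ℤ) + 3) * ((m : ℤ) + 2) - 7 := by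
  obtain ⟨hE, T, hT, hT2, hT3⟩ := RS_EE K q m m le_rfl
  rw [EE_top, ← hI] at hE hT
  have hup : ∀ i (k : R.ι i), R.σ i k ∈ Bd q m m i := by
    intro i k
    refine hT2 i (cmp_self GRH (R.σ i k) i _ _ _ T _ _ (R_res R hE _ (i+1)) (hT _ (i+1))
      (fun _ _ => trivial) trivial ⟨k, rfl⟩)
  have hlow : ∃ k : R.ι 4, R.σ 4 k = ((q:ℤ)+2)*m+m+2*q+3 := by
    set D : ℤ := ((q:ℤ)+2)*m+m+2*q+3 with hD
    have h6 := Res_trunc D 5 6 (by omega) _ _ _ _ (Res_flags GRH D 6 T _ _ (hT D 6))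
    have h3 : D ∉ T 3 := fun h => Bd_D q m hm (hT2 3 h)
    have h5 : D ∉ T 5 := fun h => by
      have := (Bd_le q m hm 5 _ (hT2 5 h)).1
      omega
    have h4 : D ∈ T 4 := hT3 (by omega) 3 ⟨2*(q:ℤ)+3, rfl, by rw [hD]; ring⟩
    exact cmp_self GRH D 4 _ _ T (fun k => Set.range (R.σ k)) _ _ h6 (R_res R hE D 5)
      (by intro i' hi'
          obtain rfl : i' = 3 := by omega
          exact ⟨by omega, Or.inl h3⟩) ⟨by omega, Or.inr h5⟩ h4
  have : IsGreatest {x : ℤ | ∃ (i : ℕ) (k : R.ι i), x = R.σ i k - (i : ℤ)}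
      (((q : ℤ) + 3) * ((m : ℤ) + 2) - 7) := by
    constructor
    · obtain ⟨k, hk⟩ := hlow
      refine ⟨4, k, ?_⟩
      rw [hk]; push_cast; ring
    · rintro _ ⟨i, k, rfl⟩
      exact (Bd_le q m hm i _ (hup i k)).2
  exact this.csSup_eq
end fin
end PfP

/-- For even `t = 2q + 6 ≥ 6` (so `r = t/2 = q + 3`), let `I` be the grade-3 almost
complete intersection Pfaffian ideal `⟨Pf, Pf_{12̄}, Pf_{13̄}, Pf_{23̄}⟩` in `B = K[X]`.
Then for every `m ≥ 2`, `reg (B/I^m) = r (m + 2) - 7`. -/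
theorem reg_powers_pfaffian_even (K : Type) [Field K] (q : ℕ)
    (I : Ideal (MvPolynomial (PairVar (2 * q + 6)) K))
    (hI : I = Ideal.span
      { pfaffian (2 * q + 6) (Xmat K (2 * q + 6)),
        pfaffian (2 * q + 4) ((Xmat K (2 * q + 6)).submatrix (emb2 0 1) (emb2 0 1)),
        pfaffian (2 * q + 4) ((Xmat K (2 * q + 6)).submatrix (emb2 0 2) (emb2 0 2)),
        pfaffian (2 * q + 4) ((Xmat K (2 * q + 6)).submatrix (emb2 1 2) (emb2 1 2)) }) :
    ∀ m : ℕ, 2 ≤ m →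
    ∀ R : MinGradedFreeRes K (MvPolynomial (PairVar (2 * q + 6)) K)
        (zg (MvPolynomial.homogeneousSubmodule (PairVar (2 * q + 6)) K))
        (irrel (MvPolynomial.homogeneousSubmodule (PairVar (2 * q + 6)) K))
        (MvPolynomial (PairVar (2 * q + 6)) K ⧸ (I ^ m))
        (quotPieces (MvPolynomial.homogeneousSubmodule (PairVar (2 * q + 6)) K) (I ^ m)),
      R.reg = ((q : ℤ) + 3) * ((m : ℤ) + 2) - 7 := by
  intro m hm R
  exact PfP.main K q I (hI.trans (PfP.I_eq K q)) m hm R
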